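/- Fractional chain rule in Lorentz spaces: let n ≥ 1, 0 ≤ s ≤ 1, and let F ∈ C¹(ℂ, ℂ) (as a map ℝ² → ℝ²) with F(0) = 0 whose derivative satisfies |F′(θz + (1−θ)w)| ≤ C₀ (|F′(z)| + |F′(w)|) for all θ ∈ [0,1] and z, w ∈ ℂ. Let 1 < p, p₁, p₂ < ∞ and 1 ≤ q, q₁, q₂ < ∞ with 1/p = 1/p₁ + 1/p₂ and 1/q = 1/q₁ + 1/q₂. Then there is a constant C such that for all Schwartz functions f on ℝⁿ, ‖(−Δ)^{s/2} F(f)‖_{L^{p,q}} ≤ C ‖F′(f)‖_{L^{p₁,q₁}} ‖(−Δ)^{s/2} f‖_{L^{p₂,q₂}}. -/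

import Mathlib

/-!
The proof is by Littlewood–Paley theory. Write `g = F ∘ f`, `D = (-Δ)^{s/2} f` and `h = C₀
|F'(f)|`. The hypothesis on `F'` gives the difference bound `|g z - g x| ≤ (h z + h x) |f z - f
x|` (`F_diff`), and apart from it only `F 0 = 0` and the continuity
of `F` and `F'` are used.

For `0 < s < 1` (`chain_mid`), `f` is reconstructed from the Littlewood–Paley pieces of `D`
(`tendsto_recon`), and the oscillation of a piece localised at frequency `2^j` between `x` and `z`
is at most `min 1 (2^j |x - z|)` times averages of that piece (`osc_le`, `diff_le`). A frequency
piece of `g` has a kernel of mean zero, so the difference bound yields a pointwise estimate of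
`2^{ks} |P_k g|` (`piece_le`) by the maximal function of `h` and by averages of `∑ j, cf s (k - j)
* G j`, where `G j` is an average of `|P_j D|`. The sequence `cf s` is summable exactly because `0
< s < 1` (`tsum_cf`), so Young's inequality `ℓ¹ * ℓ² ⊆ ℓ²` leaves the square function of `D`.

The square function bounds (`lp_square`, `phi_square`, `lp_synth`) are instances of a
vector-valued Calderón–Zygmund theorem for smooth truncated kernels (`cz_lor`): the
Calderón–Zygmund decomposition `cz_decomp` gives the weak (1,1) bound `weak11`, duality gives weak
`(b,b)` bounds for large `b` (`weak_bb`), and `cz_family` verifies the hypotheses for dyadic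
families. Real interpolation takes the form of pointwise bounds for decreasing rearrangements
(`interp`, `lor_le_of_rea_le_tsum`); it also gives the maximal theorem `maxf_lor`. Hölder's
inequality is `lor_mul_le`.

At `s = 1` (`chain_one`) the Riesz transforms compare `(-Δ)^{1/2}` with the gradient, for which
the chain rule is pointwise. At `s = 0` (`chain_zero`) the functions decay at infinity, so `|g| ≤
(h + a) |f|`, where `a`, the limit of `h` at infinity, is at most `h*` everywhere.

The operator `fracLap` is a Bochner integral: if `|ξ|^s 𝓕 g ξ` is not integrable, it is `0`
(`flap_eq_zero`) and there is nothing to prove. The estimates are carried out for an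
extended-nonnegative-real-valued rearrangement `rea` and quasinorm `lor`; the real-valued
`lorentz` is at most `lor`, with equality for bounded functions (`lorentz_le_lor`,
`lor_le_lorentz`).
-/

open MeasureTheory Real FourierTransform
open scoped ENNReal

noncomputable section

variable {n : ℕ}

/-- The distribution function `|{x : |f x| > λ}|`. -/
def distFn (f : EuclideanSpace ℝ (Fin n) → ℂ) (l : ℝ) : ℝ≥0∞ :=
  volume {x | l < ‖f x‖}

/-- The decreasing rearrangement `f*`. -/
def rearr (f : EuclideanSpace ℝ (Fin n) → ℂ) (t : ℝ) : ℝ :=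
  sInf {l : ℝ | 0 < l ∧ distFn f l ≤ ENNReal.ofReal t}

/-- The Lorentz quasinorm `‖f‖_{L^{p,q}}`; the second exponent may be `∞`. -/
def lorentz (p : ℝ) (q : ℝ≥0∞) (f : EuclideanSpace ℝ (Fin n) → ℂ) : ℝ≥0∞ :=
  if q = ∞ then ⨆ t ∈ Set.Ioi (0:ℝ), ENNReal.ofReal (t ^ (1/p) * rearr f t)
  else (∫⁻ t in Set.Ioi (0:ℝ),
      ENNReal.ofReal (t ^ (1/p) * rearr f t) ^ q.toReal / ENNReal.ofReal t) ^ (1/q.toReal)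

/-- The fractional Laplacian `(-Δ)^{s/2}`, the Fourier multiplier with symbol `|ξ|^s`. -/
def fracLap (s : ℝ) (f : EuclideanSpace ℝ (Fin n) → ℂ) : EuclideanSpace ℝ (Fin n) → ℂ :=
  𝓕⁻ (fun ξ => ((‖ξ‖ ^ s : ℝ) : ℂ) * 𝓕 f ξ)

/-- The Bessel operator `(1-Δ)^{s/2}`, the Fourier multiplier with symbol `(1+|ξ|²)^{s/2}`. -/
def besselOp (s : ℝ) (f : EuclideanSpace ℝ (Fin n) → ℂ) : EuclideanSpace ℝ (Fin n) → ℂ :=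
  𝓕⁻ (fun ξ => (((1 + ‖ξ‖ ^ 2) ^ (s/2) : ℝ) : ℂ) * 𝓕 f ξ)

/-- The free Schrödinger propagator `e^{itΔ}`, Fourier multiplier with symbol `e^{-it|ξ|²}`. -/
def schrod (t : ℝ) (f : EuclideanSpace ℝ (Fin n) → ℂ) : EuclideanSpace ℝ (Fin n) → ℂ :=
  𝓕⁻ (fun ξ => Complex.exp (-Complex.I * t * (‖ξ‖ ^ 2 : ℝ)) * 𝓕 f ξ)

/-- The Riesz kernel `K_α`. -/
def rieszKernel (α : ℝ) (x : EuclideanSpace ℝ (Fin n)) : ℝ :=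
  Real.Gamma ((n - α) / 2) /
    (Real.Gamma (α / 2) * Real.pi ^ ((n : ℝ) / 2) * 2 ^ α * ‖x‖ ^ ((n : ℝ) - α))

/-- The Riesz potential `I_α f = K_α ∗ f`. -/
def rieszPot (α : ℝ) (f : EuclideanSpace ℝ (Fin n) → ℂ) (x : EuclideanSpace ℝ (Fin n)) : ℂ :=
  ∫ y, (rieszKernel α (x - y) : ℂ) * f y

/-- The nonlinearity `F(u) = λ (I_α ∗ |·|^{-b}|u|^p) |x|^{-b} |u|^{p-2} u`. -/
def Fnl (lam α b p : ℝ) (u : EuclideanSpace ℝ (Fin n) → ℂ)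
    (x : EuclideanSpace ℝ (Fin n)) : ℂ :=
  lam * rieszPot α (fun y => ((‖y‖ ^ (-b) * ‖u y‖ ^ p : ℝ) : ℂ)) x *
    ((‖x‖ ^ (-b) : ℝ) : ℂ) * ((‖u x‖ ^ (p - 2) : ℝ) : ℂ) * u x

/-- Mixed-norm in time: `‖g‖_{L^q_t(I)}` for an `ℝ≥0∞`-valued `g`. -/
def timeLp (q : ℝ≥0∞) (I : Set ℝ) (g : ℝ → ℝ≥0∞) : ℝ≥0∞ :=
  if q = ∞ then essSup g (volume.restrict I)
  else (∫⁻ t in I, g t ^ q.toReal) ^ (1/q.toReal)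

/-- The `H^s = W^s_{2,2}` norm. -/
def hsNorm (s : ℝ) (f : EuclideanSpace ℝ (Fin n) → ℂ) : ℝ≥0∞ :=
  lorentz 2 2 (besselOp s f)

end

namespace LCR

open Filter Topology

/-! ### Decreasing rearrangements and Lorentz norms of extended nonnegative functions -/

section Rearrangement

variable {α : Type*} [MeasurableSpace α] {μ : Measure α}

/-- The decreasing rearrangement of an `ℝ≥0∞`-valued function; taking the infimum in `ℝ≥0∞` makes
it meaningful even if all superlevel sets are large. -/
noncomputable def rea (μ : Measure α) (f : α → ℝ≥0∞) (t : ℝ≥0∞) : ℝ≥0∞ :=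
  sInf {l | μ {x | l < f x} ≤ t}

lemma measure_rea_lt (f : α → ℝ≥0∞) (t : ℝ≥0∞) : μ {x | rea μ f t < f x} ≤ t := by
  have hne : {l | μ {x | l < f x} ≤ t}.Nonempty := ⟨∞, by simp⟩
  obtain ⟨u, hu, hlim, hmem⟩ := exists_seq_tendsto_sInf hne ⟨0, fun _ _ => bot_le⟩
  have hset : {x | rea μ f t < f x} = ⋃ k, {x | u k < f x} := by
    ext x
    simp only [Set.mem_ofPred_eq, Set.mem_iUnion]
    constructor
    · intro hx
      exact (hlim.eventually (gt_mem_nhds hx)).exists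
    · rintro ⟨k, hk⟩
      exact lt_of_le_of_lt (sInf_le (hmem k)) hk
  rw [hset]
  have hmono : Monotone fun k => {x | u k < f x} := fun i j hij x hx =>
    lt_of_le_of_lt (hu hij) hx
  rw [hmono.measure_iUnion]
  exact iSup_le hmem

lemma rea_le_iff {f : α → ℝ≥0∞} {t l : ℝ≥0∞} : rea μ f t ≤ l ↔ μ {x | l < f x} ≤ t := by
  constructor
  · intro h
    exact (measure_mono fun x hx => lt_of_le_of_lt h hx).trans (measure_rea_lt f t)
  · intro h
    exact sInf_le h

lemma rea_mono_ae {f g : α → ℝ≥0∞} (h : ∀ᵐ x ∂μ, f x ≤ g x) (t : ℝ≥0∞) :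
    rea μ f t ≤ rea μ g t := by
  rw [rea_le_iff]
  refine le_trans (measure_mono_ae ?_) (measure_rea_lt g t)
  filter_upwards [h] with x hx h1
  exact lt_of_lt_of_le h1 hx

lemma rea_antitone (f : α → ℝ≥0∞) : Antitone (rea μ f) := fun _ _ hst =>
  rea_le_iff.2 ((measure_rea_lt f _).trans hst)

lemma rea_add_le (f g : α → ℝ≥0∞) (s t : ℝ≥0∞) :
    rea μ (fun x => f x + g x) (s + t) ≤ rea μ f s + rea μ g t := by
  rw [rea_le_iff]
  refine le_trans (measure_mono (t := {x | rea μ f s < f x} ∪ {x | rea μ g t < g x}) ?_)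
    ((measure_union_le _ _).trans (add_le_add (measure_rea_lt f s) (measure_rea_lt g t)))
  intro x hx
  by_contra hcon
  simp only [Set.mem_union, Set.mem_ofPred_eq, not_or, not_lt] at hcon hx
  exact absurd hx (not_lt.2 (add_le_add hcon.1 hcon.2))

lemma rea_mul_le (f g : α → ℝ≥0∞) (s t : ℝ≥0∞) :
    rea μ (fun x => f x * g x) (s + t) ≤ rea μ f s * rea μ g t := by
  rw [rea_le_iff]
  refine le_trans (measure_mono (t := {x | rea μ f s < f x} ∪ {x | rea μ g t < g x}) ?_)
    ((measure_union_le _ _).trans (add_le_add (measure_rea_lt f s) (measure_rea_lt g t)))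
  intro x hx
  by_contra hcon
  simp only [Set.mem_union, Set.mem_ofPred_eq, not_or, not_lt] at hcon hx
  exact absurd hx (not_lt.2 (mul_le_mul' hcon.1 hcon.2))

lemma rea_const_mul_le (c : ℝ≥0∞) (f : α → ℝ≥0∞) (t : ℝ≥0∞) :
    rea μ (fun x => c * f x) t ≤ c * rea μ f t := by
  rw [rea_le_iff]
  refine le_trans (measure_mono fun x hx => ?_) (measure_rea_lt f t)
  by_contra hcon
  simp only [Set.mem_ofPred_eq, not_lt] at hcon hx
  exact absurd hx (not_lt.2 (mul_le_mul' le_rfl hcon))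

/-- Fatou's lemma for rearrangements: a pointwise lower limit has rearrangement at most the
lower limit of the rearrangements. -/
lemma rea_liminf_le (f : α → ℝ≥0∞) (u : ℕ → α → ℝ≥0∞)
    (h : ∀ x, f x ≤ liminf (fun k => u k x) atTop) (t : ℝ≥0∞) :
    rea μ f t ≤ liminf (fun k => rea μ (u k) t) atTop := by
  refine le_of_forall_gt fun l hl => ?_
  obtain ⟨l', hl', hl'l⟩ := exists_between hl
  refine lt_of_le_of_lt ?_ hl'l
  have hfr : ∃ᶠ k in atTop, rea μ (u k) t < l' := frequently_lt_of_liminf_lt (by isBoundedDefault) hl'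
  rw [rea_le_iff]
  have hsub : {x | l' < f x} ⊆ ⋃ N : ℕ, ⋂ k ≥ N, {x | l' < u k x} := by
    intro x hx
    have : l' < liminf (fun k => u k x) atTop := lt_of_lt_of_le hx (h x)
    have h2 := eventually_lt_of_lt_liminf this
    obtain ⟨N, hN⟩ := eventually_atTop.1 h2
    exact Set.mem_iUnion.2 ⟨N, Set.mem_iInter₂.2 hN⟩
  refine (measure_mono hsub).trans ?_
  have hmono : Monotone fun N : ℕ => ⋂ k ≥ N, {x | l' < u k x} := by
    intro a b hab x hx
    simp only [Set.mem_iInter] at hx ⊢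
    exact fun k hk => hx k (hab.trans hk)
  rw [hmono.measure_iUnion]
  refine iSup_le fun N => ?_
  obtain ⟨k, hk, hlt⟩ := frequently_atTop.1 hfr N
  refine (measure_mono ?_).trans (rea_le_iff.1 hlt.le)
  exact Set.iInter₂_subset k hk

/-- The Lorentz quasinorm of an `ℝ≥0∞`-valued function, written as the `L^q` norm of
`t ^ (1/p - 1/q) f*(t)` over the half line. -/
noncomputable def lor (μ : Measure α) (p q : ℝ) (f : α → ℝ≥0∞) : ℝ≥0∞ :=
  (∫⁻ t in Set.Ioi (0 : ℝ),
    (ENNReal.ofReal (t ^ (1 / p - 1 / q)) * rea μ f (ENNReal.ofReal t)) ^ q) ^ (1 / q)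

lemma measurable_rea (f : α → ℝ≥0∞) : Measurable fun t : ℝ => rea μ f (ENNReal.ofReal t) :=
  (rea_antitone f).measurable.comp ENNReal.measurable_ofReal

lemma measurable_lorw (r : ℝ) (f : α → ℝ≥0∞) :
    Measurable fun t : ℝ => ENNReal.ofReal (t ^ r) * rea μ f (ENNReal.ofReal t) :=
  (by fun_prop : Measurable fun t : ℝ => ENNReal.ofReal (t ^ r)).mul (measurable_rea f)

lemma lor_le_of_rea_le {p q : ℝ} (hq : 0 < q) {β : Type*} [MeasurableSpace β] {ν : Measure β}
    {f : α → ℝ≥0∞} {g : β → ℝ≥0∞}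
    (h : ∀ t : ℝ, 0 < t → rea μ f (ENNReal.ofReal t) ≤ rea ν g (ENNReal.ofReal t)) :
    lor μ p q f ≤ lor ν p q g := by
  unfold lor
  refine ENNReal.rpow_le_rpow (setLIntegral_mono' measurableSet_Ioi fun t ht => ?_) (by positivity)
  exact ENNReal.rpow_le_rpow (mul_le_mul' le_rfl (h t ht)) hq.le

lemma lor_mono_ae {p q : ℝ} (hq : 0 < q) {f g : α → ℝ≥0∞} (h : ∀ᵐ x ∂μ, f x ≤ g x) :
    lor μ p q f ≤ lor μ p q g :=
  lor_le_of_rea_le hq fun _ _ => rea_mono_ae h _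

lemma lor_mono {p q : ℝ} (hq : 0 < q) {f g : α → ℝ≥0∞} (h : ∀ x, f x ≤ g x) :
    lor μ p q f ≤ lor μ p q g := lor_mono_ae hq (ae_of_all _ h)

/-- The Fatou property of the Lorentz quasinorm. -/
lemma lor_fatou {p q : ℝ} (hq : 0 < q) {f : α → ℝ≥0∞} {u : ℕ → α → ℝ≥0∞} {B : ℝ≥0∞}
    (h : ∀ x, f x ≤ liminf (fun k => u k x) atTop) (hB : ∀ k, lor μ p q (u k) ≤ B) :
    lor μ p q f ≤ B := by
  have hB' : ∀ k, (∫⁻ t in Set.Ioi (0 : ℝ),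
    (ENNReal.ofReal (t ^ (1 / p - 1 / q)) * rea μ (u k) (ENNReal.ofReal t)) ^ q) ≤ B ^ q := by
    intro k
    have := ENNReal.rpow_le_rpow (hB k) hq.le
    unfold lor at this
    rwa [← ENNReal.rpow_mul, one_div_mul_cancel hq.ne', ENNReal.rpow_one] at this
  have key : (∫⁻ t in Set.Ioi (0 : ℝ),
    (ENNReal.ofReal (t ^ (1 / p - 1 / q)) * rea μ f (ENNReal.ofReal t)) ^ q) ≤ B ^ q := by
    calc _ ≤ ∫⁻ t in Set.Ioi (0 : ℝ), liminf (fun k =>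
          (ENNReal.ofReal (t ^ (1 / p - 1 / q)) * rea μ (u k) (ENNReal.ofReal t)) ^ q) atTop := by
          refine setLIntegral_mono' measurableSet_Ioi fun t ht => ?_
          have hmon : Monotone fun y : ℝ≥0∞ => (ENNReal.ofReal (t ^ (1 / p - 1 / q)) * y) ^ q :=
            fun a b hab => ENNReal.rpow_le_rpow (mul_le_mul' le_rfl hab) hq.le
          have hcont : Continuous fun y : ℝ≥0∞ => (ENNReal.ofReal (t ^ (1 / p - 1 / q)) * y) ^ q :=
            (ENNReal.continuous_rpow_const).comp (ENNReal.continuous_const_mul ENNReal.ofReal_ne_top)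
          have := hmon.map_liminf_of_continuousAt (F := atTop)
            (fun k => rea μ (u k) (ENNReal.ofReal t)) hcont.continuousAt
          refine le_trans (hmon (rea_liminf_le f u h _)) this.le
      _ ≤ liminf (fun k => ∫⁻ t in Set.Ioi (0 : ℝ),
          (ENNReal.ofReal (t ^ (1 / p - 1 / q)) * rea μ (u k) (ENNReal.ofReal t)) ^ q) atTop :=
          lintegral_liminf_le fun k => (measurable_lorw _ _).pow_const _
      _ ≤ B ^ q := by
          refine liminf_le_of_le (by isBoundedDefault) fun b hb => ?_
          obtain ⟨k, hk⟩ := hb.exists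
          exact hk.trans (hB' k)
  calc lor μ p q f ≤ (B ^ q) ^ (1 / q) := ENNReal.rpow_le_rpow key (by positivity)
    _ = B := by rw [← ENNReal.rpow_mul, mul_one_div_cancel hq.ne', ENNReal.rpow_one]

/-- Dilating the rearrangement by `d` multiplies the `L^q` norm in the definition of the Lorentz
norm by `d ^ (-1/p)`. -/
lemma lor_dilate {p q : ℝ} (hq : 0 < q) {d : ℝ} (hd : 0 < d) (f : α → ℝ≥0∞) :
    (∫⁻ t in Set.Ioi (0 : ℝ), (ENNReal.ofReal (t ^ (1 / p - 1 / q)) *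
      rea μ f (ENNReal.ofReal (d * t))) ^ q) ^ (1 / q) =
      ENNReal.ofReal (d ^ (-(1 / p))) * lor μ p q f := by
  set G : ℝ → ℝ≥0∞ := (Set.Ioi (0 : ℝ)).indicator fun t =>
    (ENNReal.ofReal (t ^ (1 / p - 1 / q)) * rea μ f (ENNReal.ofReal t)) ^ q with hG
  have hGm : Measurable G := ((measurable_lorw _ _).pow_const _).indicator measurableSet_Ioi
  have h1 : ∫⁻ t, G (d * t) = ENNReal.ofReal d⁻¹ * ∫⁻ t, G t := by
    have h2 := Real.map_volume_mul_left hd.ne'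
    rw [← lintegral_map hGm (measurable_const_mul d), h2, lintegral_smul_measure,
      abs_of_pos (by positivity)]
    rfl
  have h3 : ∀ t : ℝ, (Set.Ioi (0 : ℝ)).indicator (fun t => (ENNReal.ofReal (t ^ (1 / p - 1 / q)) *
      rea μ f (ENNReal.ofReal (d * t))) ^ q) t =
      ENNReal.ofReal (d ^ (-(1 / p - 1 / q))) ^ q * G (d * t) := by
    intro t
    by_cases ht : 0 < t
    · have hdt : 0 < d * t := mul_pos hd ht
      rw [Set.indicator_of_mem (Set.mem_Ioi.2 ht), hG, Set.indicator_of_mem (Set.mem_Ioi.2 hdt),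
        ← ENNReal.mul_rpow_of_nonneg _ _ hq.le, ← mul_assoc, ← ENNReal.ofReal_mul (by positivity)]
      congr 3
      rw [Real.mul_rpow hd.le ht.le, ← mul_assoc, ← Real.rpow_add hd]
      simp
    · have hdt : ¬ 0 < d * t := fun h => ht (pos_of_mul_pos_right h hd.le)
      rw [Set.indicator_of_notMem (by simpa using ht), hG,
        Set.indicator_of_notMem (by simpa using hdt), mul_zero]
  unfold lor
  rw [← lintegral_indicator measurableSet_Ioi, ← lintegral_indicator measurableSet_Ioi]
  simp_rw [h3]
  have hGd : Measurable fun t : ℝ => G (d * t) := hGm.comp (measurable_const_mul d)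
  rw [lintegral_const_mul _ hGd, h1, ← mul_assoc,
    ENNReal.mul_rpow_of_nonneg _ _ (by positivity)]
  congr 1
  rw [ENNReal.mul_rpow_of_nonneg _ _ (by positivity), ← ENNReal.rpow_mul,
    mul_one_div_cancel hq.ne', ENNReal.rpow_one, ENNReal.ofReal_rpow_of_pos (by positivity),
    ← ENNReal.ofReal_mul (by positivity)]
  congr 1
  rw [Real.inv_rpow hd.le, ← Real.rpow_neg hd.le, ← Real.rpow_add hd]
  congr 1; ring

end Rearrangement

/-- Minkowski's inequality for countably many functions. -/
lemma lintegral_Lp_tsum_le {α : Type*} [MeasurableSpace α] {μ : Measure α} {q : ℝ} (hq : 1 ≤ q)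
    (F : ℕ → α → ℝ≥0∞) (hF : ∀ m, Measurable (F m)) :
    (∫⁻ a, (∑' m, F m a) ^ q ∂μ) ^ (1 / q) ≤ ∑' m, (∫⁻ a, (F m a) ^ q ∂μ) ^ (1 / q) := by
  have hq0 : 0 < q := by linarith
  have hfin : ∀ N : ℕ, (∫⁻ a, (∑ m ∈ Finset.range N, F m a) ^ q ∂μ) ^ (1 / q) ≤
      ∑ m ∈ Finset.range N, (∫⁻ a, (F m a) ^ q ∂μ) ^ (1 / q) := by
    intro N
    induction N with
    | zero => simp [ENNReal.zero_rpow_of_pos hq0, hq0]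
    | succ N ih =>
      simp_rw [Finset.sum_range_succ]
      refine le_trans (ENNReal.lintegral_Lp_add_le (f := fun a => ∑ m ∈ Finset.range N, F m a)
        (Finset.measurable_sum _ fun m _ => hF m).aemeasurable (hF N).aemeasurable hq) ?_
      exact add_le_add ih le_rfl
  have hmon : ∀ a, Tendsto (fun N => (∑ m ∈ Finset.range N, F m a) ^ q) atTop
      (𝓝 ((∑' m, F m a) ^ q)) := fun a =>
    (ENNReal.continuous_rpow_const.tendsto _).comp (ENNReal.tendsto_nat_tsum _)
  have h1 : Tendsto (fun N => ∫⁻ a, (∑ m ∈ Finset.range N, F m a) ^ q ∂μ) atTop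
      (𝓝 (∫⁻ a, (∑' m, F m a) ^ q ∂μ)) := by
    refine lintegral_tendsto_of_tendsto_of_monotone
      (fun N => ((Finset.measurable_sum _ fun m _ => hF m).pow_const q).aemeasurable)
      (ae_of_all _ fun a => ?_) (ae_of_all _ hmon)
    intro i j hij
    exact ENNReal.rpow_le_rpow (Finset.sum_le_sum_of_subset (Finset.range_mono hij)) hq0.le
  refine le_of_tendsto' ((ENNReal.continuous_rpow_const.tendsto _).comp h1) fun N => ?_
  exact (hfin N).trans (ENNReal.sum_le_tsum _)

section Rearrangement2

variable {α : Type*} [MeasurableSpace α] {μ : Measure α}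

/-- A pointwise bound of `g*` by a superposition of dilates of `f*` gives a Lorentz norm bound.
All the norm estimates below, including the real interpolation step, go through this lemma. -/
lemma lor_le_of_rea_le_tsum {p q : ℝ} (hq : 1 ≤ q) {β : Type*} [MeasurableSpace β]
    {ν : Measure β} {f : α → ℝ≥0∞} {g : β → ℝ≥0∞}
    (c : ℕ → ℝ≥0∞) (d : ℕ → ℝ) (hd : ∀ m, 0 < d m)
    (h : ∀ t : ℝ, 0 < t → rea ν g (ENNReal.ofReal t) ≤
      ∑' m, c m * rea μ f (ENNReal.ofReal (d m * t))) :
    lor ν p q g ≤ (∑' m, c m * ENNReal.ofReal (d m ^ (-(1 / p)))) * lor μ p q f := by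
  have hq0 : 0 < q := by linarith
  have hmeas : ∀ m, Measurable fun t : ℝ => rea μ f (ENNReal.ofReal (d m * t)) := fun m =>
    (measurable_rea f).comp (measurable_const_mul (d m))
  calc lor ν p q g ≤ (∫⁻ t in Set.Ioi (0 : ℝ), (∑' m, c m *
        (ENNReal.ofReal (t ^ (1 / p - 1 / q)) * rea μ f (ENNReal.ofReal (d m * t)))) ^ q) ^ (1 / q) := by
        unfold lor
        refine ENNReal.rpow_le_rpow (setLIntegral_mono' measurableSet_Ioi fun t ht => ?_)
          (by positivity)
        refine ENNReal.rpow_le_rpow ((mul_le_mul' le_rfl (h t ht)).trans ?_) hq0.le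
        rw [← ENNReal.tsum_mul_left]
        exact le_of_eq (tsum_congr fun m => by ring)
    _ ≤ ∑' m, (∫⁻ t in Set.Ioi (0 : ℝ), (c m *
        (ENNReal.ofReal (t ^ (1 / p - 1 / q)) * rea μ f (ENNReal.ofReal (d m * t)))) ^ q) ^ (1 / q) := by
        refine lintegral_Lp_tsum_le hq _ fun m => Measurable.const_mul ?_ _
        exact (by fun_prop : Measurable fun t : ℝ => ENNReal.ofReal (t ^ (1 / p - 1 / q))).mul
          (hmeas m)
    _ = ∑' m, c m * (ENNReal.ofReal (d m ^ (-(1 / p))) * lor μ p q f) := by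
        refine tsum_congr fun m => ?_
        rw [← lor_dilate hq0 (hd m)]
        simp_rw [ENNReal.mul_rpow_of_nonneg _ _ hq0.le]
        rw [lintegral_const_mul, ENNReal.mul_rpow_of_nonneg _ _ (by positivity),
          ← ENNReal.rpow_mul, mul_one_div_cancel hq0.ne', ENNReal.rpow_one]
        simp_rw [← ENNReal.mul_rpow_of_nonneg _ _ hq0.le]
        exact ((by fun_prop : Measurable fun t : ℝ => ENNReal.ofReal (t ^ (1 / p - 1 / q))).mul
          (hmeas m)).pow_const q
    _ = _ := by
        rw [← ENNReal.tsum_mul_right]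
        exact tsum_congr fun m => by ring

lemma lor_const_mul_le {p q : ℝ} (hq : 0 < q) (c : ℝ≥0∞) (f : α → ℝ≥0∞) (hc : c ≠ ∞) :
    lor μ p q (fun x => c * f x) ≤ c * lor μ p q f := by
  unfold lor
  calc _ ≤ (∫⁻ t in Set.Ioi (0 : ℝ), c ^ q *
        (ENNReal.ofReal (t ^ (1 / p - 1 / q)) * rea μ f (ENNReal.ofReal t)) ^ q) ^ (1 / q) := by
        refine ENNReal.rpow_le_rpow (lintegral_mono fun t => ?_) (by positivity)
        dsimp only
        rw [← ENNReal.mul_rpow_of_nonneg _ _ hq.le]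
        refine ENNReal.rpow_le_rpow ?_ hq.le
        refine (mul_le_mul' le_rfl (rea_const_mul_le c f _)).trans (le_of_eq (by ring))
    _ = _ := by
        rw [lintegral_const_mul' _ _ (ENNReal.rpow_ne_top_of_nonneg hq.le hc),
          ENNReal.mul_rpow_of_nonneg _ _ (by positivity),
          ← ENNReal.rpow_mul, mul_one_div_cancel hq.ne', ENNReal.rpow_one]

/-- Lorentz quasinorms satisfy a triangle inequality with a constant. -/
lemma lor_add_le {p q : ℝ} (hq : 1 ≤ q) (f g : α → ℝ≥0∞) :
    lor μ p q (fun x => f x + g x) ≤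
      ENNReal.ofReal ((1 / 2) ^ (-(1 / p))) * (lor μ p q f + lor μ p q g) := by
  have hq0 : 0 < q := by linarith
  have hm : ∀ f : α → ℝ≥0∞, Measurable fun t : ℝ => ENNReal.ofReal (t ^ (1 / p - 1 / q)) *
      rea μ f (ENNReal.ofReal (1 / 2 * t)) := fun f =>
    (by fun_prop : Measurable fun t : ℝ => ENNReal.ofReal (t ^ (1 / p - 1 / q))).mul
      ((measurable_rea f).comp (measurable_const_mul _))
  rw [mul_add, ← lor_dilate hq0 (by norm_num), ← lor_dilate hq0 (by norm_num)]
  refine le_trans ?_ (ENNReal.lintegral_Lp_add_le (hm f).aemeasurable (hm g).aemeasurable hq)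
  refine ENNReal.rpow_le_rpow (setLIntegral_mono' measurableSet_Ioi fun t ht => ?_) (by positivity)
  refine ENNReal.rpow_le_rpow ?_ hq0.le
  rw [Pi.add_apply, ← mul_add]
  refine mul_le_mul' le_rfl ?_
  have ht0 : (0 : ℝ) < t := ht
  have : ENNReal.ofReal t = ENNReal.ofReal (1 / 2 * t) + ENNReal.ofReal (1 / 2 * t) := by
    rw [← ENNReal.ofReal_add (by positivity) (by positivity)]; congr 1; ring
  rw [this]
  exact rea_add_le f g _ _

/-- Hölder's inequality in Lorentz spaces. -/
lemma lor_mul_le {p p₁ p₂ q q₁ q₂ : ℝ} (hq : 0 < q) (hq1 : 0 < q₁) (hq2 : 0 < q₂)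
    (hpe : 1 / p = 1 / p₁ + 1 / p₂) (hqe : 1 / q = 1 / q₁ + 1 / q₂) (f g : α → ℝ≥0∞) :
    lor μ p q (fun x => f x * g x) ≤
      ENNReal.ofReal ((1 / 2) ^ (-(1 / p))) * (lor μ p₁ q₁ f * lor μ p₂ q₂ g) := by
  have hm : ∀ (r : ℝ) (f : α → ℝ≥0∞), Measurable fun t : ℝ => ENNReal.ofReal (t ^ r) *
      rea μ f (ENNReal.ofReal (1 / 2 * t)) := fun r f =>
    (by fun_prop : Measurable fun t : ℝ => ENNReal.ofReal (t ^ r)).mul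
      ((measurable_rea f).comp (measurable_const_mul _))
  have hqq : q < q₁ := by
    have : 1 / q₁ < 1 / q := by rw [hqe]; have : 0 < 1 / q₂ := by positivity
                                linarith
    exact (one_div_lt_one_div hq1 hq).1 this
  have hexp : (1 / 2 : ℝ) ^ (-(1 / p)) = (1 / 2 : ℝ) ^ (-(1 / p₁)) * (1 / 2 : ℝ) ^ (-(1 / p₂)) := by
    rw [← Real.rpow_add (by norm_num), hpe]; congr 1; ring
  rw [hexp, ENNReal.ofReal_mul (by positivity), mul_mul_mul_comm, ← lor_dilate hq1 (by norm_num),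
    ← lor_dilate hq2 (by norm_num)]
  refine le_trans ?_ (ENNReal.lintegral_Lp_mul_le_Lq_mul_Lr hq hqq hqe _
    (hm _ f).aemeasurable (hm _ g).aemeasurable)
  refine ENNReal.rpow_le_rpow (setLIntegral_mono' measurableSet_Ioi fun t ht => ?_) (by positivity)
  refine ENNReal.rpow_le_rpow ?_ hq.le
  have ht0 : (0 : ℝ) < t := ht
  rw [Pi.mul_apply, mul_mul_mul_comm, ← ENNReal.ofReal_mul (by positivity), ← Real.rpow_add ht0]
  have he : 1 / p₁ - 1 / q₁ + (1 / p₂ - 1 / q₂) = 1 / p - 1 / q := by rw [hpe, hqe]; ring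
  rw [he]
  refine mul_le_mul' le_rfl ?_
  have : ENNReal.ofReal t = ENNReal.ofReal (1 / 2 * t) + ENNReal.ofReal (1 / 2 * t) := by
    rw [← ENNReal.ofReal_add (by positivity) (by positivity)]; congr 1; ring
  rw [this]
  exact rea_mul_le f g _ _

end Rearrangement2

end LCR

namespace LCR

open Filter Topology

/-! ### Real interpolation in terms of rearrangements -/

section Interp

variable {α β : Type*} [MeasurableSpace α] {μ : Measure α} [MeasurableSpace β] {ν : Measure β}

/-- The two-series form of `lor_le_of_rea_le_tsum`. -/
lemma lor_le_of_rea_le_tsum₂ {p q : ℝ} (hq : 1 ≤ q) {f : α → ℝ≥0∞} {g : β → ℝ≥0∞}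
    (c c' : ℕ → ℝ≥0∞) (d d' : ℕ → ℝ) (hd : ∀ m, 0 < d m) (hd' : ∀ m, 0 < d' m)
    (h : ∀ t : ℝ, 0 < t → rea ν g (ENNReal.ofReal t) ≤
      (∑' m, c m * rea μ f (ENNReal.ofReal (d m * t))) +
      ∑' m, c' m * rea μ f (ENNReal.ofReal (d' m * t))) :
    lor ν p q g ≤ ((∑' m, c m * ENNReal.ofReal (d m ^ (-(1 / p)))) +
      ∑' m, c' m * ENNReal.ofReal (d' m ^ (-(1 / p)))) * lor μ p q f := by
  set C : ℕ → ℝ≥0∞ := fun k => if k % 2 = 0 then c (k / 2) else c' (k / 2) with hC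
  set D : ℕ → ℝ := fun k => if k % 2 = 0 then d (k / 2) else d' (k / 2) with hD
  have hCe : ∀ m, C (2 * m) = c m := fun m => by simp [hC]
  have hDe : ∀ m, D (2 * m) = d m := fun m => by simp [hD]
  have hodd : ∀ m : ℕ, (2 * m + 1) / 2 = m := fun m => by omega
  have hodd' : ∀ m : ℕ, (2 * m + 1) % 2 = 1 := fun m => by omega
  have hCo : ∀ m, C (2 * m + 1) = c' m := fun m => by simp [hC, hodd, hodd']
  have hDo : ∀ m, D (2 * m + 1) = d' m := fun m => by simp [hD, hodd, hodd']
  have hDpos : ∀ m, 0 < D m := fun m => by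
    simp only [hD]; split_ifs
    · exact hd _
    · exact hd' _
  have := lor_le_of_rea_le_tsum (p := p) hq (μ := μ) (ν := ν) (f := f) (g := g) C D hDpos (by
    intro t ht
    rw [← tsum_even_add_odd ENNReal.summable ENNReal.summable]
    simp only [hCe, hDe, hCo, hDo]
    exact h t ht)
  rw [← tsum_even_add_odd ENNReal.summable ENNReal.summable] at this
  simpa only [hCe, hDe, hCo, hDo] using this

lemma tsum_rpow_le {b : ℝ} (hb : 1 ≤ b) (x : ℕ → ℝ≥0∞) :
    ∑' m, x m ^ b ≤ (∑' m, x m) ^ b := by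
  have hsplit : ∀ y : ℝ≥0∞, y ^ b = y * y ^ (b - 1) := fun y => by
    conv_rhs => rw [← ENNReal.rpow_one y, ← ENNReal.rpow_mul, one_mul]
    rw [← ENNReal.rpow_add_of_nonneg _ _ (by norm_num) (by linarith)]
    congr 1; ring
  rw [hsplit (∑' m, x m), ← ENNReal.tsum_mul_right]
  refine ENNReal.tsum_le_tsum fun m => ?_
  rw [hsplit (x m)]
  exact mul_le_mul' le_rfl (ENNReal.rpow_le_rpow (ENNReal.le_tsum m) (by linarith))

/-- The part of `f` above the level `f*(t)` has its integral controlled by the values of `f*` at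
dyadic points below `t`. -/
lemma lintegral_large_le {f : α → ℝ≥0∞} (hf : Measurable f) {t : ℝ} (ht : 0 < t) :
    ∫⁻ x, {x | rea μ f (ENNReal.ofReal t) < f x}.indicator f x ∂μ ≤
      ∑' m : ℕ, rea μ f (ENNReal.ofReal ((1 / 2) ^ (m + 1) * t)) *
        ENNReal.ofReal ((1 / 2) ^ m * t) := by
  set a : ℕ → ℝ≥0∞ := fun m => rea μ f (ENNReal.ofReal ((1 / 2) ^ m * t)) with ha
  have ha0 : rea μ f (ENNReal.ofReal t) = a 0 := by simp [ha]
  have hmeas : ∀ m, MeasurableSet {x | a m < f x} := fun m => measurableSet_lt measurable_const hf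
  have hnull : μ {x | ∀ m, a m < f x} = 0 := by
    have hle : ∀ m, μ {x | ∀ m, a m < f x} ≤ ENNReal.ofReal ((1 / 2) ^ m * t) := fun m =>
      (measure_mono fun x (hx : ∀ m, a m < f x) => hx m).trans (measure_rea_lt f _)
    have hlim : Tendsto (fun m : ℕ => ENNReal.ofReal ((1 / 2) ^ m * t)) atTop (𝓝 0) := by
      have : Tendsto (fun m : ℕ => (1 / 2 : ℝ) ^ m * t) atTop (𝓝 (0 * t)) :=
        (tendsto_pow_atTop_nhds_zero_of_lt_one (by norm_num) (by norm_num)).mul_const t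
      rw [zero_mul] at this
      simpa using ENNReal.tendsto_ofReal this
    exact le_antisymm (ge_of_tendsto' hlim hle) bot_le
  rw [ha0]
  calc ∫⁻ x, {x | a 0 < f x}.indicator f x ∂μ
      ≤ ∫⁻ x, ∑' m, {x | a m < f x}.indicator (fun _ => a (m + 1)) x ∂μ := by
        refine lintegral_mono_ae ?_
        have : ∀ᵐ x ∂μ, ¬ ∀ m, a m < f x := by rw [ae_iff]; simpa using hnull
        filter_upwards [this] with x hx
        by_cases h0 : a 0 < f x
        · rw [Set.indicator_of_mem (by exact h0)]
          push Not at hx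
          classical
          have hfind := Nat.find_spec hx
          have hpos : Nat.find hx ≠ 0 := fun h => by
            rw [h] at hfind; exact absurd h0 (not_lt.2 hfind)
          obtain ⟨m, hm⟩ := Nat.exists_eq_succ_of_ne_zero hpos
          have hlt : a m < f x := not_le.1 (Nat.find_min hx (by omega : m < Nat.find hx))
          refine le_trans ?_ (ENNReal.le_tsum m)
          rw [Set.indicator_of_mem (by exact hlt)]
          rw [hm] at hfind
          exact hfind
        · rw [Set.indicator_of_notMem (by exact h0)]; exact bot_le
    _ = ∑' m, ∫⁻ x, {x | a m < f x}.indicator (fun _ => a (m + 1)) x ∂μ :=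
        lintegral_tsum fun m => (measurable_const.indicator (hmeas m)).aemeasurable
    _ ≤ _ := by
        refine ENNReal.tsum_le_tsum fun m => ?_
        rw [lintegral_indicator_const (hmeas m)]
        exact mul_le_mul' le_rfl (measure_rea_lt f _)

/-- The part of `f` below the level `f*(t)` has its `L^b` norm controlled by the values of `f*` at
dyadic points above `t`. -/
lemma lintegral_small_le {f : α → ℝ≥0∞} (hf : Measurable f) {t b : ℝ} (ht : 0 < t) (hb : 1 ≤ b) :
    ∫⁻ x, ({x | f x ≤ rea μ f (ENNReal.ofReal t)}.indicator f x) ^ b ∂μ ≤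
      ∑' m : ℕ, rea μ f (ENNReal.ofReal (2 ^ m * t)) ^ b * ENNReal.ofReal (2 ^ (m + 1) * t) := by
  set a : ℕ → ℝ≥0∞ := fun m => rea μ f (ENNReal.ofReal (2 ^ m * t)) with ha
  have ha0 : rea μ f (ENNReal.ofReal t) = a 0 := by simp [ha]
  have hb0 : 0 < b := by linarith
  have hmeas : ∀ m, MeasurableSet {x | a m < f x} := fun m => measurableSet_lt measurable_const hf
  by_cases hinf : ∃ y : ℝ≥0∞, y ≠ 0 ∧ ∀ m, y ≤ a m
  · obtain ⟨y, hy, hya⟩ := hinf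
    have : ∑' m : ℕ, a m ^ b * ENNReal.ofReal (2 ^ (m + 1) * t) = ∞ := by
      rw [eq_top_iff]
      calc ∞ = ∑' _ : ℕ, y ^ b * ENNReal.ofReal t := by
            rw [ENNReal.tsum_const_eq_top_of_ne_zero]
            exact mul_ne_zero (by simp [hy, hb0.le]) (by simpa using ht)
        _ ≤ _ := by
            refine ENNReal.tsum_le_tsum fun m => mul_le_mul' (ENNReal.rpow_le_rpow (hya m) hb0.le) ?_
            refine ENNReal.ofReal_le_ofReal ?_
            have : (1 : ℝ) ≤ 2 ^ (m + 1) := one_le_pow₀ (by norm_num)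
            nlinarith
    rw [this]; exact le_top
  push Not at hinf
  rw [ha0]
  calc ∫⁻ x, ({x | f x ≤ a 0}.indicator f x) ^ b ∂μ
      ≤ ∫⁻ x, ∑' m, {x | a (m + 1) < f x}.indicator (fun _ => a m ^ b) x ∂μ := by
        refine lintegral_mono fun x => ?_
        dsimp only
        by_cases h0 : f x ≤ a 0
        · rw [Set.indicator_of_mem (by exact h0)]
          by_cases hfx : f x = 0
          · rw [hfx, ENNReal.zero_rpow_of_pos hb0]; exact bot_le
          have hx := hinf (f x) hfx
          classical
          have hfind := Nat.find_spec hx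
          have hpos : Nat.find hx ≠ 0 := fun h => by
            rw [h] at hfind; exact absurd h0 (not_le.2 hfind)
          obtain ⟨m, hm⟩ := Nat.exists_eq_succ_of_ne_zero hpos
          have hlt : f x ≤ a m := not_lt.1 (Nat.find_min hx (by omega : m < Nat.find hx))
          refine le_trans ?_ (ENNReal.le_tsum m)
          rw [hm] at hfind
          rw [Set.indicator_of_mem (by exact hfind)]
          exact ENNReal.rpow_le_rpow hlt hb0.le
        · rw [Set.indicator_of_notMem (by exact h0), ENNReal.zero_rpow_of_pos hb0]; exact bot_le
    _ = ∑' m, ∫⁻ x, {x | a (m + 1) < f x}.indicator (fun _ => a m ^ b) x ∂μ :=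
        lintegral_tsum fun m => (measurable_const.indicator (hmeas _)).aemeasurable
    _ ≤ _ := by
        refine ENNReal.tsum_le_tsum fun m => ?_
        rw [lintegral_indicator_const (hmeas _)]
        exact mul_le_mul' le_rfl (measure_rea_lt f _)

lemma tsum_geom_ne_top {r c : ℝ} (hr : 0 ≤ r) (hr1 : r < 1) :
    ∑' m : ℕ, ENNReal.ofReal (c * r ^ m) ≠ ∞ :=
  ((summable_geometric_of_lt_one hr hr1).mul_left c).tsum_ofReal_ne_top

end Interp

/-- Real interpolation between weak type `(1,1)` and weak type `(b,b)`: the hypothesis is what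
these two endpoint bounds give for the splitting of `f` at the level `a = f*(t)`. -/
theorem interp {p q b : ℝ} (hp : 1 < p) (hpb : p < b) (hq : 1 ≤ q) {C : ℝ≥0∞} (hC : C ≠ ∞) :
    ∃ K : ℝ≥0∞, K ≠ ∞ ∧ ∀ {α β : Type} [MeasurableSpace α] [MeasurableSpace β] {μ : Measure α}
      {ν : Measure β} {f : α → ℝ≥0∞} {g : β → ℝ≥0∞}, Measurable f →
      (∀ (t : ℝ) (a : ℝ≥0∞), 0 < t → rea ν g (ENNReal.ofReal t) ≤ C *
        ((∫⁻ x, {x | a < f x}.indicator f x ∂μ) / ENNReal.ofReal t +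
        (((∫⁻ x, ({x | f x ≤ a}.indicator f x) ^ b ∂μ) / ENNReal.ofReal t) ^ (1 / b) + a))) →
      lor ν p q g ≤ K * lor μ p q f := by
  have hp0 : 0 < p := by linarith
  have hb0 : 0 < b := by linarith
  have hb1 : 1 ≤ b := by linarith
  set c : ℕ → ℝ≥0∞ := fun m => C * ENNReal.ofReal ((1 / 2) ^ m) with hc
  set c' : ℕ → ℝ≥0∞ := fun m => C * (2 * ENNReal.ofReal ((2 : ℝ) ^ (((m : ℝ) + 1) / b))) with hc'
  set d : ℕ → ℝ := fun m => (1 / 2) ^ (m + 1) with hd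
  set d' : ℕ → ℝ := fun m => 2 ^ m with hd'
  refine ⟨(∑' m, c m * ENNReal.ofReal (d m ^ (-(1 / p)))) +
      ∑' m, c' m * ENNReal.ofReal (d' m ^ (-(1 / p))), ?_, ?_⟩
  · refine ENNReal.add_ne_top.2 ⟨?_, ?_⟩
    · have : ∀ m : ℕ, c m * ENNReal.ofReal (d m ^ (-(1 / p))) =
          C * ENNReal.ofReal ((1 / 2 : ℝ) ^ (-(1 / p)) * ((1 / 2 : ℝ) ^ (1 - 1 / p)) ^ m) := by
        intro m
        simp only [hc, hd]
        rw [mul_assoc, ← ENNReal.ofReal_mul (by positivity)]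
        congr 2
        rw [← Real.rpow_natCast, ← Real.rpow_natCast, ← Real.rpow_natCast,
          ← Real.rpow_mul (by norm_num), ← Real.rpow_mul (by norm_num),
          ← Real.rpow_add (by norm_num), ← Real.rpow_add (by norm_num)]
        congr 1; push_cast; ring
      simp_rw [this]
      rw [ENNReal.tsum_mul_left]
      refine ENNReal.mul_ne_top hC (tsum_geom_ne_top (by positivity) ?_)
      refine Real.rpow_lt_one (by norm_num) (by norm_num) ?_
      rw [sub_pos, div_lt_one hp0]; exact hp
    · have : ∀ m : ℕ, c' m * ENNReal.ofReal (d' m ^ (-(1 / p))) =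
          C * 2 * ENNReal.ofReal ((2 : ℝ) ^ (1 / b) * ((2 : ℝ) ^ (1 / b - 1 / p)) ^ m) := by
        intro m
        simp only [hc', hd']
        rw [← mul_assoc, mul_assoc (C * 2), ← ENNReal.ofReal_mul (by positivity)]
        congr 2
        rw [← Real.rpow_natCast, ← Real.rpow_natCast,
          ← Real.rpow_mul (by norm_num), ← Real.rpow_mul (by norm_num),
          ← Real.rpow_add (by norm_num), ← Real.rpow_add (by norm_num)]
        congr 1; ring
      simp_rw [this]
      rw [ENNReal.tsum_mul_left]
      refine ENNReal.mul_ne_top (ENNReal.mul_ne_top hC (by norm_num))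
        (tsum_geom_ne_top (by positivity) ?_)
      refine Real.rpow_lt_one_of_one_lt_of_neg (by norm_num) ?_
      rw [sub_neg]
      exact one_div_lt_one_div_of_lt hp0 hpb
  · intro α β _ _ μ ν f g hf h
    refine lor_le_of_rea_le_tsum₂ hq c c' d d' (fun m => by positivity) (fun m => by positivity) ?_
    intro t ht
    have ht' : ENNReal.ofReal t ≠ 0 := by simpa using ht
    refine (h t (rea μ f (ENNReal.ofReal t)) ht).trans ?_
    rw [mul_add]
    refine add_le_add ?_ ?_
    · calc _ ≤ C * ((∑' m : ℕ, rea μ f (ENNReal.ofReal ((1 / 2) ^ (m + 1) * t)) *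
            ENNReal.ofReal ((1 / 2) ^ m * t)) / ENNReal.ofReal t) := by
            gcongr
            exact lintegral_large_le hf ht
        _ = _ := by
            rw [ENNReal.div_eq_inv_mul, ← ENNReal.tsum_mul_left, ← ENNReal.tsum_mul_left]
            refine tsum_congr fun m => ?_
            simp only [hc, hd]
            rw [ENNReal.ofReal_mul (p := (1 / 2) ^ m) (by positivity)]
            rw [mul_comm (ENNReal.ofReal t)⁻¹, mul_assoc, mul_assoc (ENNReal.ofReal _) _ _,
              ENNReal.mul_inv_cancel ht' ENNReal.ofReal_ne_top, mul_one]
            ring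
    · set X : ℕ → ℝ≥0∞ := fun m => ENNReal.ofReal ((2 : ℝ) ^ (((m : ℝ) + 1) / b)) *
        rea μ f (ENNReal.ofReal (2 ^ m * t)) with hX
      have h1 : ((∫⁻ x, ({x | f x ≤ rea μ f (ENNReal.ofReal t)}.indicator f x) ^ b ∂μ) /
          ENNReal.ofReal t) ^ (1 / b) ≤ ∑' m, X m := by
        have : (∫⁻ x, ({x | f x ≤ rea μ f (ENNReal.ofReal t)}.indicator f x) ^ b ∂μ) /
          ENNReal.ofReal t ≤ (∑' m, X m) ^ b := by
          refine le_trans ?_ (tsum_rpow_le hb1 X)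
          calc _ ≤ (∑' m : ℕ, rea μ f (ENNReal.ofReal (2 ^ m * t)) ^ b *
                ENNReal.ofReal (2 ^ (m + 1) * t)) / ENNReal.ofReal t := by
                gcongr
                exact lintegral_small_le hf ht hb1
            _ = _ := by
                rw [ENNReal.div_eq_inv_mul, ← ENNReal.tsum_mul_left]
                refine tsum_congr fun m => ?_
                simp only [hX]
                rw [ENNReal.mul_rpow_of_nonneg _ _ hb0.le, ENNReal.ofReal_rpow_of_pos (by positivity),
                  ← Real.rpow_mul (by norm_num), div_mul_cancel₀ _ hb0.ne',
                  ENNReal.ofReal_mul (p := 2 ^ (m + 1)) (by positivity),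
                  mul_comm (ENNReal.ofReal t)⁻¹, mul_assoc, mul_assoc (ENNReal.ofReal _) _ _,
                  ENNReal.mul_inv_cancel ht' ENNReal.ofReal_ne_top, mul_one, mul_comm]
                congr 2
                norm_cast
        calc _ ≤ ((∑' m, X m) ^ b) ^ (1 / b) := ENNReal.rpow_le_rpow this (by positivity)
          _ = _ := by rw [← ENNReal.rpow_mul, mul_one_div_cancel hb0.ne', ENNReal.rpow_one]
      have h2 : rea μ f (ENNReal.ofReal t) ≤ ∑' m, X m := by
        refine le_trans ?_ (ENNReal.le_tsum 0)
        simp only [hX, pow_zero, one_mul]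
        refine le_mul_of_one_le_left bot_le ?_
        rw [ENNReal.one_le_ofReal]
        refine Real.one_le_rpow (by norm_num) (by positivity)
      calc _ ≤ C * (∑' m, X m + ∑' m, X m) := by gcongr
        _ = _ := by
          rw [← two_mul, ← ENNReal.tsum_mul_left, ← ENNReal.tsum_mul_left]
          refine tsum_congr fun m => ?_
          simp only [hX, hc', hd']
          ring

end LCR

namespace LCR

set_option linter.unusedSectionVars false

open Filter Topology Module Metric

/-! ### The Hardy–Littlewood maximal function -/

/-- A weak type bound, restated for the rearrangement. -/
lemma rea_le_of_weak {α : Type*} [MeasurableSpace α] {μ : Measure α} {G : α → ℝ≥0∞} {b : ℝ}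
    (hb : 0 < b) {B t : ℝ≥0∞} (ht : t ≠ 0) (ht' : t ≠ ∞)
    (h : ∀ l : ℝ≥0∞, l ≠ 0 → l ≠ ∞ → l ^ b * μ {x | l < G x} ≤ B) :
    rea μ G t ≤ (B / t) ^ (1 / b) := by
  refine le_of_forall_lt fun l hl => ?_
  obtain ⟨l', hl', hl2⟩ := exists_between hl
  refine lt_of_lt_of_le hl' ?_
  have h1 : t < μ {x | l' < G x} := by
    by_contra hc
    exact absurd (rea_le_iff.2 (not_lt.1 hc)) (not_le.2 hl2)
  have h2 := h l' (bot_le.trans_lt hl').ne' (hl2.trans_le le_top).ne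
  have h3 : l' ^ b ≤ B / t := by
    rw [ENNReal.le_div_iff_mul_le (Or.inl ht) (Or.inl ht')]
    exact le_trans (by gcongr) h2
  calc l' = (l' ^ b) ^ (1 / b) := by rw [← ENNReal.rpow_mul]; simp [hb.ne']
    _ ≤ _ := by gcongr

variable {V : Type} [NormedAddCommGroup V] [InnerProductSpace ℝ V] [FiniteDimensional ℝ V]
  [MeasurableSpace V] [BorelSpace V]

/-- The centred Hardy–Littlewood maximal function, over closed balls. -/
noncomputable def maxf (f : V → ℝ≥0∞) (x : V) : ℝ≥0∞ :=
  ⨆ (r : ℝ) (_ : 0 < r), (∫⁻ y in closedBall x r, f y) / volume (closedBall x r)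

lemma vol_cb_pos (x : V) {r : ℝ} (hr : 0 < r) : volume (closedBall x r) ≠ 0 :=
  (measure_closedBall_pos volume x hr).ne'

lemma vol_cb_fin (x : V) (r : ℝ) : volume (closedBall x r) ≠ ∞ := measure_closedBall_lt_top.ne

lemma lt_maxf_iff {f : V → ℝ≥0∞} {x : V} {l : ℝ≥0∞} : l < maxf f x ↔
    ∃ r : ℝ, 0 < r ∧ l * volume (closedBall x r) < ∫⁻ y in closedBall x r, f y := by
  simp only [maxf, lt_iSup_iff, exists_prop]
  refine exists_congr fun r => and_congr_right fun hr => ?_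
  rw [ENNReal.lt_div_iff_mul_lt (Or.inl (vol_cb_pos x hr)) (Or.inl (vol_cb_fin x r))]

lemma lintegral_cb_le_maxf (f : V → ℝ≥0∞) (x : V) {r : ℝ} (hr : 0 < r) :
    ∫⁻ y in closedBall x r, f y ≤ maxf f x * volume (closedBall x r) := by
  rw [← ENNReal.div_le_iff (vol_cb_pos x hr) (vol_cb_fin x r)]
  exact le_iSup₂_of_le r hr le_rfl

lemma isOpen_lt_maxf (f : V → ℝ≥0∞) (l : ℝ≥0∞) : IsOpen {x | l < maxf f x} := by
  rw [Metric.isOpen_iff]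
  intro x (hx : l < maxf f x)
  have hl : l ≠ ∞ := (hx.trans_le le_top).ne
  obtain ⟨r, hr, hlt⟩ := lt_maxf_iff.1 hx
  have hcont : Tendsto (fun r' : ℝ => l * (ENNReal.ofReal (r' ^ finrank ℝ V) *
      volume (ball (0 : V) 1))) (𝓝[>] r)
      (𝓝 (l * (ENNReal.ofReal (r ^ finrank ℝ V) * volume (ball (0 : V) 1)))) := by
    refine Tendsto.mono_left ?_ nhdsWithin_le_nhds
    refine ENNReal.Tendsto.const_mul (ENNReal.Tendsto.mul_const ?_ (Or.inr measure_ball_lt_top.ne))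
      (Or.inr hl)
    exact (ENNReal.continuous_ofReal.comp (continuous_pow _)).tendsto r
  rw [Measure.addHaar_closedBall _ _ hr.le] at hlt
  obtain ⟨r', h1, h2⟩ := ((hcont.eventually (gt_mem_nhds hlt)).and self_mem_nhdsWithin).exists
  have h2' : r < r' := h2
  refine ⟨r' - r, by linarith, fun y hy => ?_⟩
  refine lt_maxf_iff.2 ⟨r', by linarith, ?_⟩
  rw [Measure.addHaar_closedBall _ _ (by linarith)]
  refine h1.trans_le (lintegral_mono_set (closedBall_subset_closedBall' ?_))
  rw [mem_ball, dist_comm] at hy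
  linarith

lemma measurable_maxf (f : V → ℝ≥0∞) : Measurable (maxf f) :=
  measurable_of_Ioi fun l => (isOpen_lt_maxf f l).measurableSet

lemma maxf_mono {f g : V → ℝ≥0∞} (h : ∀ x, f x ≤ g x) (x : V) : maxf f x ≤ maxf g x := by
  unfold maxf
  gcongr
  exact h _

/-- The weak type (1,1) bound for the maximal function, from the Vitali covering lemma. -/
lemma maxf_weak (f : V → ℝ≥0∞) (l : ℝ≥0∞) :
    l * volume {x | l < maxf f x} ≤ 5 ^ finrank ℝ V * ∫⁻ x, f x := by
  set S : ℕ → Set V := fun N => {x | ∃ r : ℝ, 0 < r ∧ r ≤ N ∧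
    l * volume (closedBall x r) < ∫⁻ y in closedBall x r, f y} with hS
  have hU : {x | l < maxf f x} = ⋃ N, S N := by
    ext x
    simp only [Set.mem_ofPred_eq, lt_maxf_iff, Set.mem_iUnion, hS]
    constructor
    · rintro ⟨r, hr, h⟩
      obtain ⟨N, hN⟩ := exists_nat_ge r
      exact ⟨N, r, hr, hN, h⟩
    · rintro ⟨N, r, hr, _, h⟩
      exact ⟨r, hr, h⟩
  have hmono : Monotone S := by
    rintro N M hNM x ⟨r, hr, hrN, h⟩
    exact ⟨r, hr, hrN.trans (by exact_mod_cast hNM), h⟩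
  rw [hU, hmono.measure_iUnion, ENNReal.mul_iSup]
  refine iSup_le fun N => ?_
  choose! r hr0 hrN hr using fun x (hx : x ∈ S N) => hx
  obtain ⟨u, huS, hdis, hcov⟩ := Vitali.exists_disjoint_subfamily_covering_enlargement_closedBall
    (S N) id r N hrN 5 (by norm_num)
  have hcnt : u.Countable := hdis.countable_of_nonempty_interior fun x hx =>
    (nonempty_ball.2 (hr0 x (huS hx))).mono ball_subset_interior_closedBall
  have hsub : S N ⊆ ⋃ x ∈ u, closedBall x (5 * r x) := fun x hx => by
    obtain ⟨b, hb, hsb⟩ := hcov x hx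
    exact Set.mem_biUnion hb (hsb (mem_closedBall_self (hr0 x hx).le))
  calc l * volume (S N) ≤ l * ∑' x : u, volume (closedBall (x : V) (5 * r x)) := by
        gcongr
        exact (measure_mono hsub).trans (measure_biUnion_le _ hcnt _)
    _ = ∑' x : u, 5 ^ finrank ℝ V * (l * volume (closedBall (x : V) (r x))) := by
        rw [← ENNReal.tsum_mul_left]
        refine tsum_congr fun x => ?_
        have := hr0 x (huS x.2)
        rw [Measure.addHaar_closedBall _ _ (by positivity), Measure.addHaar_closedBall _ _ this.le,
          mul_pow, ENNReal.ofReal_mul (by positivity), ENNReal.ofReal_pow (by norm_num)]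
        simp only [ENNReal.ofReal_ofNat]
        ring
    _ ≤ ∑' x : u, 5 ^ finrank ℝ V * ∫⁻ y in closedBall (x : V) (r x), f y := by
        gcongr with x
        exact (hr x (huS x.2)).le
    _ = 5 ^ finrank ℝ V * ∫⁻ y in ⋃ x ∈ u, closedBall (x : V) (r x), f y := by
        rw [ENNReal.tsum_mul_left, lintegral_biUnion hcnt
          (fun _ _ => isClosed_closedBall.measurableSet) (by exact hdis)]
    _ ≤ _ := by
        gcongr
        exact Measure.restrict_le_self

/-- Truncation: the part of `f` below the height `a` contributes at most `a` to the maximal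
function. -/
lemma maxf_le_add (f : V → ℝ≥0∞) (a : ℝ≥0∞) (x : V) :
    maxf f x ≤ maxf ({x | a < f x}.indicator f) x + a := by
  refine iSup₂_le fun r hr => ?_
  calc (∫⁻ y in closedBall x r, f y) / volume (closedBall x r)
      ≤ (∫⁻ y in closedBall x r, ({x | a < f x}.indicator f y + a)) / volume (closedBall x r) := by
        gcongr with y
        by_cases h : a < f y
        · rw [Set.indicator_of_mem (by exact h)]; exact le_self_add
        · exact (not_lt.1 h).trans le_add_self
    _ = (∫⁻ y in closedBall x r, {x | a < f x}.indicator f y) / volume (closedBall x r) + a := by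
        rw [lintegral_add_right _ measurable_const, ENNReal.add_div, setLIntegral_const,
          ENNReal.mul_div_cancel_right (vol_cb_pos x hr) (vol_cb_fin x r)]
    _ ≤ _ := by
        gcongr
        exact le_iSup₂_of_le r hr le_rfl

/-- Boundedness of the maximal function on Lorentz spaces. -/
theorem maxf_lor {p q : ℝ} (hp : 1 < p) (hq : 1 ≤ q) (V : Type) [NormedAddCommGroup V]
    [InnerProductSpace ℝ V] [FiniteDimensional ℝ V] [MeasurableSpace V] [BorelSpace V] :
    ∃ K : ℝ≥0∞, K ≠ ∞ ∧ ∀ f : V → ℝ≥0∞, Measurable f →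
      lor volume p q (maxf f) ≤ K * lor volume p q f := by
  obtain ⟨K, hK, h⟩ := interp hp (lt_add_one p) hq (C := 5 ^ finrank ℝ V) (by finiteness)
  refine ⟨K, hK, fun f hf => h hf fun t a ht => ?_⟩
  have ht0 : ENNReal.ofReal t ≠ 0 := (ENNReal.ofReal_pos.2 ht).ne'
  set f1 := {x | a < f x}.indicator f with hf1
  have h1 : rea volume (maxf f1) (ENNReal.ofReal t) ≤
      5 ^ finrank ℝ V * ((∫⁻ x, f1 x) / ENNReal.ofReal t) := by
    have := rea_le_of_weak (μ := (volume : Measure V)) (b := 1) one_pos ht0 ENNReal.ofReal_ne_top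
      (G := maxf f1) (fun l _ _ => by rw [ENNReal.rpow_one]; exact maxf_weak f1 l)
    simpa [mul_div_assoc] using this
  have h5 : (1 : ℝ≥0∞) ≤ 5 ^ finrank ℝ V := one_le_pow₀ (by norm_num)
  calc rea volume (maxf f) (ENNReal.ofReal t)
      ≤ rea volume (maxf f1) (ENNReal.ofReal t) + a := by
        rw [rea_le_iff]
        refine (measure_mono fun x hx => ?_).trans (measure_rea_lt (maxf f1) (ENNReal.ofReal t))
        have hx' : rea volume (maxf f1) (ENNReal.ofReal t) + a < maxf f x := hx
        by_contra hc
        have hc' : maxf f1 x ≤ _ := not_lt.1 hc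
        exact absurd (hx'.trans_le ((maxf_le_add f a x).trans (add_le_add_left hc' a)))
          (lt_irrefl _)
    _ ≤ 5 ^ finrank ℝ V * ((∫⁻ x, f1 x) / ENNReal.ofReal t) + 5 ^ finrank ℝ V * a := by
        gcongr
        exact le_mul_of_one_le_left bot_le h5
    _ ≤ _ := by
        rw [← mul_add]
        gcongr
        exact le_add_self

/-- The maximal function dominates `f` almost everywhere, by Lebesgue differentiation. -/
lemma le_maxf_ae [Nontrivial V] {f : V → ℝ≥0∞} (hf : Measurable f) (h : ∫⁻ x, f x ≠ ∞) :
    ∀ᵐ x, f x ≤ maxf f x := by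
  filter_upwards [(Besicovitch.vitaliFamily (volume : Measure V)).ae_tendsto_lintegral_div
    hf.aemeasurable h] with x hx
  refine le_of_tendsto (hx.comp (Besicovitch.tendsto_filterAt volume x)) ?_
  filter_upwards [self_mem_nhdsWithin] with r hr
  exact le_iSup₂_of_le r hr le_rfl

lemma le_maxf_of_continuous {f : V → ℝ≥0∞} (hf : Continuous f) (x : V) : f x ≤ maxf f x := by
  refine le_of_forall_lt fun l hl => ?_
  obtain ⟨l', hl1, hl2⟩ := exists_between hl
  refine hl1.trans_le ?_
  obtain ⟨r, hr, hs⟩ := Metric.nhds_basis_closedBall.mem_iff.1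
    (hf.continuousAt.eventually (lt_mem_nhds hl2))
  refine le_iSup₂_of_le r hr ?_
  rw [ENNReal.le_div_iff_mul_le (Or.inl (vol_cb_pos x hr)) (Or.inl (vol_cb_fin x r)),
    ← setLIntegral_const]
  exact setLIntegral_mono' isClosed_closedBall.measurableSet fun y hy => (hs hy).le

/-! ### Averaging against a polynomially decaying kernel -/

/-- The bump `r^d (1 + r‖x‖)^{-(d+2)}` at frequency scale `r`, where `d = dim V`. -/
noncomputable def Phi (r : ℝ) (x : V) : ℝ :=
  r ^ finrank ℝ V / (1 + r * ‖x‖) ^ (finrank ℝ V + 2)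

lemma Phi_nonneg {r : ℝ} (hr : 0 < r) (x : V) : 0 ≤ Phi r x := by unfold Phi; positivity

lemma Phi_neg (r : ℝ) (x : V) : Phi r (-x) = Phi r x := by simp [Phi]

lemma continuous_Phi {r : ℝ} (hr : 0 < r) : Continuous (Phi r : V → ℝ) := by
  unfold Phi
  refine continuous_const.div (by fun_prop) fun x => ?_
  positivity

/-- The average `(Φ_r * u)(x)`. -/
noncomputable def cv (r : ℝ) (u : V → ℝ≥0∞) (x : V) : ℝ≥0∞ :=
  ∫⁻ y, ENNReal.ofReal (Phi r (x - y)) * u y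

/-- The kernel `Phi r` is dominated by a sum of multiples of indicators of dyadic balls. -/
lemma Phi_le_sum {r : ℝ} (hr : 0 < r) (x z : V) :
    ENNReal.ofReal (Phi r (x - z)) ≤ ∑' m : ℕ, (closedBall x (2 ^ m / r)).indicator (fun _ =>
      ENNReal.ofReal (r ^ finrank ℝ V * (2 ^ (finrank ℝ V + 2) / 2 ^ (m * (finrank ℝ V + 2))))) z := by
  obtain ⟨m, hm, hmin⟩ : ∃ m : ℕ, r * ‖x - z‖ ≤ 2 ^ m ∧ (∀ k < m, 2 ^ k < r * ‖x - z‖) := by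
    have hex : ∃ m : ℕ, r * ‖x - z‖ ≤ 2 ^ m := by
      obtain ⟨m, hm⟩ := pow_unbounded_of_one_lt (r * ‖x - z‖) (one_lt_two)
      exact ⟨m, hm.le⟩
    classical
    exact ⟨Nat.find hex, Nat.find_spec hex, fun k hk => not_le.1 (Nat.find_min hex hk)⟩
  refine le_trans ?_ (ENNReal.le_tsum m)
  rw [Set.indicator_of_mem]
  · refine ENNReal.ofReal_le_ofReal ?_
    unfold Phi
    rw [div_eq_mul_inv]
    gcongr
    rw [pow_mul, ← div_pow, ← inv_pow]
    gcongr
    rw [inv_le_comm₀ (by positivity) (by positivity), inv_div]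
    rcases m with _ | k
    · have : 0 ≤ r * ‖x - z‖ := by positivity
      norm_num; linarith
    · have := hmin k (by omega)
      rw [pow_succ]; linarith
  · rw [mem_closedBall, dist_comm, dist_eq_norm, le_div_iff₀ hr, mul_comm]
    exact hm

/-- The constant in `Φ_r * u ≤ C · maxf u`. -/
noncomputable def cPhi (V : Type) [NormedAddCommGroup V] [InnerProductSpace ℝ V]
    [FiniteDimensional ℝ V] [MeasurableSpace V] [BorelSpace V] : ℝ≥0∞ :=
  ENNReal.ofReal (2 ^ (finrank ℝ V + 2)) * (4 / 3) * volume (ball (0 : V) 1)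

lemma cPhi_ne_top : cPhi V ≠ ∞ := by
  unfold cPhi
  have : volume (ball (0 : V) 1) ≠ ∞ := measure_ball_lt_top.ne
  finiteness

/-- Averages against `Phi r` are controlled by the maximal function, uniformly in `r`. -/
lemma cv_le_maxf {r : ℝ} (hr : 0 < r) {u : V → ℝ≥0∞} (hu : Measurable u) (x : V) :
    cv r u x ≤ cPhi V * maxf u x := by
  set d := finrank ℝ V with hd
  set c : ℕ → ℝ := fun m => r ^ d * (2 ^ (d + 2) / 2 ^ (m * (d + 2))) with hc
  calc cv r u x ≤ ∫⁻ y, ∑' m : ℕ, (closedBall x (2 ^ m / r)).indicator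
          (fun _ => ENNReal.ofReal (c m)) y * u y := by
        refine lintegral_mono fun y => ?_
        rw [ENNReal.tsum_mul_right]
        gcongr
        exact Phi_le_sum hr x y
    _ = ∑' m : ℕ, ∫⁻ y, (closedBall x (2 ^ m / r)).indicator
          (fun _ => ENNReal.ofReal (c m)) y * u y :=
        lintegral_tsum fun m => ((measurable_const.indicator
          isClosed_closedBall.measurableSet).mul hu).aemeasurable
    _ = ∑' m : ℕ, ENNReal.ofReal (c m) * ∫⁻ y in closedBall x (2 ^ m / r), u y := by
        refine tsum_congr fun m => ?_
        rw [← lintegral_const_mul _ hu, ← lintegral_indicator isClosed_closedBall.measurableSet]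
        refine lintegral_congr fun y => ?_
        by_cases hy : y ∈ closedBall x (2 ^ m / r) <;> simp [hy]
    _ ≤ ∑' m : ℕ, ENNReal.ofReal (c m) * (maxf u x * volume (closedBall x (2 ^ m / r))) := by
        gcongr with m
        exact lintegral_cb_le_maxf u x (by positivity)
    _ = ∑' m : ℕ, ENNReal.ofReal ((1 / 4) ^ m) * (ENNReal.ofReal (2 ^ (d + 2)) *
          volume (ball (0 : V) 1) * maxf u x) := by
        refine tsum_congr fun m => ?_
        rw [Measure.addHaar_closedBall _ _ (by positivity)]
        have : ENNReal.ofReal (c m) * ENNReal.ofReal ((2 ^ m / r) ^ d) =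
            ENNReal.ofReal ((1 / 4) ^ m) * ENNReal.ofReal (2 ^ (d + 2)) := by
          rw [← ENNReal.ofReal_mul (by positivity), ← ENNReal.ofReal_mul (by positivity)]
          congr 1
          simp only [hc]
          have h4 : ((1 : ℝ) / 4) ^ m = 1 / (2 ^ m * 2 ^ m) := by
            rw [← mul_pow, one_div, inv_pow]; norm_num
          rw [h4, div_pow, mul_add, pow_add _ (m * d), pow_mul 2 m d, pow_mul 2 m 2]
          field_simp
        rw [← hd]
        calc _ = (ENNReal.ofReal (c m) * ENNReal.ofReal ((2 ^ m / r) ^ d)) *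
              (volume (ball (0 : V) 1) * maxf u x) := by ring
          _ = _ := by rw [this]; ring
    _ = _ := by
        rw [ENNReal.tsum_mul_right, ← ENNReal.ofReal_tsum_of_nonneg (fun m => by positivity)
          (summable_geometric_of_lt_one (by norm_num) (by norm_num)),
          tsum_geometric_of_lt_one (by norm_num) (by norm_num)]
        have : ENNReal.ofReal (1 - 1 / 4)⁻¹ = 4 / 3 := by
          rw [show ((1 : ℝ) - 1 / 4)⁻¹ = 4 / 3 by norm_num, ENNReal.ofReal_div_of_pos (by norm_num)]
          simp
        rw [this, cPhi]
        ring

lemma maxf_one_le (x : V) : maxf (fun _ => 1) x ≤ 1 := by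
  refine iSup₂_le fun r hr => ?_
  simp [ENNReal.div_self_le_one]

lemma lintegral_Phi_le {r : ℝ} (hr : 0 < r) :
    ∫⁻ y : V, ENNReal.ofReal (Phi r y) ≤ cPhi V := by
  have h1 := cv_le_maxf hr (u := fun _ : V => 1) measurable_const 0
  have h2 : cv r (fun _ : V => 1) 0 = ∫⁻ y : V, ENNReal.ofReal (Phi r y) := by
    unfold cv
    simp [Phi]
  rw [← h2]
  exact h1.trans ((mul_le_mul_right (maxf_one_le 0) _).trans (mul_one _).le)

lemma integrable_Phi {r : ℝ} (hr : 0 < r) : Integrable (Phi r : V → ℝ) := by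
  refine ⟨(continuous_Phi hr).aestronglyMeasurable, ?_⟩
  rw [hasFiniteIntegral_iff_ofReal (ae_of_all _ (Phi_nonneg hr))]
  exact (lintegral_Phi_le hr).trans_lt cPhi_ne_top.lt_top

end LCR

namespace LCR

set_option linter.unusedSectionVars false

open Filter Topology Module Metric

/-! ### The Calderón–Zygmund decomposition -/

/-- Disjointification of a countable family of sets. -/
lemma exists_partition {α ι : Type*} [MeasurableSpace α] [Countable ι] (S : ι → Set α)
    (hS : ∀ i, MeasurableSet (S i)) : ∃ E : ι → Set α, (∀ i, MeasurableSet (E i)) ∧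
      (∀ i, E i ⊆ S i) ∧ (∀ i j x, x ∈ E i → x ∈ E j → i = j) ∧ ∀ i, ∀ x ∈ S i, ∃ j, x ∈ E j := by
  obtain ⟨e, he⟩ := exists_injective_nat ι
  refine ⟨fun i => S i \ ⋃ (j : ι) (_ : e j < e i), S j, fun i => ?_, fun i => Set.sdiff_subset,
    fun i j x hi hj => ?_, fun i x hx => ?_⟩
  · exact (hS i).diff (MeasurableSet.iUnion fun j => MeasurableSet.iUnion fun _ => hS j)
  · rcases lt_trichotomy (e i) (e j) with h | h | h
    · exact absurd (Set.mem_iUnion₂.2 ⟨i, h, hi.1⟩) hj.2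
    · exact he h
    · exact absurd (Set.mem_iUnion₂.2 ⟨j, h, hj.1⟩) hi.2
  · classical
    have hex : ∃ m, ∃ j, e j = m ∧ x ∈ S j := ⟨_, i, rfl, hx⟩
    obtain ⟨j, hj, hxj⟩ := Nat.find_spec hex
    refine ⟨j, hxj, fun hmem => ?_⟩
    obtain ⟨k, hk, hxk⟩ := Set.mem_iUnion₂.1 hmem
    exact Nat.find_min hex (hj ▸ hk) ⟨k, rfl, hxk⟩

lemma hasSum_ind {α ι M : Type*} [AddCommMonoid M] [TopologicalSpace M] {E : ι → Set α}
    (hE : ∀ i j x, x ∈ E i → x ∈ E j → i = j) (φ : ι → α → M) {i : ι} {x : α} (hx : x ∈ E i) :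
    HasSum (fun b => (E b).indicator (φ b) x) (φ i x) := by
  have h := hasSum_single (f := fun b => (E b).indicator (φ b) x) i
    (fun b hb => Set.indicator_of_notMem (fun h => hb (hE _ _ _ h hx)) _)
  simpa [hx] using h

/-- For disjoint sets at most one term of a sum of indicators is nonzero. -/
lemma exists_hasSum_ind {α ι M : Type*} [AddCommMonoid M] [TopologicalSpace M] {E : ι → Set α}
    (hE : ∀ i j x, x ∈ E i → x ∈ E j → i = j) (φ : ι → α → M) (x : α) :
    HasSum (fun b => (E b).indicator (φ b) x) 0 ∨ ∃ i, x ∈ E i ∧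
      HasSum (fun b => (E b).indicator (φ b) x) (φ i x) := by
  by_cases h : ∃ i, x ∈ E i
  · obtain ⟨i, hi⟩ := h
    exact Or.inr ⟨i, hi, hasSum_ind hE φ hi⟩
  · push Not at h
    left
    simp only [Set.indicator_of_notMem (h _)]
    exact hasSum_zero

variable {V : Type} [NormedAddCommGroup V] [InnerProductSpace ℝ V] [FiniteDimensional ℝ V]
  [MeasurableSpace V] [BorelSpace V]

/-- Vitali–Whitney covering of an open set of finite measure by enlarged disjoint balls. -/
lemma whitney [Nontrivial V] {Ω : Set V} (hΩ : IsOpen Ω) (hfin : volume Ω ≠ ∞) :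
    ∃ (u : Set V) (r : V → ℝ), u.Countable ∧ (∀ b ∈ u, 0 < r b) ∧
      (u.PairwiseDisjoint fun b => closedBall b (r b)) ∧
      (∀ x ∈ Ω, ∃ b ∈ u, x ∈ closedBall b (5 * r b)) ∧
      (∀ b ∈ u, closedBall b (5 * r b) ⊆ Ω) ∧
      (∀ b ∈ u, ∀ x ∉ Ω, 10 * r b ≤ dist x b) ∧
      (∀ b ∈ u, ∃ z ∉ Ω, closedBall b (5 * r b) ⊆ closedBall z (16 * r b)) := by
  have hne : (Ωᶜ : Set V).Nonempty := by
    rw [Set.nonempty_compl]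
    rintro rfl
    exact hfin (measure_univ_of_isAddLeftInvariant volume)
  set r : V → ℝ := fun x => infDist x Ωᶜ / 10 with hr
  have hrpos : ∀ x ∈ Ω, 0 < r x := fun x hx => by
    have := (hΩ.isClosed_compl.notMem_iff_infDist_pos hne (x := x)).1 (by simpa using hx)
    simp only [hr]; positivity
  have h10 : ∀ b : V, ∀ x ∉ Ω, 10 * r b ≤ dist x b := fun b x hx => by
    have := infDist_le_dist_of_mem (x := b) (s := Ωᶜ) (y := x) hx
    rw [dist_comm] at this
    simp only [hr]; linarith
  have hsub : ∀ b ∈ Ω, closedBall b (5 * r b) ⊆ Ω := fun b hb x hx => by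
    by_contra hc
    have h1 := h10 b x hc
    have h2 := hrpos b hb
    rw [mem_closedBall] at hx
    linarith
  -- the radii are bounded because the balls have bounded measure
  obtain ⟨R, hR⟩ : ∃ R : ℝ, ∀ x ∈ Ω, r x ≤ R := by
    have hb : volume (ball (0 : V) 1) ≠ 0 := (measure_ball_pos volume _ one_pos).ne'
    have hd : finrank ℝ V ≠ 0 := finrank_pos.ne'
    set M := volume Ω / volume (ball (0 : V) 1) with hM
    have hMf : M ≠ ∞ := ENNReal.div_ne_top hfin hb
    refine ⟨1 + M.toReal, fun x hx => ?_⟩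
    by_contra! hc
    have h0 := hrpos x hx
    have h1 : volume (closedBall x (r x)) ≤ volume Ω := measure_mono
      ((closedBall_subset_closedBall (by linarith)).trans (hsub x hx))
    rw [Measure.addHaar_closedBall _ _ h0.le, ← ENNReal.le_div_iff_mul_le (Or.inl hb)
      (Or.inl measure_ball_lt_top.ne), ENNReal.ofReal_le_iff_le_toReal hMf] at h1
    have h2 : r x ≤ r x ^ finrank ℝ V :=
      le_self_pow₀ (by linarith [ENNReal.toReal_nonneg (a := M)]) hd
    linarith
  obtain ⟨u, huΩ, hdis, hcov⟩ := Vitali.exists_disjoint_subfamily_covering_enlargement_closedBall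
    Ω id r R hR 5 (by norm_num)
  refine ⟨u, r, ?_, fun b hb => hrpos b (huΩ hb), hdis, ?_, fun b hb => hsub b (huΩ hb),
    fun b _ => h10 b, ?_⟩
  · exact hdis.countable_of_nonempty_interior fun x hx =>
      (nonempty_ball.2 (hrpos x (huΩ hx))).mono ball_subset_interior_closedBall
  · intro x hx
    obtain ⟨b, hb, hs⟩ := hcov x hx
    exact ⟨b, hb, hs (mem_closedBall_self (hrpos x hx).le)⟩
  · intro b hb
    have h0 := hrpos b (huΩ hb)
    obtain ⟨z, hz, hzd⟩ := (infDist_lt_iff hne (x := b) (r := 11 * r b)).1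
      (by simp only [hr] at h0 ⊢; linarith)
    refine ⟨z, hz, closedBall_subset_closedBall' ?_⟩
    linarith

variable {E : Type} [NormedAddCommGroup E] [NormedSpace ℝ E] [CompleteSpace E]

/-- Bounded strongly measurable functions. -/
def BM (f : V → E) : Prop := StronglyMeasurable f ∧ ∃ M : ℝ, ∀ x, ‖f x‖ ≤ M

/-- Calderón–Zygmund decomposition of `f` at height `l`: a good part `g` and mean-zero pieces
`φ b` living near the balls `closedBall (c b) (r b)`, which are far from `{maxf f ≤ l}`. -/
lemma cz_decomp [Nontrivial V] {f : V → E} (hf : BM f) (hi : Integrable f) {l : ℝ≥0∞}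
    (hl : l ≠ 0) (hl' : l ≠ ∞) :
    ∃ (ι : Type) (_ : Countable ι) (c : ι → V) (r : ι → ℝ) (φ : ι → V → E) (g : V → E),
      BM g ∧ (∫⁻ x, ‖g x‖ₑ ≤ 2 * ∫⁻ x, ‖f x‖ₑ) ∧
      (∀ᵐ x, ‖g x‖ₑ ≤ (16 ^ finrank ℝ V + 1) * l) ∧
      (∀ b, 0 < r b ∧ StronglyMeasurable (φ b) ∧ Integrable (φ b) ∧ ∫ x, φ b x = 0 ∧
        ∀ x ∉ closedBall (c b) (5 * r b), φ b x = 0) ∧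
      (∀ y, f y = g y + ∑' b, φ b y) ∧
      (∃ M : ℝ≥0∞, M ≠ ∞ ∧ ∀ y, ∑' b, ‖φ b y‖ₑ ≤ M) ∧
      (∑' b, ∫⁻ y, ‖φ b y‖ₑ ≤ 2 * ∫⁻ x, ‖f x‖ₑ) ∧
      ∀ x, maxf (fun y => ‖f y‖ₑ) x ≤ l → ∀ b, 10 * r b ≤ dist x (c b) := by
  set d := finrank ℝ V with hd
  set Nf : V → ℝ≥0∞ := fun y => ‖f y‖ₑ with hNf
  have hNm : Measurable Nf := hf.1.enorm
  have hNi : ∫⁻ x, Nf x ≠ ∞ := hi.2.ne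
  set Ω : Set V := {x | l < maxf Nf x} with hΩ
  have hΩo : IsOpen Ω := isOpen_lt_maxf Nf l
  have hΩfin : volume Ω ≠ ∞ := by
    have h1 : l * volume Ω < ∞ := (maxf_weak Nf l).trans_lt (by finiteness)
    exact (ENNReal.lt_top_of_mul_ne_top_right h1.ne hl).ne
  obtain ⟨u, r, hcnt, hr, hdis, hcov, hsub, hfar, hnear⟩ := whitney hΩo hΩfin
  have : Countable u := hcnt.to_subtype
  obtain ⟨Q, hQm, hQs, hQd, hQc⟩ := exists_partition
    (fun b : u => closedBall (b : V) (5 * r b)) (fun _ => isClosed_closedBall.measurableSet)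
  set B : u → Set V := fun b => closedBall (b : V) (r b) with hB
  have hBm : ∀ b, MeasurableSet (B b) := fun _ => isClosed_closedBall.measurableSet
  have hBd : ∀ i j x, x ∈ B i → x ∈ B j → i = j := fun i j x hi hj => by
    by_contra hne
    exact Set.disjoint_left.1 (hdis i.2 j.2 fun h => hne (Subtype.ext h)) hi hj
  have hB0 : ∀ b, volume (B b) ≠ 0 := fun b => vol_cb_pos _ (hr b b.2)
  have hBf : ∀ b, volume (B b) ≠ ∞ := fun b => vol_cb_fin _ _
  -- `a b` is the integral of `f` over the cell `Q b` divided by the volume of `B b`, so that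
  -- `f` on `Q b` minus `a b` on `B b` has mean zero; the balls `B b` are disjoint.
  set a : u → E := fun b => (volume (B b)).toReal⁻¹ • ∫ y in Q b, f y with ha
  have haV : ∀ b, ‖a b‖ₑ * volume (B b) ≤ ∫⁻ y in Q b, Nf y := fun b => by
    simp only [ha, enorm_smul]
    rw [enorm_inv (ENNReal.toReal_ne_zero.2 ⟨hB0 b, hBf b⟩), Real.enorm_eq_ofReal
      ENNReal.toReal_nonneg, ENNReal.ofReal_toReal (hBf b), mul_right_comm,
      ENNReal.inv_mul_cancel (hB0 b) (hBf b), one_mul]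
    exact enorm_integral_le_lintegral_enorm _
  -- An enlarged ball, centred off the exceptional set, contains `Q b`; there the averages of
  -- `f` are at most `l`.
  have hal : ∀ b, ‖a b‖ₑ ≤ 16 ^ d * l := fun b => by
    obtain ⟨z, hz, hzs⟩ := hnear b b.2
    have hrb := hr b b.2
    have h1 : ‖a b‖ₑ * volume (B b) ≤ 16 ^ d * l * volume (B b) := by
      calc _ ≤ ∫⁻ y in closedBall z (16 * r b), Nf y :=
            (haV b).trans (lintegral_mono_set ((hQs b).trans hzs))
        _ ≤ maxf Nf z * volume (closedBall z (16 * r b)) :=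
            lintegral_cb_le_maxf _ _ (by positivity)
        _ ≤ l * volume (closedBall z (16 * r b)) := by
            gcongr
            exact not_lt.1 hz
        _ = _ := by
            simp only [hB]
            rw [Measure.addHaar_closedBall _ _ (by positivity),
              Measure.addHaar_closedBall _ _ hrb.le, mul_pow, ENNReal.ofReal_mul (by positivity),
              ENNReal.ofReal_pow (by norm_num), ← hd]
            simp only [ENNReal.ofReal_ofNat]
            ring
    exact (ENNReal.mul_le_mul_iff_left (hB0 b) (hBf b)).1 h1
  set φ : u → V → E := fun b y => (Q b).indicator f y - (B b).indicator (fun _ => a b) y with hφ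
  have hh : ∀ y, HasSum (fun b => (B b).indicator (fun _ => a b) y)
      (∑' b, (B b).indicator (fun _ => a b) y) ∧
      ‖∑' b, (B b).indicator (fun _ => a b) y‖ₑ ≤ 16 ^ d * l := fun y => by
    rcases exists_hasSum_ind hBd (fun b _ => a b) y with h | ⟨i, _, h⟩
    · rw [h.tsum_eq]; exact ⟨h, by simp⟩
    · rw [h.tsum_eq]; exact ⟨h, hal i⟩
  set h : V → E := fun y => ∑' b, (B b).indicator (fun _ => a b) y with hhdef
  have hQsum : ∀ y, HasSum (fun b => (Q b).indicator f y) (Ω.indicator f y) := fun y => by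
    rcases exists_hasSum_ind hQd (fun _ => f) y with h | ⟨i, hi, h⟩
    · by_cases hy : y ∈ Ω
      · obtain ⟨b, hb, hyb⟩ := hcov y hy
        obtain ⟨j, hj⟩ := hQc ⟨b, hb⟩ y hyb
        rw [Set.indicator_of_mem hy]
        exact hasSum_ind hQd (fun _ => f) hj
      · rwa [Set.indicator_of_notMem hy]
    · rwa [Set.indicator_of_mem (hsub i i.2 (hQs i hi))]
  have hQe : ∀ y, ∑' b, ‖(Q b).indicator f y‖ₑ ≤ Nf y := fun y => by
    simp only [enorm_indicator_eq_indicator_enorm]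
    rcases exists_hasSum_ind hQd (fun _ => Nf) y with h | ⟨i, hi, h⟩ <;> rw [h.tsum_eq]
    exact bot_le
  have hBe : ∀ y, ∑' b, ‖(B b).indicator (fun _ => a b) y‖ₑ ≤ 16 ^ d * l := fun y => by
    simp only [enorm_indicator_eq_indicator_enorm]
    rcases exists_hasSum_ind hBd (fun b _ => ‖a b‖ₑ) y with h | ⟨i, hi, h⟩ <;> rw [h.tsum_eq]
    · exact bot_le
    · exact hal i
  have hBs : ∀ b, StronglyMeasurable ((B b).indicator (fun _ : V => a b)) := fun b =>
    stronglyMeasurable_const.indicator (hBm b)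
  have hQs' : ∀ b, StronglyMeasurable ((Q b).indicator f) := fun b => hf.1.indicator (hQm b)
  have hhs : StronglyMeasurable h := by
    refine stronglyMeasurable_of_tendsto (atTop : Filter (Finset u))
      (f := fun s y => ∑ b ∈ s, (B b).indicator (fun _ => a b) y) (fun s => ?_) ?_
    · exact Finset.stronglyMeasurable_fun_sum s fun b _ => hBs b
    · rw [tendsto_pi_nhds]
      exact fun y => (hh y).1
  have hQ1 : ∑' b, ∫⁻ y, ‖(Q b).indicator f y‖ₑ ≤ ∫⁻ x, Nf x := by
    rw [← lintegral_tsum fun b => (hQs' b).enorm.aemeasurable]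
    exact lintegral_mono hQe
  have hB1 : ∑' b, ∫⁻ y, ‖(B b).indicator (fun _ => a b) y‖ₑ ≤ ∫⁻ x, Nf x := by
    refine le_trans (ENNReal.tsum_le_tsum fun b => ?_) hQ1
    simp only [enorm_indicator_eq_indicator_enorm]
    rw [lintegral_indicator (hBm b), setLIntegral_const, lintegral_indicator (hQm b)]
    exact haV b
  have hh1 : ∫⁻ y, ‖h y‖ₑ ≤ ∫⁻ x, Nf x := by
    refine le_trans ?_ hB1
    rw [← lintegral_tsum fun b => (hBs b).enorm.aemeasurable]
    exact lintegral_mono fun y => enorm_tsum_le_tsum_enorm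
  have hΩm : MeasurableSet Ω := hΩo.measurableSet
  obtain ⟨M, hM⟩ := hf.2
  have hMe : ∀ y, Nf y ≤ ENNReal.ofReal M := fun y => by
    rw [hNf]; simp only; rw [← ofReal_norm]; exact ENNReal.ofReal_le_ofReal (hM y)
  have hφe : ∀ b y, ‖φ b y‖ₑ ≤ ‖(Q b).indicator f y‖ₑ + ‖(B b).indicator (fun _ => a b) y‖ₑ :=
    fun b y => enorm_sub_le
  have hLt : (16 : ℝ≥0∞) ^ d * l ≠ ∞ := by finiteness
  refine ⟨u, this, (↑), fun b => r b, φ, fun y => Ωᶜ.indicator f y + h y, ⟨?_, ?_⟩, ?_, ?_, ?_, ?_,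
    ⟨ENNReal.ofReal M + 16 ^ d * l, by finiteness, fun y => ?_⟩, ?_, ?_⟩
  · exact (hf.1.indicator hΩm.compl).add hhs
  · refine ⟨M + (16 ^ d * l).toReal, fun y => (norm_add_le _ _).trans (add_le_add ?_ ?_)⟩
    · exact (norm_indicator_le_norm_self _ _).trans (hM y)
    · rw [← toReal_enorm]
      exact ENNReal.toReal_mono hLt (hh y).2
  · calc _ ≤ ∫⁻ y, (Nf y + ‖h y‖ₑ) := by
          refine lintegral_mono fun y => (enorm_add_le _ _).trans ?_
          gcongr
          exact enorm_indicator_le_enorm_self _ _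
      _ ≤ _ := by
          rw [lintegral_add_left hNm, two_mul]
          gcongr
  · filter_upwards [le_maxf_ae hNm hNi] with y hy
    refine (enorm_add_le _ _).trans ?_
    rw [add_mul, one_mul, add_comm]
    refine add_le_add (hh y).2 ?_
    by_cases hyΩ : y ∈ Ω
    · simp [hyΩ]
    · exact (enorm_indicator_le_enorm_self _ _).trans (hy.trans (not_lt.1 hyΩ))
  · intro b
    have hrb := hr b b.2
    have hBi : Integrable ((B b).indicator (fun _ : V => a b)) :=
      (integrable_indicator_iff (hBm b)).2 (integrableOn_const (hBf b))
    refine ⟨hrb, (hQs' b).sub (hBs b), (hi.indicator (hQm b)).sub hBi, ?_, fun x hx => ?_⟩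
    · simp only [hφ]
      rw [integral_sub (hi.indicator (hQm b)) hBi, integral_indicator (hQm b),
        integral_indicator (hBm b), setIntegral_const, Measure.real, ha]
      simp only
      rw [smul_smul, mul_inv_cancel₀ (ENNReal.toReal_ne_zero.2 ⟨hB0 b, hBf b⟩), one_smul, sub_self]
    · have h1 : x ∉ Q b := fun h => hx (hQs b h)
      have h2 : x ∉ B b := fun h => hx (closedBall_subset_closedBall (by linarith) h)
      simp [hφ, h1, h2]
  · intro y
    have h3 := ((hQsum y).sub (hh y).1).tsum_eq
    simp only [hφ, h3, hhdef]
    have h4 := congrFun (Set.indicator_compl_add_self Ω f) y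
    simp only [Pi.add_apply] at h4
    rw [← h4]
    abel
  · refine (ENNReal.tsum_le_tsum fun b => hφe b y).trans ?_
    rw [ENNReal.tsum_add]
    exact add_le_add ((hQe y).trans (hMe y)) (hBe y)
  · calc _ ≤ ∑' b, ((∫⁻ y, ‖(Q b).indicator f y‖ₑ) +
          ∫⁻ y, ‖(B b).indicator (fun _ => a b) y‖ₑ) := by
          refine ENNReal.tsum_le_tsum fun b => ?_
          rw [← lintegral_add_left (hQs' b).enorm]
          exact lintegral_mono (hφe b)
      _ ≤ _ := by
          rw [ENNReal.tsum_add, two_mul]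
          exact add_le_add hQ1 hB1
  · exact fun x hx b => hfar b b.2 x (not_lt.2 hx)

end LCR

namespace LCR

set_option linter.unusedSectionVars false

open Filter Topology Module Metric

/-! ### The weak type (1,1) bound for Calderón–Zygmund operators -/

section
variable {V : Type} [NormedAddCommGroup V] [InnerProductSpace ℝ V] [FiniteDimensional ℝ V]
  [MeasurableSpace V] [BorelSpace V]

/-- Dyadic annuli bound the tail of the kernel that enters the Hörmander condition. -/
lemma tail_le_sum {R : ℝ} (hR : 0 < R) (z : V) (hz : R ≤ ‖z‖) :
    ENNReal.ofReal (R / ‖z‖ ^ (finrank ℝ V + 1)) ≤ ∑' m : ℕ,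
      (closedBall (0 : V) (2 ^ (m + 1) * R)).indicator (fun _ =>
      ENNReal.ofReal (R / (2 ^ m * R) ^ (finrank ℝ V + 1))) z := by
  obtain ⟨m, hm, hmin⟩ : ∃ m : ℕ, ‖z‖ ≤ 2 ^ (m + 1) * R ∧ 2 ^ m * R ≤ ‖z‖ := by
    have hex : ∃ m : ℕ, ‖z‖ ≤ 2 ^ (m + 1) * R := by
      obtain ⟨m, hm⟩ := pow_unbounded_of_one_lt (‖z‖ / R) (one_lt_two)
      refine ⟨m, ?_⟩
      rw [div_lt_iff₀ hR] at hm
      rw [pow_succ]; nlinarith [pow_pos (two_pos : (0 : ℝ) < 2) m]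
    classical
    refine ⟨Nat.find hex, Nat.find_spec hex, ?_⟩
    rcases hfind : Nat.find hex with _ | k
    · simpa using hz
    · exact (not_le.1 (Nat.find_min hex (m := k) (by omega))).le
  refine le_trans ?_ (ENNReal.le_tsum m)
  rw [Set.indicator_of_mem (by simpa using hm)]
  gcongr

/-- The Hörmander tail is integrable, with a bound independent of `R`. -/
lemma lintegral_tail_le {R : ℝ} (hR : 0 < R) :
    ∫⁻ z in {z : V | R ≤ ‖z‖}, ENNReal.ofReal (R / ‖z‖ ^ (finrank ℝ V + 1)) ≤ cPhi V := by
  set d := finrank ℝ V with hd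
  set c : ℕ → ℝ := fun m => R / (2 ^ m * R) ^ (d + 1) with hc
  have hms : MeasurableSet {z : V | R ≤ ‖z‖} := measurableSet_le measurable_const measurable_norm
  calc _ ≤ ∫⁻ z, ∑' m : ℕ, (closedBall (0 : V) (2 ^ (m + 1) * R)).indicator (fun _ =>
          ENNReal.ofReal (c m)) z :=
        (setLIntegral_mono' hms fun z hz => tail_le_sum hR z hz).trans
          (setLIntegral_le_lintegral _ _)
    _ = ∑' m : ℕ, ENNReal.ofReal (c m) * volume (closedBall (0 : V) (2 ^ (m + 1) * R)) := by
        rw [lintegral_tsum fun m => (measurable_const.indicator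
          isClosed_closedBall.measurableSet).aemeasurable]
        refine tsum_congr fun m => ?_
        rw [lintegral_indicator isClosed_closedBall.measurableSet, setLIntegral_const]
    _ = ∑' m : ℕ, ENNReal.ofReal ((1 / 2) ^ m) * (ENNReal.ofReal (2 ^ d) *
          volume (ball (0 : V) 1)) := by
        refine tsum_congr fun m => ?_
        rw [Measure.addHaar_closedBall _ _ (by positivity), ← mul_assoc, ← mul_assoc,
          ← ENNReal.ofReal_mul (by positivity), ← ENNReal.ofReal_mul (by positivity)]
        congr 2
        simp only [hc, ← hd]
        rw [one_div, inv_pow, mul_pow, mul_pow, pow_succ 2 m, mul_pow, pow_succ R, pow_succ _ d]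
        field_simp
    _ ≤ _ := by
        rw [ENNReal.tsum_mul_right, ← ENNReal.ofReal_tsum_of_nonneg (fun m => by positivity)
          (summable_geometric_of_lt_one (by norm_num) (by norm_num)),
          tsum_geometric_of_lt_one (by norm_num) (by norm_num), cPhi, ← mul_assoc]
        refine mul_le_mul_left ?_ _
        rw [show (4 / 3 : ℝ≥0∞) = ENNReal.ofReal (4 / 3) by
          rw [ENNReal.ofReal_div_of_pos (by norm_num)]; simp,
          ← ENNReal.ofReal_mul (by positivity), ← ENNReal.ofReal_mul (by positivity), ← hd]
        refine ENNReal.ofReal_le_ofReal ?_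
        rw [pow_add]
        have : (0 : ℝ) < 2 ^ d := by positivity
        norm_num
        nlinarith

variable {E F : Type} [NormedAddCommGroup E] [InnerProductSpace ℂ E] [CompleteSpace E]
  [NormedAddCommGroup F] [InnerProductSpace ℂ F] [CompleteSpace F]

/-- Convolution with an operator-valued kernel. -/
noncomputable def op (K : V → E →L[ℂ] F) (f : V → E) (x : V) : F := ∫ y, K (x - y) (f y)

/-- Qualitatively nice kernels with quantitative Hörmander smoothness and `L²` bound `A`. -/
structure CZ (A : ℝ) (K : V → E →L[ℂ] F) : Prop where
  cont : Continuous K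
  int : Integrable K
  hor : ∀ x y : V, 2 * ‖y‖ ≤ ‖x‖ → ‖K (x - y) - K x‖ * ‖x‖ ^ (finrank ℝ V + 1) ≤ A * ‖y‖
  l2 : ∀ f : V → E, BM f → Integrable f →
    ∫⁻ x, ‖op K f x‖ₑ ^ 2 ≤ ENNReal.ofReal A ^ 2 * ∫⁻ x, ‖f x‖ₑ ^ 2

lemma sm_kern {K : V → E →L[ℂ] F} (hK : Continuous K) {f : V → E} (hf : StronglyMeasurable f) :
    StronglyMeasurable fun z : V × V => K (z.1 - z.2) (f z.2) := by
  have h1 : StronglyMeasurable fun z : V × V => K (z.1 - z.2) :=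
    (hK.comp (continuous_fst.sub continuous_snd)).stronglyMeasurable
  have h2 : StronglyMeasurable fun z : V × V => f z.2 := hf.comp_measurable measurable_snd
  exact (continuous_fst.clm_apply continuous_snd :
    Continuous fun q : (E →L[ℂ] F) × E => q.1 q.2).comp_stronglyMeasurable (h1.prodMk h2)

lemma sm_kern' {K : V → E →L[ℂ] F} (hK : Continuous K) {f : V → E} (hf : StronglyMeasurable f)
    (x : V) : StronglyMeasurable fun y : V => K (x - y) (f y) :=
  (sm_kern hK hf).comp_measurable measurable_prodMk_left

lemma sm_op {K : V → E →L[ℂ] F} (hK : Continuous K) {f : V → E} (hf : StronglyMeasurable f) :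
    StronglyMeasurable (op K f) := (sm_kern hK hf).integral_prod_right'

lemma int_kern {K : V → E →L[ℂ] F} (hK : Continuous K) (hKi : Integrable K) {f : V → E}
    (hf : BM f) (x : V) : Integrable fun y : V => K (x - y) (f y) := by
  obtain ⟨M, hM⟩ := hf.2
  refine Integrable.mono' ((hKi.comp_sub_left x).norm.mul_const M)
    (sm_kern' hK hf.1 x).aestronglyMeasurable (ae_of_all _ fun y => ?_)
  exact ((K (x - y)).le_opNorm _).trans (by gcongr; exact hM y)

lemma op_add {K : V → E →L[ℂ] F} (hK : Continuous K) (hKi : Integrable K) {f g : V → E}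
    (hf : BM f) (hg : BM g) (x : V) : op K (fun y => f y + g y) x = op K f x + op K g x := by
  unfold op
  simp only [map_add]
  exact integral_add (int_kern hK hKi hf x) (int_kern hK hKi hg x)

lemma lintegral_lt_of_weak {α : Type*} [MeasurableSpace α] {μ : Measure α} {G : α → ℝ≥0∞}
    (hG : Measurable G) (l : ℝ≥0∞) : l * μ {x | l < G x} ≤ ∫⁻ x, G x ∂μ :=
  le_trans (mul_le_mul_right (measure_mono fun x (hx : l < G x) => hx.le) l) (mul_meas_ge_le_lintegral hG l)

/-- A mean-zero piece supported near `c` produces a small tail away from `c`. -/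
lemma cz_piece {A : ℝ} (hA : 0 ≤ A) {K : V → E →L[ℂ] F} (hK : CZ A K) {c : V} {r : ℝ} (hr : 0 < r)
    {φ : V → E} (hφ : StronglyMeasurable φ) (hi : Integrable φ) (h0 : ∫ x, φ x = 0)
    (hsupp : ∀ x ∉ closedBall c (5 * r), φ x = 0) :
    ∫⁻ x in {x | 10 * r ≤ dist x c}, ‖op K φ x‖ₑ ≤
      ENNReal.ofReal A * cPhi V * ∫⁻ y, ‖φ y‖ₑ := by
  set S := {x : V | 10 * r ≤ dist x c} with hS
  have hSm : MeasurableSet S := measurableSet_le measurable_const (by fun_prop)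
  have hcm : Measurable fun z : V × V => ‖K (z.1 - z.2) - K (z.1 - c)‖ₑ * ‖φ z.2‖ₑ := by
    have := hK.cont
    refine Measurable.mul ?_ (hφ.enorm.comp measurable_snd)
    exact Continuous.measurable (by fun_prop)
  have hstep : ∀ x, ‖op K φ x‖ₑ ≤ ∫⁻ y, ‖K (x - y) - K (x - c)‖ₑ * ‖φ y‖ₑ := fun x => by
    have h1 : ∫ y, K (x - c) (φ y) = 0 := by
      rw [(K (x - c)).integral_comp_comm hi, h0, map_zero]
    by_cases hinteg : Integrable fun y => K (x - y) (φ y)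
    · have h2 : op K φ x = ∫ y, (K (x - y) - K (x - c)) (φ y) := by
        simp only [ContinuousLinearMap.sub_apply]
        rw [integral_sub hinteg ((K (x - c)).integrable_comp hi), h1, sub_zero]
        rfl
      rw [h2]
      refine (enorm_integral_le_lintegral_enorm _).trans (lintegral_mono fun y => ?_)
      exact ContinuousLinearMap.le_opENorm _ _
    · rw [op, integral_undef hinteg]; simp
  have hinner : ∀ y, ∫⁻ x in S, ‖K (x - y) - K (x - c)‖ₑ * ‖φ y‖ₑ ≤
      ENNReal.ofReal A * cPhi V * ‖φ y‖ₑ := fun y => by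
    by_cases hy : y ∈ closedBall c (5 * r)
    swap
    · simp [hsupp y hy]
    rw [lintegral_mul_const']
    swap
    · simp
    gcongr
    have hy' : ‖y - c‖ ≤ 5 * r := by rwa [mem_closedBall, dist_eq_norm] at hy
    calc ∫⁻ x in S, ‖K (x - y) - K (x - c)‖ₑ
        ≤ ∫⁻ x in S, ENNReal.ofReal A *
          ENNReal.ofReal (10 * r / ‖x - c‖ ^ (finrank ℝ V + 1)) := by
          refine setLIntegral_mono' hSm fun x (hx : 10 * r ≤ dist x c) => ?_
          rw [dist_eq_norm] at hx
          have h3 := hK.hor (x - c) (y - c) (by linarith)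
          rw [sub_sub_sub_cancel_right] at h3
          have h4 : 0 < ‖x - c‖ := by linarith
          rw [← ENNReal.ofReal_mul hA, ← ofReal_norm]
          refine ENNReal.ofReal_le_ofReal ?_
          rw [← mul_div_assoc, le_div_iff₀ (by positivity)]
          exact h3.trans (by gcongr; linarith)
      _ = ENNReal.ofReal A * ∫⁻ x in S, ENNReal.ofReal (10 * r / ‖x - c‖ ^ (finrank ℝ V + 1)) :=
          lintegral_const_mul' _ _ ENNReal.ofReal_ne_top
      _ ≤ _ := by
          gcongr
          refine le_of_eq_of_le ?_ (lintegral_tail_le (V := V) (R := 10 * r) (by positivity))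
          rw [← lintegral_indicator hSm, ← lintegral_indicator
            (measurableSet_le measurable_const measurable_norm),
            ← lintegral_sub_right_eq_self ({z : V | 10 * r ≤ ‖z‖}.indicator _) c]
          refine lintegral_congr fun x => ?_
          simp [Set.indicator_apply, hS, dist_eq_norm]
  calc _ ≤ ∫⁻ x in S, ∫⁻ y, ‖K (x - y) - K (x - c)‖ₑ * ‖φ y‖ₑ := lintegral_mono hstep
    _ = ∫⁻ y, ∫⁻ x in S, ‖K (x - y) - K (x - c)‖ₑ * ‖φ y‖ₑ :=
        lintegral_lintegral_swap hcm.aemeasurable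
    _ ≤ ∫⁻ y, ENNReal.ofReal A * cPhi V * ‖φ y‖ₑ := lintegral_mono hinner
    _ = _ := lintegral_const_mul _ hφ.enorm

/-- The weak type constant. -/
noncomputable def cW (V : Type) [NormedAddCommGroup V] [InnerProductSpace ℝ V]
    [FiniteDimensional ℝ V] [MeasurableSpace V] [BorelSpace V] (A : ℝ) : ℝ≥0∞ :=
  5 ^ finrank ℝ V + 4 * (ENNReal.ofReal A * cPhi V) +
    8 * ENNReal.ofReal A ^ 2 * (16 ^ finrank ℝ V + 1)

lemma cW_ne_top (A : ℝ) : cW V A ≠ ∞ := by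
  have := cPhi_ne_top (V := V)
  unfold cW
  finiteness

/-- The weak type (1,1) bound for Calderón–Zygmund kernels. The good part is controlled by the
`L²` bound and Chebyshev's inequality, the bad part off the exceptional set by `cz_piece`, and
the exceptional set by `maxf_weak`. -/
theorem weak11 [Nontrivial V] {A : ℝ} (hA : 0 ≤ A) {K : V → E →L[ℂ] F} (hK : CZ A K)
    {f : V → E} (hf : BM f) (hi : Integrable f) {l : ℝ≥0∞} (hl : l ≠ 0) (hl' : l ≠ ∞) :
    l * volume {x | l < ‖op K f x‖ₑ} ≤ cW V A * ∫⁻ x, ‖f x‖ₑ := by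
  obtain ⟨ι, _, c, r, φ, g, hg, hg1, hgl, hφ, hdec, ⟨M, hM, hφM⟩, hφ1, hfar⟩ :=
    cz_decomp hf hi hl hl'
  set I := ∫⁻ x, ‖f x‖ₑ with hI
  set Ω : Set V := {x | l < maxf (fun y => ‖f y‖ₑ) x} with hΩ
  have hΩm : MeasurableSet Ω := (isOpen_lt_maxf _ l).measurableSet
  have hbs : ∀ b, StronglyMeasurable (op K (φ b)) := fun b => sm_op hK.cont (hφ b).2.1
  -- the bad pieces sum absolutely, so `op K` may be applied term by term
  have hopdec : ∀ x, ‖op K f x‖ₑ ≤ ‖op K g x‖ₑ + ∑' b, ‖op K (φ b) x‖ₑ := fun x => by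
    have h1 : ∀ y, Summable fun b => φ b y := fun y => by
      refine Summable.of_enorm (ne_top_of_le_ne_top hM (hφM y))
    have h2 : ∑' b, ∫⁻ y, ‖K (x - y) (φ b y)‖ₑ ≠ ∞ := by
      rw [← lintegral_tsum fun b => (sm_kern' hK.cont (hφ b).2.1 x).enorm.aemeasurable]
      have h3 : ∫⁻ y, ∑' b, ‖K (x - y) (φ b y)‖ₑ ≤ (∫⁻ y, ‖K (x - y)‖ₑ) * M := by
        rw [← lintegral_mul_const' _ _ hM]
        refine lintegral_mono fun y => ?_
        calc _ ≤ ∑' b, ‖K (x - y)‖ₑ * ‖φ b y‖ₑ :=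
              ENNReal.tsum_le_tsum fun b => ContinuousLinearMap.le_opENorm _ _
          _ ≤ _ := by rw [ENNReal.tsum_mul_left]; gcongr; exact hφM y
      have h4 : ∫⁻ y, ‖K (x - y)‖ₑ ≠ ∞ := (hK.int.comp_sub_left x).2.ne
      exact ne_top_of_le_ne_top (ENNReal.mul_ne_top h4 hM) h3
    have h5 := integral_tsum (fun b => (sm_kern' hK.cont (hφ b).2.1 x).aestronglyMeasurable) h2
    have h6 : op K f x = op K g x + ∑' b, op K (φ b) x := by
      have h7 : ∀ y, K (x - y) (f y) - K (x - y) (g y) = ∑' b, K (x - y) (φ b y) := fun y => by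
        rw [hdec y, map_add, (K (x - y)).map_tsum (h1 y)]
        abel
      have h8 : op K f x - op K g x = ∑' b, op K (φ b) x := by
        unfold op
        rw [← h5, ← integral_sub (int_kern hK.cont hK.int hf x) (int_kern hK.cont hK.int hg x)]
        exact integral_congr_ae (ae_of_all _ h7)
      rw [← h8]; abel
    rw [h6]
    exact (enorm_add_le _ _).trans (by gcongr; exact enorm_tsum_le_tsum_enorm)
  -- the bad part off the exceptional set
  have hbad : ∫⁻ x in Ωᶜ, ∑' b, ‖op K (φ b) x‖ₑ ≤ ENNReal.ofReal A * cPhi V * (2 * I) := by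
    rw [lintegral_tsum fun b => (hbs b).enorm.aemeasurable]
    calc _ ≤ ∑' b, ENNReal.ofReal A * cPhi V * ∫⁻ y, ‖φ b y‖ₑ := by
          refine ENNReal.tsum_le_tsum fun b => ?_
          obtain ⟨h1, h2, h3, h4, h5⟩ := hφ b
          refine le_trans (lintegral_mono_set fun x hx => ?_) (cz_piece hA hK h1 h2 h3 h4 h5)
          exact hfar x (not_lt.1 hx) b
      _ ≤ _ := by
          rw [ENNReal.tsum_mul_left]
          gcongr
  have hgi : Integrable g := ⟨hg.1.aestronglyMeasurable, hg1.trans_lt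
    (ENNReal.mul_lt_top (by finiteness) hi.2)⟩
  -- the good part, from the `L²` bound and the pointwise bound for `g`
  have hg2 : ∫⁻ x, ‖op K g x‖ₑ ^ 2 ≤
      ENNReal.ofReal A ^ 2 * ((16 ^ finrank ℝ V + 1) * l * (2 * I)) := by
    refine (hK.l2 g hg hgi).trans ?_
    gcongr
    calc ∫⁻ x, ‖g x‖ₑ ^ 2 ≤ ∫⁻ x, (16 ^ finrank ℝ V + 1) * l * ‖g x‖ₑ := by
          refine lintegral_mono_ae ?_
          filter_upwards [hgl] with x hx
          rw [sq]; gcongr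
      _ ≤ _ := by
          rw [lintegral_const_mul _ hg.1.enorm]
          gcongr
  have hsub : {x | l < ‖op K f x‖ₑ} ⊆ Ω ∪ ({x | l / 2 < Ωᶜ.indicator
      (fun x => ∑' b, ‖op K (φ b) x‖ₑ) x} ∪ {x | (l / 2) ^ 2 < ‖op K g x‖ₑ ^ 2}) := by
    intro x (hx : l < ‖op K f x‖ₑ)
    by_contra hc
    simp only [Set.mem_union, not_or] at hc
    obtain ⟨h1, h2, h3⟩ := hc
    have h2' : Ωᶜ.indicator (fun x => ∑' b, ‖op K (φ b) x‖ₑ) x ≤ l / 2 := not_lt.1 h2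
    rw [Set.indicator_of_mem h1] at h2'
    have h3' : ‖op K g x‖ₑ ^ 2 ≤ (l / 2) ^ 2 := not_lt.1 h3
    have h3'' : ‖op K g x‖ₑ ≤ l / 2 := (ENNReal.pow_le_pow_left_iff (by norm_num)).1 h3'
    refine absurd (hx.trans_le ((hopdec x).trans (add_le_add h3'' h2'))) ?_
    rw [ENNReal.add_halves]
    exact lt_irrefl _
  have hm1 : Measurable fun x => ∑' b, ‖op K (φ b) x‖ₑ :=
    Measurable.ennreal_tsum fun b => (hbs b).enorm
  have hw1 := lintegral_lt_of_weak (μ := (volume : Measure V)) (hm1.indicator hΩm.compl) (l / 2)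
  rw [lintegral_indicator hΩm.compl] at hw1
  have hw2 := lintegral_lt_of_weak (μ := (volume : Measure V))
    ((sm_op hK.cont hg.1).enorm.pow_const 2) ((l / 2) ^ 2)
  have hw1' := hw1.trans hbad
  have hw2' := hw2.trans hg2
  set v1 := volume {x | l / 2 < Ωᶜ.indicator (fun x => ∑' b, ‖op K (φ b) x‖ₑ) x}
  set v2 := volume {x | (l / 2) ^ 2 < ‖op K g x‖ₑ ^ 2}
  have hl2 : l = 2 * (l / 2) := (ENNReal.mul_div_cancel (by norm_num) (by norm_num)).symm
  have hl20 : l / 2 ≠ 0 := by simp [hl]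
  have hl2t : l / 2 ≠ ∞ := ENNReal.div_ne_top hl' (by norm_num)
  have hv2 : l * v2 ≤ 8 * ENNReal.ofReal A ^ 2 * (16 ^ finrank ℝ V + 1) * I := by
    refine (ENNReal.mul_le_mul_iff_right hl20 hl2t).1 ?_
    calc l / 2 * (l * v2) = 2 * ((l / 2) ^ 2 * v2) := by nth_rw 2 [hl2]; ring
      _ ≤ 2 * (ENNReal.ofReal A ^ 2 * ((16 ^ finrank ℝ V + 1) * l * (2 * I))) := by gcongr
      _ = _ := by nth_rw 1 [hl2]; ring
  calc l * volume {x | l < ‖op K f x‖ₑ} ≤ l * (volume Ω + (v1 + v2)) := by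
        gcongr
        exact (measure_mono hsub).trans ((measure_union_le _ _).trans
          (add_le_add le_rfl (measure_union_le _ _)))
    _ = l * volume Ω + (2 * (l / 2 * v1) + l * v2) := by
        rw [mul_add, mul_add, ← mul_assoc 2, ← hl2]
    _ ≤ 5 ^ finrank ℝ V * I + (2 * (ENNReal.ofReal A * cPhi V * (2 * I)) +
        8 * ENNReal.ofReal A ^ 2 * (16 ^ finrank ℝ V + 1) * I) := by
        exact add_le_add (maxf_weak (fun y => ‖f y‖ₑ) l) (add_le_add (mul_le_mul_right hw1' 2) hv2)
    _ = _ := by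
        unfold cW
        ring

end

end LCR

namespace LCR

set_option linter.unusedSectionVars false

open Filter Topology Module Metric

/-! ### Duality and the Calderón–Zygmund theorem in Lorentz spaces -/

section
variable {V : Type} [NormedAddCommGroup V] [InnerProductSpace ℝ V] [FiniteDimensional ℝ V]
  [MeasurableSpace V] [BorelSpace V]
variable {E F : Type} [NormedAddCommGroup E] [InnerProductSpace ℂ E] [CompleteSpace E]
  [NormedAddCommGroup F] [InnerProductSpace ℂ F] [CompleteSpace F]

/-- The kernel of the adjoint operator. -/
noncomputable def adjK (K : V → E →L[ℂ] F) (x : V) : F →L[ℂ] E :=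
  ContinuousLinearMap.adjoint (K (-x))

lemma continuous_adjK {K : V → E →L[ℂ] F} (hK : Continuous K) : Continuous (adjK K) :=
  (ContinuousLinearMap.adjoint (𝕜 := ℂ) (E := E) (F := F)).continuous.comp (hK.comp continuous_neg)

lemma integrable_adjK {K : V → E →L[ℂ] F} (hK : Continuous K) (hi : Integrable K) :
    Integrable (adjK K) :=
  hi.comp_neg.mono (continuous_adjK hK).aestronglyMeasurable
    (ae_of_all _ fun x => by simp [adjK])

/-- Duality between convolution with `K` and with its adjoint kernel. -/
lemma op_adj {K : V → E →L[ℂ] F} (hK : Continuous K) (hi : Integrable K) {f : V → E}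
    (hf : BM f) {g : V → F} (hg : BM g) (hgi : Integrable g) :
    ∫ x, inner ℂ (op K f x) (g x) = ∫ y, inner ℂ (f y) (op (adjK K) g y) := by
  obtain ⟨M, hM⟩ := hf.2
  have hM0 : 0 ≤ M := (norm_nonneg _).trans (hM 0)
  have hsm : StronglyMeasurable fun z : V × V => inner ℂ (K (z.1 - z.2) (f z.2)) (g z.1) :=
    (sm_kern hK hf.1).inner (hg.1.comp_measurable measurable_fst)
  have hinteg : Integrable (fun z : V × V => inner ℂ (K (z.1 - z.2) (f z.2)) (g z.1))
      (volume.prod volume) := by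
    refine ⟨hsm.aestronglyMeasurable, ?_⟩
    rw [hasFiniteIntegral_iff_enorm, lintegral_prod _ hsm.enorm.aemeasurable]
    have hle : ∀ x y, ‖inner ℂ (K (x - y) (f y)) (g x)‖ₑ ≤
        ‖K (x - y)‖ₑ * (ENNReal.ofReal M * ‖g x‖ₑ) := fun x y => by
      rw [← ofReal_norm, ← ofReal_norm (K _), ← ofReal_norm (g x), ← ENNReal.ofReal_mul hM0,
        ← ENNReal.ofReal_mul (norm_nonneg _)]
      refine ENNReal.ofReal_le_ofReal ?_
      rw [← mul_assoc]
      refine (norm_inner_le_norm _ _).trans ?_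
      gcongr
      exact ((K (x - y)).le_opNorm _).trans (by gcongr; exact hM y)
    calc _ ≤ ∫⁻ x, ∫⁻ y, ‖K (x - y)‖ₑ * (ENNReal.ofReal M * ‖g x‖ₑ) :=
          lintegral_mono fun x => lintegral_mono fun y => hle x y
      _ = ∫⁻ x, (∫⁻ y, ‖K y‖ₑ) * ENNReal.ofReal M * ‖g x‖ₑ := by
          refine lintegral_congr fun x => ?_
          rw [lintegral_mul_const' _ _ (by finiteness), lintegral_sub_left_eq_self (fun y => ‖K y‖ₑ) x,
            mul_assoc]
      _ < ∞ := by
          rw [lintegral_const_mul _ hg.1.enorm]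
          exact ENNReal.mul_lt_top (ENNReal.mul_lt_top hi.2 ENNReal.ofReal_lt_top) hgi.2
  calc _ = ∫ x, ∫ y, inner ℂ (K (x - y) (f y)) (g x) := by
        refine integral_congr_ae (ae_of_all _ fun x => ?_)
        have h1 := integral_inner (𝕜 := ℂ) (int_kern hK hi hf x) (g x)
        simp only [op]
        rw [← inner_conj_symm, ← h1, ← integral_conj]
        simp only [inner_conj_symm]
    _ = ∫ y, ∫ x, inner ℂ (K (x - y) (f y)) (g x) := integral_integral_swap hinteg
    _ = _ := by
        refine integral_congr_ae (ae_of_all _ fun y => ?_)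
        have h1 := integral_inner (𝕜 := ℂ)
          (int_kern (continuous_adjK hK) (integrable_adjK hK hi) hg y) (f y)
        simp only [op]
        rw [← h1]
        refine integral_congr_ae (ae_of_all _ fun x => ?_)
        simp only [adjK, neg_sub, ContinuousLinearMap.adjoint_inner_right]

lemma BM_op {K : V → E →L[ℂ] F} (hK : Continuous K) (hi : Integrable K) {f : V → E}
    (hf : BM f) : BM (op K f) := by
  refine ⟨sm_op hK hf.1, ?_⟩
  obtain ⟨M, hM⟩ := hf.2
  refine ⟨∫ y, ‖K y‖ * M, fun x => ?_⟩
  refine (norm_integral_le_of_norm_le ((hi.comp_sub_left x).norm.mul_const M)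
    (ae_of_all _ fun y => ?_)).trans (integral_sub_left_eq_self (fun y => ‖K y‖ * M) volume x).le
  exact ((K (x - y)).le_opNorm _).trans (by gcongr; exact hM y)

/-- The `L¹` bound for convolution with an integrable kernel. -/
lemma lintegral_op_le {K : V → E →L[ℂ] F} (hK : Continuous K) {f : V → E}
    (hf : StronglyMeasurable f) :
    ∫⁻ x, ‖op K f x‖ₑ ≤ (∫⁻ x, ‖K x‖ₑ) * ∫⁻ x, ‖f x‖ₑ := by
  have hm : Measurable fun z : V × V => ‖K (z.1 - z.2)‖ₑ * ‖f z.2‖ₑ :=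
    (Continuous.measurable (by fun_prop)).mul (hf.enorm.comp measurable_snd)
  calc _ ≤ ∫⁻ x, ∫⁻ y, ‖K (x - y)‖ₑ * ‖f y‖ₑ := lintegral_mono fun x =>
        (enorm_integral_le_lintegral_enorm _).trans
          (lintegral_mono fun y => ContinuousLinearMap.le_opENorm _ _)
    _ = ∫⁻ y, ∫⁻ x, ‖K (x - y)‖ₑ * ‖f y‖ₑ := lintegral_lintegral_swap hm.aemeasurable
    _ = ∫⁻ y, (∫⁻ x, ‖K x‖ₑ) * ‖f y‖ₑ := by
        refine lintegral_congr fun y => ?_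
        rw [lintegral_mul_const' _ _ (by finiteness),
          lintegral_sub_right_eq_self (fun y => ‖K y‖ₑ) y]
    _ = _ := lintegral_const_mul _ hf.enorm

lemma lintegral_sq_lt_top {f : V → E} (hf : BM f) (hi : Integrable f) :
    ∫⁻ x, ‖f x‖ₑ ^ 2 < ∞ := by
  obtain ⟨M, hM⟩ := hf.2
  calc ∫⁻ x, ‖f x‖ₑ ^ 2 ≤ ∫⁻ x, ENNReal.ofReal M * ‖f x‖ₑ := by
        refine lintegral_mono fun x => ?_
        rw [sq]
        gcongr
        rw [← ofReal_norm]
        exact ENNReal.ofReal_le_ofReal (hM x)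
    _ < ∞ := by
        rw [lintegral_const_mul _ hf.1.enorm]
        exact ENNReal.mul_lt_top ENNReal.ofReal_lt_top hi.2

/-- Hölder's inequality for the pairing given by the inner product. -/
lemma enorm_integral_inner_le (b b' : ℝ) (hb : b.HolderConjugate b') {f g : V → E}
    (hf : StronglyMeasurable f) (hg : StronglyMeasurable g) :
    ‖∫ x, inner ℂ (f x) (g x)‖ₑ ≤
      (∫⁻ x, ‖f x‖ₑ ^ b) ^ (1 / b) * (∫⁻ x, ‖g x‖ₑ ^ b') ^ (1 / b') := by
  calc _ ≤ ∫⁻ x, ‖f x‖ₑ * ‖g x‖ₑ := by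
        refine (enorm_integral_le_lintegral_enorm _).trans (lintegral_mono fun x => ?_)
        rw [← ofReal_norm, ← ofReal_norm (f x), ← ofReal_norm (g x),
          ← ENNReal.ofReal_mul (norm_nonneg _)]
        exact ENNReal.ofReal_le_ofReal (norm_inner_le_norm _ _)
    _ ≤ _ := ENNReal.lintegral_mul_le_Lp_mul_Lq _ hb hf.enorm.aemeasurable hg.enorm.aemeasurable

/-- The class `CZ` is closed under passing to the adjoint kernel; the `L²` bound follows by
duality. -/
theorem CZ.adj {A : ℝ} {K : V → E →L[ℂ] F} (hK : CZ A K) : CZ A (adjK K) where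
  cont := continuous_adjK hK.cont
  int := integrable_adjK hK.cont hK.int
  hor x y hxy := by
    have := hK.hor (-x) (-y) (by simpa using hxy)
    simp only [norm_neg] at this
    refine le_of_eq_of_le ?_ this
    congr 1
    simp only [adjK]
    rw [← map_sub, LinearIsometryEquiv.norm_map]
    congr 3
    abel
  l2 g hg hgi := by
    have hc := continuous_adjK hK.cont
    have hi := integrable_adjK hK.cont hK.int
    set G := op (adjK K) g with hG
    have hGb : BM G := BM_op hc hi hg
    have hGi : Integrable G := ⟨hGb.1.aestronglyMeasurable,
      (lintegral_op_le hc hg.1).trans_lt (ENNReal.mul_lt_top hi.2 hgi.2)⟩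
    have h1 := op_adj hK.cont hK.int hGb hg hgi
    have h2 : ‖∫ y, inner ℂ (G y) (G y)‖ₑ = ∫⁻ y, ‖G y‖ₑ ^ 2 := by
      have h3 : ∀ y, inner ℂ (G y) (G y) = ((‖G y‖ ^ 2 : ℝ) : ℂ) := fun y => by
        rw [inner_self_eq_norm_sq_to_K]; push_cast; rfl
      simp only [h3]
      rw [integral_complex_ofReal, ← ofReal_norm, Complex.norm_real, Real.norm_of_nonneg
        (integral_nonneg fun y => by positivity), ofReal_integral_eq_lintegral_ofReal]
      · refine lintegral_congr fun y => ?_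
        rw [ENNReal.ofReal_pow (norm_nonneg _), ofReal_norm]
      · refine ⟨(hGb.1.norm.pow 2).aestronglyMeasurable, ?_⟩
        rw [hasFiniteIntegral_iff_enorm]
        simpa using lintegral_sq_lt_top hGb hGi
      · exact ae_of_all _ fun y => by positivity
    rw [← h1] at h2
    have h4 := enorm_integral_inner_le 2 2 (by constructor <;> norm_num) (sm_op hK.cont hGb.1) hg.1
    rw [h2] at h4
    have h5 := hK.l2 G hGb hGi
    have hfin := (lintegral_sq_lt_top hGb hGi).ne
    norm_cast at h4
    rw [← ENNReal.mul_rpow_of_nonneg _ _ (by norm_num)] at h4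
    set I := ∫⁻ y, ‖G y‖ₑ ^ 2
    set J := ∫⁻ y, ‖g y‖ₑ ^ 2
    have h6 : I ^ 2 ≤ ENNReal.ofReal A ^ 2 * J * I := by
      calc I ^ 2 ≤ (((∫⁻ x, ‖op K G x‖ₑ ^ 2) * J) ^ (1 / (2 : ℝ))) ^ 2 := by gcongr
        _ = (∫⁻ x, ‖op K G x‖ₑ ^ 2) * J := by
          rw [← ENNReal.rpow_natCast, ← ENNReal.rpow_mul]; norm_num
        _ ≤ ENNReal.ofReal A ^ 2 * I * J := by gcongr
        _ = _ := by ring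
    by_cases hI0 : I = 0
    · rw [hI0]; exact bot_le
    · rw [sq] at h6
      exact (ENNReal.mul_le_mul_iff_left hI0 hfin).1 h6

/-- `∫ G^β ≲ |E|` follows from an `L²` and a weak `L¹` bound, for `1 < β ≤ 2`. -/
lemma lintegral_rpow_le_of_weak {α : Type*} [MeasurableSpace α] {μ : Measure α} {G : α → ℝ≥0∞}
    (hG : Measurable G) {β : ℝ} (hβ : 1 < β) (hβ2 : β ≤ 2) {W m : ℝ≥0∞}
    (h2 : ∫⁻ x, G x ^ 2 ∂μ ≤ W * m)
    (h1 : ∀ l : ℝ≥0∞, l ≠ 0 → l ≠ ∞ → l * μ {x | l < G x} ≤ W * m) :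
    ∫⁻ x, G x ^ β ∂μ ≤
      W * (1 + ∑' k : ℕ, ENNReal.ofReal (2 * ((1 / 2) ^ (β - 1)) ^ k)) * m := by
  set e : ℕ → ℝ≥0∞ := fun k => ENNReal.ofReal ((1 / 2) ^ k) with he
  have hpt : ∀ x, G x ^ β ≤ G x ^ 2 + ∑' k : ℕ, {x | e (k + 1) < G x}.indicator
      (fun _ => e k ^ β) x := fun x => by
    rcases le_or_gt 1 (G x) with h | h
    · refine le_add_right ?_
      rw [← ENNReal.rpow_natCast]
      exact ENNReal.rpow_le_rpow_of_exponent_le h (by exact_mod_cast hβ2)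
    · refine le_add_left ?_
      by_cases h0 : G x = 0
      · rw [h0, ENNReal.zero_rpow_of_pos (by linarith)]; exact bot_le
      have hlim : Tendsto e atTop (𝓝 0) := by
        have := tendsto_pow_atTop_nhds_zero_of_lt_one (r := (1 / 2 : ℝ)) (by norm_num) (by norm_num)
        have h := ENNReal.tendsto_ofReal this
        rwa [ENNReal.ofReal_zero] at h
      have hex : ∃ k, e k < G x := (hlim.eventually (gt_mem_nhds (pos_iff_ne_zero.2 h0))).exists
      classical
      obtain ⟨k, hk1, hk2⟩ : ∃ k, e (k + 1) < G x ∧ G x ≤ e k := by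
        rcases hfind : Nat.find hex with _ | k
        · have := Nat.find_spec hex
          rw [hfind] at this
          simp only [he, pow_zero, ENNReal.ofReal_one] at this
          exact absurd this (not_lt.2 h.le)
        · refine ⟨k, hfind ▸ Nat.find_spec hex, not_lt.1 (Nat.find_min hex (by omega))⟩
      refine le_trans ?_ (ENNReal.le_tsum k)
      rw [Set.indicator_of_mem (by exact hk1)]
      gcongr
  have hms : ∀ k, MeasurableSet {x | e (k + 1) < G x} := fun k =>
    measurableSet_lt measurable_const hG
  calc _ ≤ ∫⁻ x, (G x ^ 2 + ∑' k : ℕ, {x | e (k + 1) < G x}.indicator (fun _ => e k ^ β) x) ∂μ :=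
        lintegral_mono hpt
    _ = (∫⁻ x, G x ^ 2 ∂μ) + ∑' k : ℕ, e k ^ β * μ {x | e (k + 1) < G x} := by
        rw [lintegral_add_left (hG.pow_const 2), lintegral_tsum fun k =>
          (measurable_const.indicator (hms k)).aemeasurable]
        congr 1
        refine tsum_congr fun k => ?_
        rw [lintegral_indicator (hms k), setLIntegral_const]
    _ ≤ W * m + ∑' k : ℕ, ENNReal.ofReal (2 * ((1 / 2) ^ (β - 1)) ^ k) * (W * m) := by
        refine add_le_add h2 (ENNReal.tsum_le_tsum fun k => ?_)
        have hk := h1 (e (k + 1)) (by simp [he]) ENNReal.ofReal_ne_top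
        have : e k ^ β = ENNReal.ofReal (2 * ((1 / 2) ^ (β - 1)) ^ k) * e (k + 1) := by
          simp only [he]
          rw [ENNReal.ofReal_rpow_of_pos (by positivity), ← ENNReal.ofReal_mul (by positivity)]
          congr 1
          have e1 : ((1 / 2 : ℝ) ^ k) ^ β = ((1 / 2 : ℝ) ^ (β - 1)) ^ k * (1 / 2) ^ k := by
            rw [← Real.rpow_natCast, ← Real.rpow_natCast, ← Real.rpow_mul (by norm_num),
              ← Real.rpow_mul (by norm_num), ← Real.rpow_add (by norm_num)]
            congr 1; ring
          rw [e1, pow_succ]; ring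
        rw [this]
        exact (mul_assoc _ _ _).le.trans (mul_le_mul_right hk _)
    _ = _ := by rw [ENNReal.tsum_mul_right]; ring

/-- The weak type `(b, b)` bound for `b > 2`, by duality. -/
lemma weak_bb [Nontrivial V] {A : ℝ} (hA : 0 ≤ A) {b b' : ℝ} (hb : 2 < b)
    (hbb : b.HolderConjugate b') {K : V → E →L[ℂ] F} (hK : CZ A K) {f : V → E} (hf : BM f)
    {l : ℝ≥0∞} (hl : l ≠ 0) (hl' : l ≠ ∞) :
    l ^ b * volume {x | l < ‖op K f x‖ₑ} ≤
      ((cW V A + ENNReal.ofReal A ^ 2) *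
        (1 + ∑' k : ℕ, ENNReal.ofReal (2 * ((1 / 2) ^ (b' - 1)) ^ k))) ^ (b / b') *
        ∫⁻ x, ‖f x‖ₑ ^ b := by
  set W := cW V A + ENNReal.ofReal A ^ 2 with hW
  set C := W * (1 + ∑' k : ℕ, ENNReal.ofReal (2 * ((1 / 2) ^ (b' - 1)) ^ k)) with hC
  set X := ∫⁻ x, ‖f x‖ₑ ^ b with hX
  have hb0 : 0 < b := by linarith
  have hb'1 : 1 < b' := hbb.symm.lt
  have hb'0 : 0 < b' := by linarith
  have hb'2 : b' ≤ 2 := by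
    have := hbb.inv_add_inv_eq_one
    have h1 : b⁻¹ < 2⁻¹ := by gcongr
    have h2 : (2 : ℝ)⁻¹ < b'⁻¹ := by linarith
    exact ((inv_lt_inv₀ (by norm_num) hb'0).1 h2).le
  set T := op K f with hT
  have hTb : BM T := BM_op hK.cont hK.int hf
  -- restricting to balls keeps the measure of the level set finite
  have key : ∀ N : ℕ, l ^ b * volume ({x | l < ‖T x‖ₑ} ∩ closedBall 0 N) ≤ C ^ (b / b') * X := by
    intro N
    set S := {x | l < ‖T x‖ₑ} ∩ closedBall 0 (N : ℝ) with hS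
    have hSm : MeasurableSet S :=
      (measurableSet_lt measurable_const hTb.1.enorm).inter measurableSet_closedBall
    have hSf : volume S ≠ ∞ :=
      ((measure_mono Set.inter_subset_right).trans_lt measure_closedBall_lt_top).ne
    set g : V → F := S.indicator fun x => ((‖T x‖⁻¹ : ℝ) : ℂ) • T x with hg
    have hgm : StronglyMeasurable g := by
      refine StronglyMeasurable.indicator ?_ hSm
      have : Measurable fun x => ((‖T x‖⁻¹ : ℝ) : ℂ) :=
        Complex.measurable_ofReal.comp hTb.1.norm.measurable.inv
      exact this.stronglyMeasurable.smul hTb.1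
    have hTpos : ∀ x ∈ S, ‖T x‖ ≠ 0 := fun x hx h0 => by
      have h1 : l < ‖T x‖ₑ := hx.1
      rw [← ofReal_norm, h0, ENNReal.ofReal_zero] at h1
      exact not_lt_bot h1
    have hge : ∀ x, ‖g x‖ₑ = S.indicator (fun _ => 1) x := fun x => by
      by_cases hx : x ∈ S
      · rw [hg, Set.indicator_of_mem hx, Set.indicator_of_mem hx, ← ofReal_norm, norm_smul,
          Complex.norm_real, Real.norm_of_nonneg (by positivity), inv_mul_cancel₀ (hTpos x hx),
          ENNReal.ofReal_one]
      · rw [hg, Set.indicator_of_notMem hx, Set.indicator_of_notMem hx, enorm_zero]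
    have hg1 : ∫⁻ x, ‖g x‖ₑ = volume S := by
      simp only [hge]; rw [lintegral_indicator hSm]; simp
    have hg2 : ∫⁻ x, ‖g x‖ₑ ^ 2 = volume S := by
      rw [← hg1]
      refine lintegral_congr fun x => ?_
      rw [hge]; by_cases hx : x ∈ S <;> simp [hx]
    have hgi : Integrable g := ⟨hgm.aestronglyMeasurable, by
      rw [hasFiniteIntegral_iff_enorm, hg1]; exact hSf.lt_top⟩
    have hgb : BM g := ⟨hgm, 1, fun x => by
      have h1 := hge x
      have h2 : ‖g x‖ₑ ≤ ENNReal.ofReal 1 := by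
        rw [h1, ENNReal.ofReal_one]; by_cases hx : x ∈ S <;> simp [hx]
      rw [← ofReal_norm] at h2
      exact (ENNReal.ofReal_le_ofReal_iff zero_le_one).1 h2⟩
    have hdual := op_adj hK.cont hK.int hf hgb hgi
    have hlow : l * volume S ≤ ‖∫ x, inner ℂ (T x) (g x)‖ₑ := by
      have h3 : ∀ x, inner ℂ (T x) (g x) = ((S.indicator (fun x => ‖T x‖) x : ℝ) : ℂ) := fun x => by
        by_cases hx : x ∈ S
        · rw [hg, Set.indicator_of_mem hx, Set.indicator_of_mem hx, inner_smul_right,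
            inner_self_eq_norm_sq_to_K]
          have h0 := hTpos x hx
          push_cast
          have h0' : (‖T x‖ : ℂ) ≠ 0 := by exact_mod_cast h0
          change (‖T x‖ : ℂ)⁻¹ * (‖T x‖ : ℂ) ^ 2 = _
          field_simp
        · rw [hg, Set.indicator_of_notMem hx, Set.indicator_of_notMem hx, inner_zero_right]
          simp
      simp only [h3]
      have hinteg : Integrable (S.indicator (fun x => ‖T x‖)) := by
        obtain ⟨M, hM⟩ := hTb.2
        rw [integrable_indicator_iff hSm]
        exact Measure.integrableOn_of_bounded (M := M) hSf hTb.1.norm.aestronglyMeasurable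
          (ae_of_all _ fun x => by rw [norm_norm]; exact hM x)
      rw [integral_complex_ofReal, ← ofReal_norm, Complex.norm_real, Real.norm_of_nonneg
        (integral_nonneg fun y => Set.indicator_nonneg (fun _ _ => norm_nonneg _) _),
        ofReal_integral_eq_lintegral_ofReal hinteg
          (ae_of_all _ fun y => Set.indicator_nonneg (fun _ _ => norm_nonneg _) _)]
      calc l * volume S = ∫⁻ x in S, l := by rw [setLIntegral_const]
        _ ≤ ∫⁻ x in S, ENNReal.ofReal (S.indicator (fun x => ‖T x‖) x) :=
            setLIntegral_mono' hSm fun x hx => by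
              rw [Set.indicator_of_mem hx, ofReal_norm]
              exact (hx.1 : l < ‖T x‖ₑ).le
        _ ≤ _ := setLIntegral_le_lintegral _ _
    rw [hdual] at hlow
    have hA' := hK.adj
    have hup := enorm_integral_inner_le b b' hbb hf.1 (sm_op hA'.cont hgm)
    have hβ : ∫⁻ x, ‖op (adjK K) g x‖ₑ ^ b' ≤ C * volume S := by
      refine lintegral_rpow_le_of_weak (sm_op hA'.cont hgm).enorm hb'1 hb'2 ?_ ?_
      · refine (hA'.l2 g hgb hgi).trans ?_
        rw [hg2]; gcongr; exact le_add_self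
      · intro l hl hl'
        refine (weak11 hA hA' hgb hgi hl hl').trans ?_
        rw [hg1]; gcongr; exact le_self_add
    by_cases hS0 : volume S = 0
    · rw [hS0, mul_zero]; exact bot_le
    have h5 : l * volume S ≤ X ^ (1 / b) * (C ^ (1 / b') * volume S ^ (1 / b')) := by
      refine (hlow.trans hup).trans ?_
      rw [← ENNReal.mul_rpow_of_nonneg _ _ (by positivity)]
      gcongr
    have hsplit : volume S = volume S ^ (1 / b) * volume S ^ (1 / b') := by
      rw [← ENNReal.rpow_add _ _ hS0 hSf, one_div, one_div, hbb.inv_add_inv_eq_one,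
        ENNReal.rpow_one]
    have h6 : l * volume S ^ (1 / b) ≤ X ^ (1 / b) * C ^ (1 / b') := by
      rw [hsplit, ← mul_assoc, ← mul_assoc] at h5
      rw [← hsplit] at h5
      refine (ENNReal.mul_le_mul_iff_left ?_ ?_).1 h5
      · exact (ENNReal.rpow_pos (pos_iff_ne_zero.2 hS0) hSf).ne'
      · exact (ENNReal.rpow_lt_top_of_nonneg (by positivity) hSf).ne
    have h7 := ENNReal.rpow_le_rpow h6 hb0.le
    rw [ENNReal.mul_rpow_of_nonneg _ _ hb0.le, ENNReal.mul_rpow_of_nonneg _ _ hb0.le,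
      ← ENNReal.rpow_mul, ← ENNReal.rpow_mul, ← ENNReal.rpow_mul, one_div_mul_cancel hb0.ne',
      ENNReal.rpow_one, ENNReal.rpow_one] at h7
    refine h7.trans_eq ?_
    rw [mul_comm, one_div_mul_eq_div]
  have hU : {x | l < ‖T x‖ₑ} = ⋃ N : ℕ, {x | l < ‖T x‖ₑ} ∩ closedBall 0 (N : ℝ) := by
    rw [← Set.inter_iUnion, iUnion_closedBall_nat, Set.inter_univ]
  have hmono : Monotone fun N : ℕ => {x | l < ‖T x‖ₑ} ∩ closedBall 0 (N : ℝ) := fun i j hij =>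
    Set.inter_subset_inter_right _ (closedBall_subset_closedBall (by exact_mod_cast hij))
  rw [hU, hmono.measure_iUnion, ENNReal.mul_iSup]
  exact iSup_le key

/-- Calderón–Zygmund operators are bounded on Lorentz spaces, with a bound that depends only on
the exponents, the space and the Calderón–Zygmund constant. -/
theorem cz_lor {p q : ℝ} (hp : 1 < p) (hq : 1 ≤ q) {A : ℝ} (hA : 0 ≤ A) (V : Type)
    [NormedAddCommGroup V] [InnerProductSpace ℝ V] [FiniteDimensional ℝ V]
    [MeasurableSpace V] [BorelSpace V] [Nontrivial V] :
    ∃ C : ℝ≥0∞, C ≠ ∞ ∧ ∀ {E F : Type} [NormedAddCommGroup E] [InnerProductSpace ℂ E]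
      [CompleteSpace E] [NormedAddCommGroup F] [InnerProductSpace ℂ F] [CompleteSpace F]
      {K : V → E →L[ℂ] F} {f : V → E}, CZ A K → BM f →
      lor volume p q (fun x => ‖op K f x‖ₑ) ≤ C * lor volume p q (fun x => ‖f x‖ₑ) := by
  -- any exponent larger than `p` and `2` serves as the upper endpoint
  set b : ℝ := p + 2 with hb
  have hb2 : 2 < b := by linarith
  have hb0 : 0 < b := by linarith
  set b' := b.conjExponent with hb'
  have hbb : b.HolderConjugate b' := Real.HolderConjugate.conjExponent (by linarith)
  have hb'1 : 1 < b' := hbb.symm.lt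
  set Cb := ((cW V A + ENNReal.ofReal A ^ 2) *
        (1 + ∑' k : ℕ, ENNReal.ofReal (2 * ((1 / 2) ^ (b' - 1)) ^ k))) ^ (b / b') with hCb
  have hs : ∑' k : ℕ, ENNReal.ofReal (2 * ((1 / 2) ^ (b' - 1)) ^ k) ≠ ∞ := by
    have h1 : Summable fun k : ℕ => 2 * (((1 / 2 : ℝ)) ^ (b' - 1)) ^ k :=
      (summable_geometric_of_lt_one (by positivity)
        (Real.rpow_lt_one (by norm_num) (by norm_num) (by linarith))).mul_left 2
    exact h1.tsum_ofReal_ne_top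
  have hCbt : Cb ≠ ∞ := ENNReal.rpow_ne_top_of_nonneg (by positivity)
    (ENNReal.mul_ne_top (by simp [cW_ne_top]) (ENNReal.add_ne_top.2 ⟨ENNReal.one_ne_top, hs⟩))
  set D : ℝ≥0∞ := 2 * cW V A + (2 * Cb) ^ (1 / b) + 1 with hD
  have hDt : D ≠ ∞ := by
    have h1 := cW_ne_top (V := V) A
    have h2 : (2 * Cb) ^ (1 / b) ≠ ∞ := ENNReal.rpow_ne_top_of_nonneg (by positivity)
      (ENNReal.mul_ne_top (by simp) hCbt)
    simp only [hD]; finiteness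
  obtain ⟨K₀, hK₀, H⟩ := interp hp (show p < b by linarith) hq hDt
  refine ⟨K₀, hK₀, fun {E F} _ _ _ _ _ _ {K f} hK hf => H hf.1.enorm fun t a ht => ?_⟩
  set τ := ENNReal.ofReal t with hτ
  have hτ0 : τ ≠ 0 := (ENNReal.ofReal_pos.2 ht).ne'
  have hτt : τ ≠ ∞ := ENNReal.ofReal_ne_top
  have hms : MeasurableSet {x | a < ‖f x‖ₑ} := measurableSet_lt measurable_const hf.1.enorm
  -- split at the height `a`: the weak (1,1) bound is applied to `f1`, the weak `(b,b)` bound to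
  -- `f2`
  set f1 : V → E := {x | a < ‖f x‖ₑ}.indicator f with hf1
  set f2 : V → E := {x | ‖f x‖ₑ ≤ a}.indicator f with hf2
  obtain ⟨M, hM⟩ := hf.2
  have hms2 : MeasurableSet {x | ‖f x‖ₑ ≤ a} := measurableSet_le hf.1.enorm measurable_const
  have hb1 : BM f1 := ⟨hf.1.indicator hms, M, fun x => (norm_indicator_le_norm_self _ _).trans (hM x)⟩
  have hb2' : BM f2 := ⟨hf.1.indicator hms2, M, fun x => (norm_indicator_le_norm_self _ _).trans (hM x)⟩
  have hsum : ∀ x, f x = f1 x + f2 x := fun x => by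
    by_cases hx : a < ‖f x‖ₑ
    · rw [hf1, hf2, Set.indicator_of_mem (by exact hx),
        Set.indicator_of_notMem (s := {x | ‖f x‖ₑ ≤ a}) (fun h : ‖f x‖ₑ ≤ a => not_le.2 hx h), add_zero]
    · rw [hf1, hf2, Set.indicator_of_notMem (by exact hx),
        Set.indicator_of_mem (by exact not_lt.1 hx), zero_add]
  have e1 : ∀ x, ‖f1 x‖ₑ = {x | a < ‖f x‖ₑ}.indicator (fun x => ‖f x‖ₑ) x := fun x =>
    enorm_indicator_eq_indicator_enorm _ _
  have e2 : ∀ x, ‖f2 x‖ₑ = {x | ‖f x‖ₑ ≤ a}.indicator (fun x => ‖f x‖ₑ) x := fun x =>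
    enorm_indicator_eq_indicator_enorm _ _
  simp only [← e1, ← e2]
  set I1 := ∫⁻ x, ‖f1 x‖ₑ with hI1
  set I2 := ∫⁻ x, ‖f2 x‖ₑ ^ b with hI2
  have hD0 : D ≠ 0 := by simp [hD]
  by_cases hfin : I1 = ∞
  · rw [hfin, ENNReal.top_div_of_ne_top hτt, top_add, ENNReal.mul_top hD0]; exact le_top
  have hi1 : Integrable f1 := ⟨hb1.1.aestronglyMeasurable, by
    rw [hasFiniteIntegral_iff_enorm]; exact Ne.lt_top hfin⟩
  have hτ2 : τ / 2 ≠ 0 := by simp [hτ0]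
  have hτ2t : τ / 2 ≠ ∞ := (ENNReal.div_lt_top hτt (by simp)).ne
  have hdiv : ∀ c, c / (τ / 2) = 2 * (c / τ) := fun c => by
    rw [ENNReal.div_eq_inv_mul, ENNReal.inv_div (by simp) (by simp), ENNReal.div_eq_inv_mul,
      ENNReal.div_eq_inv_mul]; ring
  calc rea volume (fun x => ‖op K f x‖ₑ) τ
      ≤ rea volume (fun x => ‖op K f1 x‖ₑ + ‖op K f2 x‖ₑ) (τ / 2 + τ / 2) := by
        rw [ENNReal.add_halves]
        refine rea_mono_ae (ae_of_all _ fun x => ?_) _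
        have : op K f x = op K f1 x + op K f2 x := by
          simp only [op]
          rw [← integral_add (int_kern hK.cont hK.int hb1 x) (int_kern hK.cont hK.int hb2' x)]
          refine integral_congr_ae (ae_of_all _ fun y => ?_)
          simp only [hsum y, map_add]
        simp only [this]
        exact enorm_add_le _ _
    _ ≤ _ := rea_add_le _ _ _ _
    _ ≤ cW V A * I1 / (τ / 2) + (Cb * I2 / (τ / 2)) ^ (1 / b) := by
        gcongr
        · have := rea_le_of_weak (μ := volume) (G := fun x => ‖op K f1 x‖ₑ) (b := 1) one_pos hτ2 hτ2t
            (B := cW V A * I1) fun l hl hl' => by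
              rw [ENNReal.rpow_one]; exact weak11 hA hK hb1 hi1 hl hl'
          simpa using this
        · exact rea_le_of_weak hb0 hτ2 hτ2t fun l hl hl' => weak_bb hA hb2 hbb hK hb2' hl hl'
    _ = 2 * cW V A * (I1 / τ) + (2 * Cb) ^ (1 / b) * (I2 / τ) ^ (1 / b) := by
        rw [hdiv, hdiv, ← ENNReal.mul_rpow_of_nonneg _ _ (by positivity), mul_div_assoc,
          mul_div_assoc, ← mul_assoc, ← mul_assoc]
    _ ≤ D * (I1 / τ) + D * (I2 / τ) ^ (1 / b) := by
        gcongr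
        · rw [hD, add_assoc]; exact le_self_add
        · rw [hD]; exact le_add_right le_add_self
    _ ≤ _ := by
        rw [← mul_add]
        gcongr
        exact le_self_add

end

end LCR

namespace LCR

set_option linter.unusedSectionVars false

open Filter Topology Module Metric
open scoped SchwartzMap ContDiff Convolution

/-! ### The `L²` bound for Schwartz kernels -/

section
variable {V : Type} [NormedAddCommGroup V] [InnerProductSpace ℝ V] [FiniteDimensional ℝ V]
  [MeasurableSpace V] [BorelSpace V]
variable {E F : Type} [NormedAddCommGroup E] [InnerProductSpace ℂ E] [CompleteSpace E]
  [NormedAddCommGroup F] [InnerProductSpace ℂ F] [CompleteSpace F]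

lemma lintegral_sq_schwartz (f : 𝓢(V, E)) :
    ∫⁻ x, ‖f x‖ₑ ^ 2 = ENNReal.ofReal (∫ x, ‖f x‖ ^ 2) := by
  rw [ofReal_integral_eq_lintegral_ofReal]
  · refine lintegral_congr fun x => ?_
    rw [ENNReal.ofReal_pow (norm_nonneg _), ofReal_norm]
  · exact (memLp_two_iff_integrable_sq_norm f.continuous.aestronglyMeasurable).1 (f.memLp 2)
  · exact ae_of_all _ fun x => by positivity

/-- The `L²` bound for convolution with a Schwartz kernel whose Fourier transform is bounded
by `A`: Plancherel for Schwartz functions. -/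
lemma l2_schwartz (K : 𝓢(V, E →L[ℂ] F)) {A : ℝ} (hA : ∀ ξ, ‖𝓕 (⇑K) ξ‖ ≤ A) (f : 𝓢(V, E)) :
    ∫⁻ x, ‖op K f x‖ₑ ^ 2 ≤ ENNReal.ofReal A ^ 2 * ∫⁻ x, ‖f x‖ₑ ^ 2 := by
  have hA0 : 0 ≤ A := (norm_nonneg _).trans (hA 0)
  set B : (E →L[ℂ] F) →L[ℂ] E →L[ℂ] F := ContinuousLinearMap.id ℂ _ with hB
  set g : 𝓢(V, F) := SchwartzMap.convolution B K f with hg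
  have hop : ∀ x, op K f x = g x := fun x => by
    rw [hg, SchwartzMap.convolution_apply]
    rw [← convolution_flip]
    rfl
  have hFg : ∀ ξ, 𝓕 g ξ = 𝓕 (⇑K) ξ (𝓕 f ξ) := fun ξ => by
    rw [hg, SchwartzMap.fourier_convolution]; rfl
  simp only [hop]
  rw [lintegral_sq_schwartz, lintegral_sq_schwartz, ← SchwartzMap.integral_norm_sq_fourier g,
    ← SchwartzMap.integral_norm_sq_fourier f, ← ENNReal.ofReal_pow hA0,
    ← ENNReal.ofReal_mul (by positivity), ← integral_const_mul]
  refine ENNReal.ofReal_le_ofReal (integral_mono ?_ ?_ fun ξ => ?_)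
  · exact (memLp_two_iff_integrable_sq_norm (𝓕 g).continuous.aestronglyMeasurable).1 ((𝓕 g).memLp 2)
  · exact ((memLp_two_iff_integrable_sq_norm
      (𝓕 f).continuous.aestronglyMeasurable).1 ((𝓕 f).memLp 2)).const_mul _
  · simp only [hFg]
    rw [← mul_pow]
    gcongr
    exact (ContinuousLinearMap.le_opNorm _ _).trans (by gcongr; exact hA ξ)

/-- The bound of `l2_schwartz` extends to bounded integrable functions by density. -/
lemma l2_symbol (K : 𝓢(V, E →L[ℂ] F)) {A : ℝ} (hA : ∀ ξ, ‖𝓕 (⇑K) ξ‖ ≤ A) {f : V → E}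
    (hf : BM f) (hi : Integrable f) :
    ∫⁻ x, ‖op K f x‖ₑ ^ 2 ≤ ENNReal.ofReal A ^ 2 * ∫⁻ x, ‖f x‖ₑ ^ 2 := by
  have hm : MemLp f 2 := ⟨hf.1.aestronglyMeasurable, by
    rw [eLpNorm_lt_top_iff_lintegral_rpow_enorm_lt_top (by simp) (by simp)]
    simpa using lintegral_sq_lt_top hf hi⟩
  have hex : ∀ n : ℕ, ∃ u : 𝓢(V, E), eLpNorm (f - ⇑u) 2 volume ≤ ENNReal.ofReal (1 / (n + 1)) :=
    fun n => by
    obtain ⟨u, hu1, hu2, hu3⟩ := hm.exist_eLpNorm_sub_le (by simp) (by simp)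
      (ε := 1 / ((n : ℝ) + 1)) (by positivity)
    exact ⟨hu1.toSchwartzMap hu2, hu3⟩
  choose u hu using hex
  have hlim : Tendsto (fun n => eLpNorm (f - ⇑(u n)) 2 volume) atTop (𝓝 0) := by
    refine tendsto_of_tendsto_of_tendsto_of_le_of_le tendsto_const_nhds ?_ (fun _ => bot_le) hu
    have h := ENNReal.tendsto_ofReal tendsto_one_div_add_atTop_nhds_zero_nat
    rwa [ENNReal.ofReal_zero] at h
  have he2 : ∀ g : V → E, ∫⁻ x, ‖g x‖ₑ ^ 2 = eLpNorm g 2 volume ^ 2 := fun g => by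
    rw [eLpNorm_eq_lintegral_rpow_enorm_toReal (by simp) (by simp)]
    simp only [ENNReal.toReal_ofNat, ENNReal.rpow_ofNat]
    rw [← ENNReal.rpow_natCast, ← ENNReal.rpow_mul]; norm_num
  have hinteg : ∀ g : V → E, MemLp g 2 → ∀ x, Integrable fun y => K (x - y) (g y) := fun g hg x => by
    have h1 : MemLp (fun y => K (x - y)) 2 := by
      have := (K.memLp 2 (volume : Measure V)).comp_measurePreserving
        (Measure.measurePreserving_sub_left (volume : Measure V) x)
      exact this
    have h2 : AEStronglyMeasurable (fun y => K (x - y) (g y)) volume := 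
      (continuous_fst.clm_apply continuous_snd :
        Continuous fun q : (E →L[ℂ] F) × E => q.1 q.2).comp_aestronglyMeasurable
        (h1.1.prodMk hg.1)
    refine (h1.norm.integrable_mul hg.norm).mono h2 (ae_of_all _ fun y => ?_)
    simpa using (K (x - y)).le_opNorm (g y)
  have hpt : ∀ x, Tendsto (fun n => op K (u n) x) atTop (𝓝 (op K f x)) := fun x => by
    rw [tendsto_iff_edist_tendsto_0]
    set k2 := eLpNorm (⇑K) 2 volume
    have hk2 : k2 ≠ ⊤ := (K.memLp 2 (volume : Measure V)).2.ne
    refine tendsto_of_tendsto_of_tendsto_of_le_of_le (g := fun _ => (0 : ℝ≥0∞))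
      (h := fun n => k2 * eLpNorm (f - ⇑(u n)) 2 volume)
      tendsto_const_nhds ?_ (fun _ => bot_le) fun n => ?_
    · have := ENNReal.Tendsto.const_mul (a := k2) hlim (Or.inr hk2)
      rwa [mul_zero] at this
    · have h3 : MemLp (f - ⇑(u n)) 2 volume := hm.sub ((u n).memLp 2)
      rw [edist_comm, edist_eq_enorm_sub]
      simp only [op]
      rw [← integral_sub (hinteg _ hm x) (hinteg _ ((u n).memLp 2) x)]
      refine (enorm_integral_le_lintegral_enorm _).trans ?_
      calc _ ≤ ∫⁻ y, ‖K (x - y)‖ₑ * ‖(f - ⇑(u n)) y‖ₑ := lintegral_mono fun y => by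
            rw [← map_sub]; exact ContinuousLinearMap.le_opENorm _ _
        _ ≤ _ := ENNReal.lintegral_mul_le_Lp_mul_Lq volume (p := 2) (q := 2)
            (by constructor <;> norm_num)
            (Continuous.aestronglyMeasurable (by fun_prop)).enorm h3.1.enorm
        _ = _ := by
            rw [lintegral_sub_left_eq_self (fun y => ‖K y‖ₑ ^ (2 : ℝ)) x]
            rw [eLpNorm_eq_lintegral_rpow_enorm_toReal (by simp) (by simp),
              show k2 = _ from eLpNorm_eq_lintegral_rpow_enorm_toReal (by simp) (by simp)]
            simp
  calc ∫⁻ x, ‖op K f x‖ₑ ^ 2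
      = ∫⁻ x, liminf (fun n => ‖op K (u n) x‖ₑ ^ 2) atTop := by
        refine lintegral_congr fun x => ?_
        exact ((((ENNReal.continuous_pow 2).comp continuous_enorm).tendsto _).comp (hpt x)).liminf_eq.symm
    _ ≤ liminf (fun n => ∫⁻ x, ‖op K (u n) x‖ₑ ^ 2) atTop := lintegral_liminf_le fun n =>
        ((sm_op K.continuous (u n).continuous.stronglyMeasurable).enorm.pow_const 2)
    _ ≤ liminf (fun n => ENNReal.ofReal A ^ 2 *
          (eLpNorm f 2 volume + eLpNorm (f - ⇑(u n)) 2 volume) ^ 2) atTop := by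
        refine liminf_le_liminf (Eventually.of_forall fun n => ?_)
        refine (l2_schwartz K hA (u n)).trans ?_
        rw [he2]
        gcongr
        calc eLpNorm (⇑(u n)) 2 volume = eLpNorm (f - (f - ⇑(u n))) 2 volume := by
              rw [sub_sub_cancel]
          _ ≤ _ := eLpNorm_sub_le hm.1 (hm.sub ((u n).memLp 2)).1 (by simp)
    _ = ENNReal.ofReal A ^ 2 * (eLpNorm f 2 volume + 0) ^ 2 := by
        refine Tendsto.liminf_eq ?_
        refine ENNReal.Tendsto.const_mul ?_ (Or.inr (by simp))
        exact ((ENNReal.continuous_pow 2).tendsto _).comp (hlim.const_add _)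
    _ = _ := by rw [add_zero, he2]

end

end LCR

namespace LCR

set_option linter.unusedSectionVars false

open Filter Topology Module Metric
open scoped SchwartzMap ContDiff Convolution

/-! ### Dyadic families of kernels -/

lemma summable_natAbs {a : ℝ} (h0 : 0 ≤ a) (h1 : a < 1) : Summable fun k : ℤ => a ^ k.natAbs := by
  have h := summable_geometric_of_lt_one h0 h1
  refine Summable.of_nat_of_neg (f := fun k : ℤ => a ^ k.natAbs) ?_ ?_
  · simpa using h
  · simpa using h

/-- A bound for the lacunary sums `∑ min(2^k r, (2^k r)⁻¹)`. -/
noncomputable def cSum : ℝ := ∑' k : ℤ, 2 * (1 / 2 : ℝ) ^ k.natAbs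

lemma cSum_nonneg : 0 ≤ cSum := tsum_nonneg fun _ => by positivity

/-- Lacunary sums are bounded uniformly in `r`. -/
lemma sum_min_le (S : Finset ℤ) {r : ℝ} (hr : 0 < r) :
    ∑ k ∈ S, min ((2 : ℝ) ^ k * r) ((2 : ℝ) ^ k * r)⁻¹ ≤ cSum := by
  obtain ⟨m, hm1, hm2⟩ := exists_mem_Ico_zpow hr (one_lt_two (α := ℝ))
  have hs : Summable fun k : ℤ => 2 * (1 / 2 : ℝ) ^ k.natAbs :=
    (summable_natAbs (by norm_num) (by norm_num)).mul_left 2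
  have hs' : Summable fun k : ℤ => 2 * (1 / 2 : ℝ) ^ (k + m).natAbs :=
    (Equiv.addRight m).summable_iff.2 hs
  have hterm : ∀ k : ℤ, min ((2 : ℝ) ^ k * r) ((2 : ℝ) ^ k * r)⁻¹ ≤
      2 * (1 / 2 : ℝ) ^ (k + m).natAbs := fun k => by
    have hk : (0 : ℝ) < 2 ^ k := by positivity
    rcases le_total 0 (k + m) with h | h
    · refine (min_le_right _ _).trans ?_
      obtain ⟨j, hj⟩ := Int.eq_ofNat_of_zero_le h
      rw [hj]
      have h3 : (2 : ℝ) ^ j ≤ 2 ^ k * r := by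
        have hj' : k + m = (j : ℤ) := hj
        rw [← zpow_natCast, ← hj', zpow_add₀ (by norm_num)]
        gcongr
      calc ((2 : ℝ) ^ k * r)⁻¹ ≤ ((2 : ℝ) ^ j)⁻¹ := by gcongr
        _ ≤ 2 * ((2 : ℝ) ^ j)⁻¹ := by
          have : (0 : ℝ) ≤ ((2 : ℝ) ^ j)⁻¹ := by positivity
          linarith
        _ = _ := by simp
    · refine (min_le_left _ _).trans ?_
      obtain ⟨j, hj⟩ := Int.eq_ofNat_of_zero_le (neg_nonneg.2 h)
      have hj' : k + m = -(j : ℤ) := by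
        have : -(k + m) = (j : ℤ) := hj
        omega
      rw [hj']
      calc (2 : ℝ) ^ k * r ≤ 2 ^ k * 2 ^ (m + 1) := by gcongr
        _ = 2 ^ (-(j : ℤ) + 1) := by rw [← zpow_add₀ (by norm_num), ← hj', add_assoc]
        _ = _ := by
          rw [zpow_add₀ (by norm_num)]
          simp [mul_comm]
  calc _ ≤ ∑ k ∈ S, 2 * (1 / 2 : ℝ) ^ (k + m).natAbs := Finset.sum_le_sum fun k _ => hterm k
    _ ≤ ∑' k : ℤ, 2 * (1 / 2 : ℝ) ^ (k + m).natAbs :=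
        hs'.sum_le_tsum _ fun _ _ => by positivity
    _ = cSum := (Equiv.addRight m).tsum_eq fun k : ℤ => 2 * (1 / 2 : ℝ) ^ k.natAbs

section
variable {V : Type} [NormedAddCommGroup V] [InnerProductSpace ℝ V] [FiniteDimensional ℝ V]
  [MeasurableSpace V] [BorelSpace V]
variable {E F : Type} [NormedAddCommGroup E] [InnerProductSpace ℂ E] [CompleteSpace E]
  [NormedAddCommGroup F] [InnerProductSpace ℂ F] [CompleteSpace F]

/-- The `L¹`-normalised dyadic dilation `2^{kd} κ(2^k x)`. -/
noncomputable def dil (k : ℤ) (κ : V → ℂ) (x : V) : ℂ :=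
  ((((2 : ℝ) ^ k) ^ finrank ℝ V : ℝ) : ℂ) * κ ((2 : ℝ) ^ k • x)

/-- The smoothness estimate for kernels which is uniform at unit scale. -/
def Good (A : ℝ) (κ : V → ℂ) : Prop :=
  ∀ x y, 2 * ‖y‖ ≤ 1 + ‖x‖ → ‖κ (x - y) - κ x‖ * (1 + ‖x‖) ^ (finrank ℝ V + 2) ≤ A * ‖y‖

/-- The Hörmander condition for dyadic sums, uniformly in the finite set `S` of scales. -/
lemma hor_family {A : ℝ} (hA : 0 ≤ A) {κ : V → ℂ} (hκ : Good A κ) (S : Finset ℤ)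
    {B : ℤ → E →L[ℂ] F} (hB : ∀ k, ‖B k‖ ≤ 1) {x y : V} (hxy : 2 * ‖y‖ ≤ ‖x‖) :
    ‖∑ k ∈ S, dil k κ (x - y) • B k - ∑ k ∈ S, dil k κ x • B k‖ * ‖x‖ ^ (finrank ℝ V + 1) ≤
      cSum * A * ‖y‖ := by
  set d := finrank ℝ V
  rcases (norm_nonneg x).eq_or_lt' with hx | hx
  · rw [hx]; simp only [ne_eq, Nat.add_eq_zero_iff, one_ne_zero, and_false, not_false_eq_true,
      zero_pow, mul_zero]
    exact mul_nonneg (mul_nonneg cSum_nonneg hA) (norm_nonneg _)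
  have hterm : ∀ k, ‖dil k κ (x - y) • B k - dil k κ x • B k‖ * ‖x‖ ^ (d + 1) ≤
      min ((2 : ℝ) ^ k * ‖x‖) ((2 : ℝ) ^ k * ‖x‖)⁻¹ * (A * ‖y‖) := fun k => by
    set ρ : ℝ := (2 : ℝ) ^ k
    have hρ : 0 < ρ := by positivity
    have h1 := hκ (ρ • x) (ρ • y) (by
      rw [norm_smul, norm_smul, Real.norm_of_nonneg hρ.le]; nlinarith)
    rw [norm_smul, norm_smul, Real.norm_of_nonneg hρ.le] at h1
    set t := ρ * ‖x‖ with ht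
    have ht0 : 0 < t := by positivity
    rw [← sub_smul, norm_smul]
    have h2 : ‖dil k κ (x - y) - dil k κ x‖ = ρ ^ d * ‖κ (ρ • x - ρ • y) - κ (ρ • x)‖ := by
      simp only [dil]
      rw [← mul_sub, norm_mul, Complex.norm_real, Real.norm_of_nonneg (by positivity), smul_sub]
    rw [h2]
    have h3 : t ^ (d + 1) ≤ min t t⁻¹ * (1 + t) ^ (d + 2) := by
      rw [min_mul_of_nonneg _ _ (by positivity)]
      refine le_min ?_ ?_
      · rw [pow_succ' t]
        gcongr
        calc t ^ d ≤ (1 + t) ^ d := by gcongr; linarith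
          _ ≤ (1 + t) ^ (d + 2) := pow_le_pow_right₀ (by linarith) (by omega)
      · rw [inv_mul_eq_div, le_div_iff₀ ht0, ← pow_succ]
        gcongr; linarith
    set D := ‖κ (ρ • x - ρ • y) - κ (ρ • x)‖
    have hD : 0 ≤ D := norm_nonneg _
    calc ρ ^ d * D * ‖B k‖ * ‖x‖ ^ (d + 1) ≤ ρ ^ d * D * 1 * ‖x‖ ^ (d + 1) := by
          gcongr; exact hB k
      _ = D * t ^ (d + 1) / ρ := by rw [ht, mul_pow, pow_succ ρ]; field_simp
      _ ≤ D * (min t t⁻¹ * (1 + t) ^ (d + 2)) / ρ := by gcongr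
      _ = min t t⁻¹ * (D * (1 + t) ^ (d + 2)) / ρ := by ring
      _ ≤ min t t⁻¹ * (A * (ρ * ‖y‖)) / ρ := by gcongr
      _ = _ := by field_simp
  calc _ = ‖∑ k ∈ S, (dil k κ (x - y) • B k - dil k κ x • B k)‖ * ‖x‖ ^ (d + 1) := by
        rw [Finset.sum_sub_distrib]
    _ ≤ (∑ k ∈ S, ‖dil k κ (x - y) • B k - dil k κ x • B k‖) * ‖x‖ ^ (d + 1) := by
        gcongr; exact norm_sum_le _ _
    _ ≤ (∑ k ∈ S, min ((2 : ℝ) ^ k * ‖x‖) ((2 : ℝ) ^ k * ‖x‖)⁻¹) * (A * ‖y‖) := by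
        rw [Finset.sum_mul, Finset.sum_mul]
        exact Finset.sum_le_sum fun k _ => hterm k
    _ ≤ cSum * (A * ‖y‖) := by gcongr; exact sum_min_le S hx
    _ = _ := by ring

lemma schwartz_decay (κ : 𝓢(V, ℂ)) (m : ℕ) : ∃ A, 0 ≤ A ∧ (∀ x, ‖κ x‖ * (1 + ‖x‖) ^ m ≤ A) ∧
    ∀ x, ‖fderiv ℝ κ x‖ * (1 + ‖x‖) ^ m ≤ A := by
  set A := 2 ^ m * (Finset.Iic (m, 1)).sup (fun m => SchwartzMap.seminorm ℝ m.1 m.2) κ with hA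
  refine ⟨A, by positivity, fun x => ?_, fun x => ?_⟩
  · have := SchwartzMap.one_add_le_sup_seminorm_apply (𝕜 := ℝ) (m := (m, 1)) (k := m) (n := 0)
      le_rfl (by simp) κ x
    rwa [norm_iteratedFDeriv_zero, mul_comm] at this
  · have := SchwartzMap.one_add_le_sup_seminorm_apply (𝕜 := ℝ) (m := (m, 1)) (k := m) (n := 1)
      le_rfl le_rfl κ x
    rwa [norm_iteratedFDeriv_one, mul_comm] at this

lemma good_schwartz (κ : 𝓢(V, ℂ)) : ∃ A, 0 ≤ A ∧ Good A (κ : V → ℂ) := by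
  obtain ⟨A, hA, -, h⟩ := schwartz_decay κ (finrank ℝ V + 2)
  refine ⟨A * 2 ^ (finrank ℝ V + 2), by positivity, fun x y hxy => ?_⟩
  set m := finrank ℝ V + 2
  have hx : 0 < 1 + ‖x‖ := by positivity
  have hb : ∀ z ∈ segment ℝ x (x - y), ‖fderiv ℝ κ z‖ ≤ A * 2 ^ m / (1 + ‖x‖) ^ m := fun z hz => by
    obtain ⟨t, ht, rfl⟩ := (segment_eq_image' ℝ x (x - y)) ▸ hz
    have h1 : 1 + ‖x‖ ≤ 2 * (1 + ‖x + t • (x - y - x)‖) := by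
      have h2 : ‖x‖ ≤ ‖x + t • (x - y - x)‖ + ‖t • y‖ := by
        calc ‖x‖ = ‖(x + t • (x - y - x)) + t • y‖ := by congr 1; simp [smul_neg]
          _ ≤ _ := norm_add_le _ _
      have h3 : ‖t • y‖ ≤ ‖y‖ := by
        rw [norm_smul, Real.norm_of_nonneg ht.1]
        exact mul_le_of_le_one_left (norm_nonneg _) ht.2
      linarith
    rw [le_div_iff₀ (by positivity)]
    calc _ ≤ ‖fderiv ℝ κ (x + t • (x - y - x))‖ * (2 * (1 + ‖x + t • (x - y - x)‖)) ^ m := by gcongr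
      _ = ‖fderiv ℝ κ (x + t • (x - y - x))‖ * (1 + ‖x + t • (x - y - x)‖) ^ m * 2 ^ m := by
          rw [mul_pow]; ring
      _ ≤ _ := by gcongr; exact h _
  have := (convex_segment x (x - y)).norm_image_sub_le_of_norm_fderiv_le
    (fun z _ => κ.differentiableAt) hb (left_mem_segment _ _ _) (right_mem_segment _ _ _)
  rw [sub_sub_cancel_left, norm_neg, div_mul_eq_mul_div, le_div_iff₀ (by positivity)] at this
  exact this

lemma good_Phi : ∃ A, 0 ≤ A ∧ Good A (fun x : V => (Phi 1 x : ℂ)) := by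
  set m := finrank ℝ V + 2 with hm
  refine ⟨m * 2 ^ (2 * m), by positivity, fun x y hxy => ?_⟩
  set a := 1 + ‖x‖ with ha
  set b := 1 + ‖x - y‖ with hb
  have ha0 : 0 < a := by positivity
  have hb0 : 0 < b := by positivity
  have hab : |a - b| ≤ ‖y‖ := by
    rw [ha, hb, add_sub_add_left_eq_sub]
    have := abs_norm_sub_norm_le x (x - y)
    rwa [sub_sub_cancel] at this
  have hba : a ≤ 2 * b := by have := (abs_le.1 hab).2; linarith
  have hmax : max |a| |b| ≤ 2 * b := by
    rw [abs_of_pos ha0, abs_of_pos hb0]; exact max_le hba (by linarith)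
  have h1 := abs_pow_sub_pow_le a b m
  have h2 : ‖(Phi 1 (x - y) : ℂ) - (Phi 1 x : ℂ)‖ = |a ^ m - b ^ m| / (a ^ m * b ^ m) := by
    rw [← Complex.ofReal_sub, Complex.norm_real, Real.norm_eq_abs]
    simp only [Phi, one_pow, one_mul, ← hm, ← ha, ← hb]
    rw [div_sub_div _ _ (by positivity) (by positivity), abs_div, abs_of_pos (a := b ^ m * a ^ m)
      (by positivity), one_mul, mul_one, mul_comm (b ^ m)]
  rw [h2, mul_comm (a ^ m), ← div_div, div_mul_cancel₀ _ (by positivity), div_le_iff₀ (by positivity)]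
  have h3 : (max |a| |b|) ^ (m - 1) ≤ 2 ^ (2 * m) * b ^ m := by
    calc _ ≤ (2 * b) ^ (m - 1) := by gcongr
      _ ≤ (2 * b) ^ (m - 1) * (2 * b) := le_mul_of_one_le_right (by positivity) (by
          have : 1 ≤ b := by rw [hb]; linarith [norm_nonneg (x - y)]
          linarith)
      _ = (2 * b) ^ m := by rw [← pow_succ]; congr 1
      _ = 2 ^ m * b ^ m := mul_pow _ _ _
      _ ≤ _ := by gcongr <;> [norm_num; omega]
  calc _ ≤ |a - b| * m * (max |a| |b|) ^ (m - 1) := h1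
    _ ≤ ‖y‖ * m * (2 ^ (2 * m) * b ^ m) := by gcongr
    _ = _ := by ring

/-- The dilation of a Schwartz function, as a Schwartz function. -/
noncomputable def dilS (k : ℤ) (κ : 𝓢(V, ℂ)) : 𝓢(V, ℂ) :=
  ((((2 : ℝ) ^ k) ^ finrank ℝ V : ℝ) : ℂ) • SchwartzMap.compCLMOfContinuousLinearEquiv ℂ
    (ContinuousLinearEquiv.smulLeft (R₁ := ℝ) (M₁ := V)
      (Units.mk0 ((2 : ℝ) ^ k) (by positivity))) κ

lemma dilS_apply (k : ℤ) (κ : 𝓢(V, ℂ)) (x : V) : dilS k κ x = dil k κ x := rfl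

lemma fourier_dil (k : ℤ) (κ : V → ℂ) (ξ : V) :
    𝓕 (dil k κ) ξ = 𝓕 κ (((2 : ℝ) ^ k)⁻¹ • ξ) := by
  set ρ : ℝ := (2 : ℝ) ^ k with hρ
  have hρ0 : 0 < ρ := by positivity
  rw [Real.fourier_eq', Real.fourier_eq']
  have h := Measure.integral_comp_smul_of_nonneg (volume : Measure V)
    (fun v => Complex.exp (((-2 * π * inner ℝ v (ρ⁻¹ • ξ) : ℝ) : ℂ) * Complex.I) • κ v) ρ
    (hR := hρ0.le)
  have h2 : ∀ v : V, Complex.exp (((-2 * π * inner ℝ v ξ : ℝ) : ℂ) * Complex.I) • dil k κ v =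
      ((ρ ^ finrank ℝ V : ℝ) : ℂ) * (Complex.exp (((-2 * π * inner ℝ (ρ • v) (ρ⁻¹ • ξ) : ℝ) : ℂ) *
        Complex.I) • κ (ρ • v)) := fun v => by
    rw [real_inner_smul_left, real_inner_smul_right, mul_inv_cancel_left₀ hρ0.ne']
    simp only [dil, smul_eq_mul, ← hρ]; ring
  simp only [h2]
  rw [integral_const_mul, h, Complex.real_smul, ← mul_assoc, ← Complex.ofReal_mul,
    mul_inv_cancel₀ (by positivity), Complex.ofReal_one, one_mul]

/-- The operator-valued Schwartz kernel `∑_{k ∈ S} κ_k B_k`. -/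
noncomputable def famS (κ : 𝓢(V, ℂ)) (S : Finset ℤ) (B : ℤ → E →L[ℂ] F) : 𝓢(V, E →L[ℂ] F) :=
  ∑ k ∈ S, (dilS k κ).postcompCLM (ContinuousLinearMap.toSpanSingleton ℂ (B k))

lemma famS_apply (κ : 𝓢(V, ℂ)) (S : Finset ℤ) (B : ℤ → E →L[ℂ] F) (x : V) :
    famS κ S B x = ∑ k ∈ S, dil k κ x • B k := by
  simp [famS, dilS_apply]

lemma fourier_famS (κ : 𝓢(V, ℂ)) (S : Finset ℤ) (B : ℤ → E →L[ℂ] F) (ξ : V) :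
    𝓕 (famS κ S B : V → E →L[ℂ] F) ξ = ∑ k ∈ S, 𝓕 (κ : V → ℂ) (((2 : ℝ) ^ k)⁻¹ • ξ) • B k := by
  have h1 : ∀ v, (famS κ S B : V → E →L[ℂ] F) v = ∑ k ∈ S, dil k κ v • B k := famS_apply κ S B
  have hi : ∀ k, Integrable fun v : V => Complex.exp (((-2 * π * inner ℝ v ξ : ℝ) : ℂ) * Complex.I) •
      dil k κ v := fun k => by
    have := (Real.fourierIntegral_convergent_iff (f := dilS k κ) ξ).2
      ((dilS k κ).integrable (μ := volume))
    refine this.congr (ae_of_all _ fun v => ?_)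
    simp only [Circle.smul_def, Real.fourierChar_apply]
    congr 3
    push_cast; ring
  rw [Real.fourier_eq']
  simp only [h1, Finset.smul_sum, ← smul_assoc]
  rw [integral_finsetSum _ fun k _ => (hi k).smul_const _]
  refine Finset.sum_congr rfl fun k _ => ?_
  rw [integral_smul_const, ← fourier_dil, Real.fourier_eq']

/-- Dyadic families of dilates of a Schwartz function, with operator coefficients of norm at
most one, are Calderón–Zygmund kernels uniformly in the set of scales. Vanishing of the Fourier
transform at `0` gives the `L²` bound. -/
theorem cz_family (κ : 𝓢(V, ℂ)) (h0 : ∃ C, ∀ ξ, ‖𝓕 (κ : V → ℂ) ξ‖ ≤ C * ‖ξ‖) :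
    ∃ A, 0 ≤ A ∧ ∀ (S : Finset ℤ) {E F : Type} [NormedAddCommGroup E] [InnerProductSpace ℂ E]
      [CompleteSpace E] [NormedAddCommGroup F] [InnerProductSpace ℂ F] [CompleteSpace F]
      {B : ℤ → E →L[ℂ] F}, (∀ k, ‖B k‖ ≤ 1) → CZ A (fun x => ∑ k ∈ S, dil k κ x • B k) := by
  obtain ⟨A₁, hA₁, hg⟩ := good_schwartz κ
  obtain ⟨C, hC⟩ := h0
  obtain ⟨C', hC'0, hC', -⟩ := schwartz_decay (𝓕 κ) 1
  set M := max (max C C') 0 with hM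
  have hM0 : 0 ≤ M := le_max_right _ _
  refine ⟨cSum * A₁ + cSum * M, by have := cSum_nonneg; positivity,
    fun S E F _ _ _ _ _ _ B hB => ?_⟩
  have hK : (fun x => ∑ k ∈ S, dil k κ x • B k) = ⇑(famS κ S B) := by
    funext x; rw [famS_apply]
  refine ⟨?_, ?_, fun x y hxy => ?_, fun f hf hi => ?_⟩
  · rw [hK]; exact (famS κ S B).continuous
  · rw [hK]; exact (famS κ S B).integrable
  · refine (hor_family hA₁ hg S hB hxy).trans ?_
    gcongr
    have := cSum_nonneg
    exact le_add_of_nonneg_right (by positivity)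
  · rw [hK]
    refine l2_symbol _ (fun ξ => ?_) hf hi
    refine le_trans ?_ (le_add_of_nonneg_left (mul_nonneg cSum_nonneg hA₁))
    rw [fourier_famS]
    have hz : ∀ ξ, ‖𝓕 (κ : V → ℂ) ξ‖ ≤ M * min ‖ξ‖ ‖ξ‖⁻¹ := fun ξ => by
      rw [mul_min_of_nonneg _ _ hM0]
      refine le_min ((hC ξ).trans ?_) ?_
      · gcongr; exact (le_max_left _ _).trans (le_max_left _ _)
      · rcases (norm_nonneg ξ).eq_or_lt' with hx | hx
        · have := hC ξ
          rw [hx, mul_zero] at this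
          simpa [hx] using this
        · rw [← div_eq_mul_inv, le_div_iff₀ hx]
          have h1 := hC' ξ
          rw [pow_one] at h1
          calc _ ≤ ‖𝓕 (κ : V → ℂ) ξ‖ * (1 + ‖ξ‖) := by gcongr; linarith
            _ ≤ C' := h1
            _ ≤ M := (le_max_right _ _).trans (le_max_left _ _)
    refine (norm_sum_le _ _).trans ?_
    rcases (norm_nonneg ξ).eq_or_lt' with hx | hx
    · have hx' : ξ = 0 := norm_eq_zero.1 hx
      have h2 : 𝓕 (κ : V → ℂ) 0 = 0 := by
        have := hC 0; rw [norm_zero, mul_zero] at this; exact norm_le_zero_iff.1 this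
      simp only [hx', smul_zero, h2, zero_smul, norm_zero, Finset.sum_const_zero]
      exact mul_nonneg cSum_nonneg hM0
    · calc _ ≤ ∑ k ∈ S, M * min ((2 : ℝ) ^ k * ‖ξ‖⁻¹) ((2 : ℝ) ^ k * ‖ξ‖⁻¹)⁻¹ := by
            refine Finset.sum_le_sum fun k _ => ?_
            rw [norm_smul]
            refine (mul_le_of_le_one_right (norm_nonneg _) (hB k)).trans ((hz _).trans_eq ?_)
            have : ‖((2 : ℝ) ^ k)⁻¹ • ξ‖ = ((2 : ℝ) ^ k * ‖ξ‖⁻¹)⁻¹ := by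
              rw [norm_smul, Real.norm_of_nonneg (by positivity), mul_inv, inv_inv]
            rw [this, inv_inv, min_comm]
        _ ≤ _ := by
            rw [← Finset.mul_sum, mul_comm cSum]
            gcongr
            exact sum_min_le S (inv_pos.2 hx)

end

end LCR

namespace LCR
set_option linter.unusedSectionVars false
open Filter Topology Module Metric
open scoped SchwartzMap ContDiff Convolution

/-! ### Littlewood–Paley pieces of inverse Fourier transforms -/

section
variable {V : Type} [NormedAddCommGroup V] [InnerProductSpace ℝ V] [FiniteDimensional ℝ V]
  [MeasurableSpace V] [BorelSpace V]

/-- A symbol smooth away from the origin, localised to an annulus, is the Fourier transform of a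
Schwartz function. -/
lemma exists_symbol {a θ : V → ℂ} (ha : ∀ ξ, ξ ≠ 0 → ContDiffAt ℝ ((⊤ : ℕ∞) : WithTop ℕ∞) a ξ)
    (hθ : ContDiff ℝ ((⊤ : ℕ∞) : WithTop ℕ∞) θ) (hc : HasCompactSupport θ) {r : ℝ} (hr : 0 < r)
    (h0 : ∀ ξ, ‖ξ‖ < r → θ ξ = 0) :
    ∃ κ : 𝓢(V, ℂ), (∀ ξ, 𝓕 (κ : V → ℂ) ξ = a ξ * θ ξ) ∧ ∃ C, ∀ ξ, ‖𝓕 (κ : V → ℂ) ξ‖ ≤ C * ‖ξ‖ := by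
  have hs : ContDiff ℝ ((⊤ : ℕ∞) : WithTop ℕ∞) (fun ξ => a ξ * θ ξ) := by
    rw [contDiff_iff_contDiffAt]
    intro ξ
    by_cases hξ : ξ = 0
    · have : (fun ξ => a ξ * θ ξ) =ᶠ[𝓝 ξ] fun _ => (0 : ℂ) := by
        filter_upwards [ball_mem_nhds ξ hr] with η hη
        rw [hξ, mem_ball_zero_iff] at hη
        rw [h0 η hη, mul_zero]
      exact contDiffAt_const.congr_of_eventuallyEq this
    · exact (ha ξ hξ).mul hθ.contDiffAt
  have hcs : HasCompactSupport (fun ξ => a ξ * θ ξ) := hc.mul_left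
  set m : 𝓢(V, ℂ) := hcs.toSchwartzMap hs with hm
  have hma : ∀ ξ, m ξ = a ξ * θ ξ := fun ξ => rfl
  have hF : ∀ ξ, 𝓕 ((𝓕⁻ m : 𝓢(V, ℂ)) : V → ℂ) ξ = m ξ := fun ξ => by
    rw [← SchwartzMap.fourier_coe, fourier_fourierInv_eq]
  refine ⟨𝓕⁻ m, fun ξ => (hF ξ).trans (hma ξ), ?_⟩
  obtain ⟨A, hA, hb, -⟩ := schwartz_decay m 0
  refine ⟨A / r, fun ξ => ?_⟩
  rw [hF]
  rcases lt_or_ge ‖ξ‖ r with h | h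
  · rw [hma, h0 ξ h, mul_zero, norm_zero]; positivity
  · have := hb ξ
    rw [pow_zero, mul_one] at this
    rw [div_mul_eq_mul_div, le_div_iff₀ hr]
    gcongr

/-- Convolution with a kernel at scale `2^{-k}`. -/
noncomputable def lp (k : ℤ) (κ : V → ℂ) (u : V → ℂ) (x : V) : ℂ := ∫ y, dil k κ (x - y) * u y

lemma fourierInv_bound {v : V → ℂ} (x : V) : ‖𝓕⁻ v x‖ ≤ ∫ ξ, ‖v ξ‖ := by
  rw [Real.fourierInv_eq]
  refine (norm_integral_le_integral_norm _).trans_eq ?_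
  simp

lemma continuous_fourierInv {v : V → ℂ} (hv : Integrable v) : Continuous (𝓕⁻ v) := by
  have h : Continuous (𝓕 v) :=
    VectorFourier.fourierIntegral_continuous Real.continuous_fourierChar
      (by exact continuous_inner) hv
  have : 𝓕⁻ v = fun x => 𝓕 v (-x) := by
    funext x; rw [Real.fourierInv_eq_fourier_neg]
  rw [this]
  exact h.comp continuous_neg

lemma BM_fourierInv {v : V → ℂ} (hv : Integrable v) : BM (𝓕⁻ v) :=
  ⟨(continuous_fourierInv hv).stronglyMeasurable, _, fourierInv_bound⟩

/-- Convolution acts as multiplication on the Fourier side. -/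
lemma conv_fourierInv (κ : 𝓢(V, ℂ)) {v : V → ℂ} (hv : Integrable v) (x : V) :
    ∫ y, κ (x - y) * 𝓕⁻ v y = 𝓕⁻ (fun ξ => 𝓕 (κ : V → ℂ) ξ * v ξ) x := by
  have hinteg : Integrable (Function.uncurry fun (y ξ : V) =>
      κ (x - y) * (Real.fourierChar (inner ℝ ξ y) • v ξ)) (volume.prod volume) := by
    have h1 : Integrable fun y => κ (x - y) := (κ.integrable (μ := volume)).comp_sub_left x
    have h2 := h1.mul_prod hv
    have hc : Continuous fun z : V × V => (Real.fourierChar (inner ℝ z.2 z.1) : ℂ) := by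
      have := Real.continuous_fourierChar
      fun_prop
    refine (h2.bdd_mul (c := 1) hc.aestronglyMeasurable (ae_of_all _ fun z => (Circle.norm_coe _).le)).congr
      (ae_of_all _ fun z => ?_)
    simp only [Function.uncurry, Circle.smul_def, smul_eq_mul]; ring
  have e1 : ∀ y, κ (x - y) * 𝓕⁻ v y =
      ∫ ξ, κ (x - y) * (Real.fourierChar (inner ℝ ξ y) • v ξ) := fun y => by
    rw [integral_const_mul, Real.fourierInv_eq]
  simp only [e1]
  rw [integral_integral_swap hinteg, Real.fourierInv_eq]
  refine integral_congr_ae (ae_of_all _ fun ξ => ?_)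
  simp only []
  have e2 : ∀ y, κ (x - y) * (Real.fourierChar (inner ℝ ξ y) • v ξ) =
      (Real.fourierChar (inner ℝ ξ x) • v ξ) *
        (Real.fourierChar (-inner ℝ (x - y) ξ) • κ (x - y)) := fun y => by
    have : inner ℝ ξ y = inner ℝ ξ x + -inner ℝ (x - y) ξ := by
      rw [real_inner_comm ξ (x - y), inner_sub_right]; ring
    rw [this, AddChar.map_add_eq_mul]
    simp only [Circle.smul_def, smul_eq_mul, Circle.coe_mul]; ring
  simp only [e2]
  rw [integral_const_mul, integral_sub_left_eq_self (fun z => Real.fourierChar (-inner ℝ z ξ) • κ z)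
    volume x, ← Real.fourier_eq]
  simp only [Circle.smul_def, smul_eq_mul]; ring

lemma lp_fourierInv (k : ℤ) (κ : 𝓢(V, ℂ)) {v : V → ℂ} (hv : Integrable v) (x : V) :
    lp k κ (𝓕⁻ v) x = 𝓕⁻ (fun ξ => 𝓕 (κ : V → ℂ) (((2 : ℝ) ^ k)⁻¹ • ξ) * v ξ) x := by
  have := conv_fourierInv (dilS k κ) hv x
  simp only [lp]
  simp only [← fourier_dil]
  exact this

/-- The Littlewood–Paley bump: equal to `1` on the unit ball and to `0` outside the ball of
radius `2`. -/
noncomputable def chi (ξ : V) : ℝ := (⟨1, 2, one_pos, one_lt_two⟩ : ContDiffBump (0 : V)) ξ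

lemma chi_one {ξ : V} (h : ‖ξ‖ ≤ 1) : chi ξ = 1 :=
  ContDiffBump.one_of_mem_closedBall _ (by rwa [mem_closedBall_zero_iff])

lemma chi_zero {ξ : V} (h : 2 ≤ ‖ξ‖) : chi ξ = 0 :=
  ContDiffBump.zero_of_le_dist _ (by rwa [dist_zero_right])

lemma chi_nonneg (ξ : V) : 0 ≤ chi ξ := ContDiffBump.nonneg _
lemma chi_le_one (ξ : V) : chi ξ ≤ 1 := ContDiffBump.le_one _

lemma contDiff_chi : ContDiff ℝ ((⊤ : ℕ∞) : WithTop ℕ∞) (chi : V → ℝ) := ContDiffBump.contDiff _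

/-- The Littlewood–Paley annular cutoff. -/
noncomputable def th (ξ : V) : ℂ := (chi ξ - chi ((2 : ℝ) • ξ) : ℝ)

/-- A wider annular cutoff, equal to `1` on the support of `th`. -/
noncomputable def th' (ξ : V) : ℂ := (chi ((2 : ℝ)⁻¹ • ξ) - chi ((4 : ℝ) • ξ) : ℝ)

lemma th_small {ξ : V} (h : ‖ξ‖ ≤ 1 / 2) : th ξ = 0 := by
  rw [th, chi_one (by linarith), chi_one, sub_self, Complex.ofReal_zero]
  rw [norm_smul, Real.norm_of_nonneg (by norm_num)]; linarith

lemma th_large {ξ : V} (h : 2 ≤ ‖ξ‖) : th ξ = 0 := by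
  rw [th, chi_zero (by linarith), chi_zero, sub_self, Complex.ofReal_zero]
  rw [norm_smul, Real.norm_of_nonneg (by norm_num)]; linarith

lemma th'_small {ξ : V} (h : ‖ξ‖ < 1 / 4) : th' ξ = 0 := by
  rw [th', chi_one, chi_one, sub_self, Complex.ofReal_zero] <;>
  rw [norm_smul, Real.norm_of_nonneg (by norm_num)] <;> linarith

lemma th'_large {ξ : V} (h : 4 ≤ ‖ξ‖) : th' ξ = 0 := by
  rw [th', chi_zero, chi_zero, sub_self, Complex.ofReal_zero] <;>
  rw [norm_smul, Real.norm_of_nonneg (by norm_num)] <;> linarith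

lemma th'_mul_th (ξ : V) : th' ξ * th ξ = th ξ := by
  rcases le_total ‖ξ‖ (1 / 2) with h | h
  · rw [th_small h, mul_zero]
  rcases le_total 2 ‖ξ‖ with h2 | h2
  · rw [th_large h2, mul_zero]
  rw [th', chi_one, chi_zero, sub_zero, Complex.ofReal_one, one_mul] <;>
  rw [norm_smul, Real.norm_of_nonneg (by norm_num)] <;> linarith

lemma contDiff_th : ContDiff ℝ ((⊤ : ℕ∞) : WithTop ℕ∞) (th : V → ℂ) := by
  refine Complex.ofRealCLM.contDiff.comp ?_
  exact contDiff_chi.sub (contDiff_chi.comp (contDiff_const_smul _))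

lemma contDiff_th' : ContDiff ℝ ((⊤ : ℕ∞) : WithTop ℕ∞) (th' : V → ℂ) := by
  refine Complex.ofRealCLM.contDiff.comp ?_
  exact (contDiff_chi.comp (contDiff_const_smul _)).sub (contDiff_chi.comp (contDiff_const_smul _))

lemma compact_th : HasCompactSupport (th : V → ℂ) :=
  HasCompactSupport.intro (isCompact_closedBall (0 : V) 2) fun ξ h => th_large (by
    rw [mem_closedBall_zero_iff, not_le] at h; exact h.le)

lemma compact_th' : HasCompactSupport (th' : V → ℂ) :=
  HasCompactSupport.intro (isCompact_closedBall (0 : V) 4) fun ξ h => th'_large (by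
    rw [mem_closedBall_zero_iff, not_le] at h; exact h.le)

/-- Symmetric ranges of dyadic scales. -/
noncomputable abbrev rg (N : ℕ) : Finset ℤ := Finset.Icc (-(N : ℤ)) N

/-- The dyadic sum of the cutoffs `th` telescopes. -/
lemma sum_th (N : ℕ) (ξ : V) : ∑ k ∈ rg N, th (((2 : ℝ) ^ k)⁻¹ • ξ) =
    ((chi (((2 : ℝ) ^ N)⁻¹ • ξ) - chi ((2 : ℝ) ^ (N + 1) • ξ) : ℝ) : ℂ) := by
  have key : ∀ m : ℤ, th (((2 : ℝ) ^ m)⁻¹ • ξ) =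
      ((chi (((2 : ℝ) ^ m)⁻¹ • ξ) - chi (((2 : ℝ) ^ (m - 1))⁻¹ • ξ) : ℝ) : ℂ) := fun m => by
    rw [th, smul_smul, zpow_sub_one₀ two_ne_zero, mul_inv, inv_inv, mul_comm (2 : ℝ)]
  induction N with
  | zero => 
    simp only [rg, Nat.cast_zero, neg_zero, Finset.Icc_self, Finset.sum_singleton]
    rw [key]; simp
  | succ N ih =>
    have : rg (N + 1) = insert (-((N : ℤ) + 1)) (insert ((N : ℤ) + 1) (rg N)) := by
      ext k; simp only [rg, Finset.mem_Icc, Finset.mem_insert]; push_cast; omega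
    rw [this, Finset.sum_insert (by simp [rg]; omega), Finset.sum_insert (by simp [rg]), ih, key,
      key, ← Complex.ofReal_add, ← Complex.ofReal_add]
    congr 1
    have e1 : ((2 : ℝ) ^ (-((N : ℤ) + 1)))⁻¹ = 2 ^ (N + 1) := by
      rw [zpow_neg, inv_inv]; norm_cast
    have e2 : ((2 : ℝ) ^ (-((N : ℤ) + 1) - 1))⁻¹ = 2 ^ (N + 1 + 1) := by
      rw [← neg_add', zpow_neg, inv_inv]; norm_cast
    have e3 : (2 : ℝ) ^ ((N : ℤ) + 1 - 1) = 2 ^ N := by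
      rw [add_sub_cancel_right, zpow_natCast]
    have e4 : (2 : ℝ) ^ ((N : ℤ) + 1) = 2 ^ (N + 1) := by norm_cast
    rw [e1, e2, e3, e4]; ring

lemma norm_sum_th (N : ℕ) (ξ : V) : ‖∑ k ∈ rg N, th (((2 : ℝ) ^ k)⁻¹ • ξ)‖ ≤ 1 := by
  rw [sum_th, Complex.norm_real, Real.norm_eq_abs, abs_le]
  have := chi_nonneg (((2 : ℝ) ^ N)⁻¹ • ξ)
  have := chi_nonneg ((2 : ℝ) ^ (N + 1) • ξ)
  have := chi_le_one (((2 : ℝ) ^ N)⁻¹ • ξ)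
  have := chi_le_one ((2 : ℝ) ^ (N + 1) • ξ)
  constructor <;> linarith

lemma tendsto_sum_th {ξ : V} (hξ : ξ ≠ 0) :
    Tendsto (fun N => ∑ k ∈ rg N, th (((2 : ℝ) ^ k)⁻¹ • ξ)) atTop (𝓝 1) := by
  have hp : 0 < ‖ξ‖ := norm_pos_iff.2 hξ
  have ht : Tendsto (fun N : ℕ => (2 : ℝ) ^ N) atTop atTop :=
    tendsto_pow_atTop_atTop_of_one_lt one_lt_two
  refine tendsto_const_nhds.congr' ?_
  filter_upwards [ht.eventually_ge_atTop ‖ξ‖, ht.eventually_ge_atTop (‖ξ‖⁻¹)] with N h1 h2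
  have h2N : (0 : ℝ) < 2 ^ N := by positivity
  rw [sum_th, chi_one, chi_zero, sub_zero, Complex.ofReal_one]
  · rw [norm_smul, Real.norm_of_nonneg (by positivity), pow_succ]
    rw [inv_le_iff_one_le_mul₀ hp] at h2
    linarith
  · rw [norm_smul, Real.norm_of_nonneg (by positivity), inv_mul_le_iff₀ h2N]
    linarith

lemma norm_th_le (ξ : V) : ‖(th ξ : ℂ)‖ ≤ 1 := by
  rw [th, Complex.norm_real, Real.norm_eq_abs, abs_le]
  have := chi_nonneg ξ
  have := chi_nonneg ((2 : ℝ) • ξ)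
  have := chi_le_one ξ
  have := chi_le_one ((2 : ℝ) • ξ)
  constructor <;> linarith

/-- Littlewood–Paley reconstruction. -/
lemma tendsto_lp [Nontrivial V] {v : V → ℂ} (hv : Integrable v) (x : V) :
    Tendsto (fun N => 𝓕⁻ (fun ξ => (∑ k ∈ rg N, th (((2 : ℝ) ^ k)⁻¹ • ξ)) * v ξ) x) atTop
      (𝓝 (𝓕⁻ v x)) := by
  simp only [Real.fourierInv_eq]
  have hth : Continuous (th : V → ℂ) := contDiff_th.continuous
  refine tendsto_integral_of_dominated_convergence (fun ξ => ‖v ξ‖) (fun N => ?_) hv.norm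
    (fun N => ae_of_all _ fun ξ => ?_) ?_
  · have hc : Continuous fun ξ : V => (Real.fourierChar (inner ℝ ξ x) : ℂ) *
        (∑ k ∈ rg N, th (((2 : ℝ) ^ k)⁻¹ • ξ)) := by
      have := Real.continuous_fourierChar
      fun_prop
    refine (hc.aestronglyMeasurable.mul hv.aestronglyMeasurable).congr (ae_of_all _ fun ξ => ?_)
    simp only [Pi.mul_apply, Circle.smul_def, smul_eq_mul, mul_assoc]
  · rw [Circle.norm_smul, norm_mul]
    exact mul_le_of_le_one_left (norm_nonneg _) (norm_sum_th N ξ)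
  · have : ∀ᵐ ξ : V, ξ ≠ 0 := by simp [ae_iff]
    filter_upwards [this] with ξ hξ
    have h := (((tendsto_sum_th hξ).mul_const (v ξ)).const_smul (Real.fourierChar (inner ℝ ξ x)))
    rwa [one_mul] at h

end
end LCR

namespace LCR
set_option linter.unusedSectionVars false
open Filter Topology Module Metric
open scoped SchwartzMap

/-! ### Square functions and synthesis -/

/-- The `ℓ²` norm of a sequence indexed by dyadic scales. -/
noncomputable def sq2 (u : ℤ → ℝ≥0∞) : ℝ≥0∞ := (∑' k, u k ^ 2) ^ (1 / 2 : ℝ)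

/-- The `ℓ²` norm over finitely many dyadic scales. -/
noncomputable def sqf (S : Finset ℤ) (u : ℤ → ℝ≥0∞) : ℝ≥0∞ := (∑ k ∈ S, u k ^ 2) ^ (1 / 2 : ℝ)

lemma sqf_le_sq2 (S : Finset ℤ) (u : ℤ → ℝ≥0∞) : sqf S u ≤ sq2 u :=
  ENNReal.rpow_le_rpow (ENNReal.sum_le_tsum _) (by norm_num)

lemma sq2_mono {u v : ℤ → ℝ≥0∞} (h : ∀ k, u k ≤ v k) : sq2 u ≤ sq2 v := by
  refine ENNReal.rpow_le_rpow (ENNReal.tsum_le_tsum fun k => ?_) (by norm_num)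
  gcongr; exact h k

lemma sqf_mono {S : Finset ℤ} {u v : ℤ → ℝ≥0∞} (h : ∀ k, u k ≤ v k) : sqf S u ≤ sqf S v := by
  refine ENNReal.rpow_le_rpow (Finset.sum_le_sum fun k _ => ?_) (by norm_num)
  gcongr; exact h k

lemma sq2_eq (u : ℤ → ℝ≥0∞) : sq2 u = (∫⁻ k, u k ^ (2 : ℝ) ∂Measure.count) ^ (1 / 2 : ℝ) := by
  rw [lintegral_count]; simp [sq2]

lemma sq2_add_le (u v : ℤ → ℝ≥0∞) : sq2 (fun k => u k + v k) ≤ sq2 u + sq2 v := by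
  rw [sq2_eq, sq2_eq, sq2_eq]
  exact ENNReal.lintegral_Lp_add_le (Measurable.of_discrete).aemeasurable
    (Measurable.of_discrete).aemeasurable one_le_two

lemma sq2_const_mul (c : ℝ≥0∞) (u : ℤ → ℝ≥0∞) : sq2 (fun k => c * u k) = c * sq2 u := by
  simp only [sq2, mul_pow]
  rw [ENNReal.tsum_mul_left, ENNReal.mul_rpow_of_nonneg _ _ (by norm_num)]
  congr 1
  rw [← ENNReal.rpow_natCast, ← ENNReal.rpow_mul]; norm_num

/-- The discrete Young inequality `‖c * G‖_{ℓ²} ≤ ‖c‖_{ℓ¹}‖G‖_{ℓ²}`. -/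
lemma sq2_conv_le (c G : ℤ → ℝ≥0∞) :
    sq2 (fun k => ∑' j, c (k - j) * G j) ≤ (∑' m, c m) * sq2 G := by
  let e : ℕ ≃ ℤ := (Denumerable.eqv ℤ).symm
  have h1 : ∀ k, ∑' j, c (k - j) * G j = ∑' m : ℕ, c (e m) * G (k - e m) := fun k => by
    rw [e.tsum_eq fun m => c m * G (k - m), ← (Equiv.subLeft k).tsum_eq fun m => c m * G (k - m)]
    simp
  simp only [h1]
  rw [sq2_eq]
  have h2 := lintegral_Lp_tsum_le (μ := (Measure.count : Measure ℤ)) one_le_two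
    (fun (m : ℕ) (k : ℤ) => c (e m) * G (k - e m)) fun m => Measurable.of_discrete
  refine h2.trans_eq ?_
  have h3 : ∀ m, (∫⁻ k, (c (e m) * G (k - e m)) ^ (2 : ℝ) ∂Measure.count) ^ (1 / 2 : ℝ) =
      c (e m) * sq2 G := fun m => by
    rw [← sq2_eq, sq2_const_mul]
    congr 1
    exact congrArg (· ^ (1 / 2 : ℝ)) ((Equiv.subRight (e m)).tsum_eq fun k => G k ^ 2)
  simp only [h3]
  rw [ENNReal.tsum_mul_right, e.tsum_eq c]

/-- Monotone convergence of truncated `ℓ²` norms. -/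
lemma tendsto_sqf {F : ℕ → ℤ → ℝ≥0∞} {G : ℤ → ℝ≥0∞} (hm : ∀ k, Monotone fun N => F N k)
    (ht : ∀ k, Tendsto (fun N => F N k) atTop (𝓝 (G k))) :
    Tendsto (fun N => sqf (rg N) (F N)) atTop (𝓝 (sq2 G)) := by
  refine (ENNReal.continuous_rpow_const.tendsto _).comp ?_
  have h1 : ∀ N, ∑ k ∈ rg N, F N k ^ 2 =
      ∫⁻ k, (if k ∈ rg N then F N k ^ 2 else 0) ∂Measure.count := fun N => by
    rw [lintegral_count, tsum_eq_sum (s := rg N) fun k hk => if_neg hk]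
    exact Finset.sum_congr rfl fun k hk => by rw [if_pos hk]
  simp only [h1]
  rw [← lintegral_count]
  refine lintegral_tendsto_of_tendsto_of_monotone (fun N => Measurable.of_discrete.aemeasurable)
    (ae_of_all _ fun k N M hNM => ?_) (ae_of_all _ fun k => ?_)
  · dsimp only
    split_ifs with h1 h2
    · have := hm k hNM
      dsimp only at this
      gcongr
    · simp only [rg, Finset.mem_Icc] at h1 h2; omega
    · exact bot_le
    · exact le_rfl
  · refine ((ENNReal.continuous_pow 2).tendsto _ |>.comp (ht k)).congr' ?_
    filter_upwards [eventually_ge_atTop k.natAbs] with N hN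
    rw [if_pos]; · rfl
    simp only [rg, Finset.mem_Icc]; omega

section
variable {V : Type} [NormedAddCommGroup V] [InnerProductSpace ℝ V] [FiniteDimensional ℝ V]
  [MeasurableSpace V] [BorelSpace V]

/-- The vector `(u_k(x))_{k ∈ S}` of `ℓ²(S)`. -/
noncomputable def vec (S : Finset ℤ) (u : ℤ → V → ℂ) (x : V) : EuclideanSpace ℂ S :=
  WithLp.toLp 2 fun i => u i x

/-- The standard basis of `ℓ²(S)`, extended by zero to all scales. -/
noncomputable def eb (S : Finset ℤ) (k : ℤ) : EuclideanSpace ℂ S :=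
  WithLp.toLp 2 fun i => if (i : ℤ) = k then 1 else 0

lemma norm_eb_le (S : Finset ℤ) (k : ℤ) : ‖eb S k‖ ≤ 1 := by
  rw [EuclideanSpace.norm_eq, Real.sqrt_le_one]
  by_cases h : k ∈ S
  · rw [Finset.sum_eq_single (⟨k, h⟩ : S)]
    · simp [eb]
    · intro b _ hb
      have : (b : ℤ) ≠ k := fun h' => hb (Subtype.ext h')
      simp [eb, this]
    · simp
  · rw [Finset.sum_eq_zero]; · norm_num
    intro b _
    have : (b : ℤ) ≠ k := fun h' => h (h' ▸ b.2)
    simp [eb, this]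

lemma inner_eb (S : Finset ℤ) {k : ℤ} (hk : k ∈ S) (z : EuclideanSpace ℂ S) :
    inner ℂ (eb S k) z = z ⟨k, hk⟩ := by
  rw [PiLp.inner_apply, Finset.sum_eq_single (⟨k, hk⟩ : S)]
  · simp [eb]
  · intro b _ hb
    have : (b : ℤ) ≠ k := fun h' => hb (Subtype.ext h')
    simp [eb, this]
  · simp

lemma enorm_vec (S : Finset ℤ) (u : ℤ → V → ℂ) (x : V) : ‖vec S u x‖ₑ = sqf S fun k => ‖u k x‖ₑ := by
  rw [← ofReal_norm, EuclideanSpace.norm_eq, Real.sqrt_eq_rpow,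
    ← ENNReal.ofReal_rpow_of_nonneg (by positivity) (by norm_num), sqf]
  congr 1
  rw [ENNReal.ofReal_sum_of_nonneg fun _ _ => by positivity]
  simp only [ENNReal.ofReal_pow (norm_nonneg _), ofReal_norm]
  exact Finset.sum_coe_sort S fun k => ‖u k x‖ₑ ^ 2

lemma sum_eb (S : Finset ℤ) (u : ℤ → V → ℂ) (x : V) : ∑ k ∈ S, u k x • eb S k = vec S u x := by
  ext i
  simp only [WithLp.ofLp_sum, Finset.sum_apply, vec, eb, WithLp.ofLp_smul, Pi.smul_apply,
    smul_eq_mul, mul_ite, mul_one, mul_zero]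
  rw [Finset.sum_ite_eq, if_pos i.2]

lemma BM_vec (S : Finset ℤ) {u : ℤ → V → ℂ} (hu : ∀ k, BM (u k)) : BM (vec S u) := by
  choose M hM using fun k => (hu k).2
  refine ⟨?_, ∑ k ∈ S, M k, fun x => ?_⟩
  · have : vec S u = fun x => ∑ k ∈ S, u k x • eb S k := by funext x; rw [sum_eb]
    rw [this]
    exact Finset.stronglyMeasurable_fun_sum _ fun k _ => (hu k).1.smul_const _
  · rw [← sum_eb]
    refine (norm_sum_le _ _).trans (Finset.sum_le_sum fun k _ => ?_)
    rw [norm_smul]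
    exact (mul_le_of_le_one_right (norm_nonneg _) (norm_eb_le S k)).trans (hM k x)

lemma int_conv {κ : V → ℂ} (hκ : Continuous κ) (hi : Integrable κ) {u : V → ℂ} (hu : BM u) (x : V) :
    Integrable fun y => κ (x - y) * u y := by
  obtain ⟨M, hM⟩ := hu.2
  exact (hi.comp_sub_left x).mul_bdd (c := M) hu.1.aestronglyMeasurable
    (ae_of_all _ hM)

/-- Inclusion of the scale `k` into `ℓ²(S)`. -/
noncomputable def inE (S : Finset ℤ) (k : ℤ) : ℂ →L[ℂ] EuclideanSpace ℂ S :=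
  ContinuousLinearMap.toSpanSingleton ℂ (eb S k)

/-- Projection of `ℓ²(S)` onto the scale `k`. -/
noncomputable def prE (S : Finset ℤ) (k : ℤ) : EuclideanSpace ℂ S →L[ℂ] ℂ := innerSL ℂ (eb S k)

/-- The diagonal projection of `ℓ²(S)` onto the scale `k`. -/
noncomputable def dgE (S : Finset ℤ) (k : ℤ) : EuclideanSpace ℂ S →L[ℂ] EuclideanSpace ℂ S :=
  (inE S k).comp (prE S k)

lemma norm_inE (S : Finset ℤ) (k : ℤ) : ‖inE S k‖ ≤ 1 := by
  rw [inE, ContinuousLinearMap.norm_toSpanSingleton]; exact norm_eb_le S k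

lemma norm_prE (S : Finset ℤ) (k : ℤ) : ‖prE S k‖ ≤ 1 := by
  rw [prE, innerSL_apply_norm]; exact norm_eb_le S k

lemma norm_dgE (S : Finset ℤ) (k : ℤ) : ‖dgE S k‖ ≤ 1 :=
  (ContinuousLinearMap.opNorm_comp_le _ _).trans
    (mul_le_one₀ (norm_inE S k) (norm_nonneg _) (norm_prE S k))

/-- The truncated family of pieces of a function is convolution with one vector-valued kernel.
-/
lemma op_inE {kf : ℤ → V → ℂ} (hc : ∀ k, Continuous (kf k)) (hi : ∀ k, Integrable (kf k))
    (S : Finset ℤ) {u : V → ℂ} (hu : BM u) (x : V) :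
    op (fun x => ∑ k ∈ S, kf k x • inE S k) u x =
      vec S (fun k x => ∫ y, kf k (x - y) * u y) x := by
  rw [← sum_eb, op]
  simp only [_root_.sum_apply, _root_.smul_apply, inE,
    ContinuousLinearMap.toSpanSingleton_apply, smul_smul]
  rw [integral_finsetSum _ fun k _ => (int_conv (hc k) (hi k) hu x).smul_const _]
  exact Finset.sum_congr rfl fun k _ => integral_smul_const _ _

/-- The truncated synthesis of a family is convolution with one kernel of functionals. -/
lemma op_prE {kf : ℤ → V → ℂ} (hc : ∀ k, Continuous (kf k)) (hi : ∀ k, Integrable (kf k))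
    (S : Finset ℤ) {u : ℤ → V → ℂ} (hu : ∀ k, BM (u k)) (x : V) :
    op (fun x => ∑ k ∈ S, kf k x • prE S k) (vec S u) x = ∑ k ∈ S, ∫ y, kf k (x - y) * u k y := by
  rw [op, ← integral_finsetSum _ fun k _ => int_conv (hc k) (hi k) (hu k) x]
  refine integral_congr_ae (ae_of_all _ fun y => ?_)
  simp only [_root_.sum_apply, _root_.smul_apply, smul_eq_mul]
  refine Finset.sum_congr rfl fun k hk => ?_
  rw [prE, innerSL_apply_apply, inner_eb S hk]
  rfl

/-- Averaging each component at its own scale is convolution with a diagonal kernel. -/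
lemma op_dgE {kf : ℤ → V → ℂ} (hc : ∀ k, Continuous (kf k)) (hi : ∀ k, Integrable (kf k))
    (S : Finset ℤ) {u : ℤ → V → ℂ} (hu : ∀ k, BM (u k)) (x : V) :
    op (fun x => ∑ k ∈ S, kf k x • dgE S k) (vec S u) x =
      vec S (fun k x => ∫ y, kf k (x - y) * u k y) x := by
  have : ∀ y, (∑ k ∈ S, kf k (x - y) • dgE S k) (vec S u y) =
      ∑ k ∈ S, (kf k (x - y) * u k y) • eb S k := fun y => by
    simp only [_root_.sum_apply, _root_.smul_apply]
    refine Finset.sum_congr rfl fun k hk => ?_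
    rw [dgE, ContinuousLinearMap.comp_apply, prE, innerSL_apply_apply, inner_eb S hk, inE,
      ContinuousLinearMap.toSpanSingleton_apply, smul_smul]
    rfl
  rw [← sum_eb, op]
  simp only [this]
  rw [integral_finsetSum _ fun k _ => (int_conv (hc k) (hi k) (hu k) x).smul_const _]
  exact Finset.sum_congr rfl fun k _ => integral_smul_const _ _

lemma continuous_dilS (k : ℤ) (κ : 𝓢(V, ℂ)) : Continuous (dil k (κ : V → ℂ)) := (dilS k κ).continuous

lemma integrable_dilS (k : ℤ) (κ : 𝓢(V, ℂ)) : Integrable (dil k (κ : V → ℂ)) :=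
  (dilS k κ).integrable

/-- Littlewood–Paley: the square function is bounded on Lorentz spaces. -/
theorem lp_square {p q : ℝ} (hp : 1 < p) (hq : 1 ≤ q) [Nontrivial V] (κ : 𝓢(V, ℂ))
    (h0 : ∃ C, ∀ ξ, ‖𝓕 (κ : V → ℂ) ξ‖ ≤ C * ‖ξ‖) :
    ∃ C : ℝ≥0∞, C ≠ ∞ ∧ ∀ u : V → ℂ, BM u →
      lor volume p q (fun x => sq2 fun k => ‖lp k κ u x‖ₑ) ≤
        C * lor volume p q (fun x => ‖u x‖ₑ) := by
  obtain ⟨A, hA, hcz⟩ := cz_family κ h0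
  obtain ⟨C, hC, h⟩ := cz_lor hp hq hA V
  refine ⟨C, hC, fun u hu => lor_fatou (by linarith)
    (u := fun N x => sqf (rg N) fun k => ‖lp k κ u x‖ₑ) (fun x => ?_) fun N => ?_⟩
  · exact (tendsto_sqf (F := fun _ k => ‖lp k κ u x‖ₑ) (fun k => monotone_const)
      fun k => tendsto_const_nhds).liminf_eq.ge
  · have := h (hcz (rg N) (B := inE (rg N)) (norm_inE (rg N))) hu
    simp only [op_inE (fun k => continuous_dilS k κ) (fun k => integrable_dilS k κ) _ hu,
      enorm_vec] at this
    exact this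

/-- The dual Littlewood–Paley inequality. -/
theorem lp_synth {p q : ℝ} (hp : 1 < p) (hq : 1 ≤ q) [Nontrivial V] (κ : 𝓢(V, ℂ))
    (h0 : ∃ C, ∀ ξ, ‖𝓕 (κ : V → ℂ) ξ‖ ≤ C * ‖ξ‖) :
    ∃ C : ℝ≥0∞, C ≠ ∞ ∧ ∀ (S : Finset ℤ) (u : ℤ → V → ℂ), (∀ k, BM (u k)) →
      lor volume p q (fun x => ‖∑ k ∈ S, lp k κ (u k) x‖ₑ) ≤
        C * lor volume p q (fun x => sq2 fun k => ‖u k x‖ₑ) := by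
  obtain ⟨A, hA, hcz⟩ := cz_family κ h0
  obtain ⟨C, hC, h⟩ := cz_lor hp hq hA V
  refine ⟨C, hC, fun S u hu => ?_⟩
  have := h (hcz S (B := prE S) (norm_prE S)) (BM_vec S hu)
  simp only [op_prE (fun k => continuous_dilS k κ) (fun k => integrable_dilS k κ) _ hu,
    enorm_vec] at this
  refine this.trans ?_
  gcongr
  exact lor_mono (by linarith) fun x => sqf_le_sq2 _ _

/-- Scalar Calderón–Zygmund bound for truncated homogeneous multipliers. -/
theorem lp_scalar {p q : ℝ} (hp : 1 < p) (hq : 1 ≤ q) [Nontrivial V] (κ : 𝓢(V, ℂ))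
    (h0 : ∃ C, ∀ ξ, ‖𝓕 (κ : V → ℂ) ξ‖ ≤ C * ‖ξ‖) :
    ∃ C : ℝ≥0∞, C ≠ ∞ ∧ ∀ (S : Finset ℤ) (u : V → ℂ), BM u →
      lor volume p q (fun x => ‖∑ k ∈ S, lp k κ u x‖ₑ) ≤
        C * lor volume p q (fun x => ‖u x‖ₑ) := by
  obtain ⟨A, hA, hcz⟩ := cz_family κ h0
  obtain ⟨C, hC, h⟩ := cz_lor hp hq hA V
  refine ⟨C, hC, fun S u hu => ?_⟩
  have := h (hcz S (B := fun _ => ContinuousLinearMap.id ℂ ℂ)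
    fun _ => ContinuousLinearMap.norm_id_le) hu
  have e : ∀ x, op (fun x => ∑ k ∈ S, dil k (κ : V → ℂ) x • ContinuousLinearMap.id ℂ ℂ) u x =
      ∑ k ∈ S, lp k κ u x := fun x => by
    simp only [op, lp]
    rw [← integral_finsetSum _ fun k _ => int_conv (continuous_dilS k κ) (integrable_dilS k κ) hu x]
    simp [Finset.sum_mul]
  simp only [e] at this
  exact this

end
end LCR

namespace LCR
set_option linter.unusedSectionVars false
open Filter Topology Module Metric
open scoped SchwartzMap

/-! ### Square functions of averages -/

section
variable {V : Type} [NormedAddCommGroup V] [InnerProductSpace ℝ V] [FiniteDimensional ℝ V]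
  [MeasurableSpace V] [BorelSpace V]

lemma sqf_sq (S : Finset ℤ) (u : ℤ → ℝ≥0∞) : sqf S u ^ 2 = ∑ k ∈ S, u k ^ 2 := by
  rw [sqf, ← ENNReal.rpow_natCast, ← ENNReal.rpow_mul]; norm_num

lemma measurable_Phi {r : ℝ} (hr : 0 < r) : Measurable fun x : V => ENNReal.ofReal (Phi r x) :=
  ENNReal.measurable_ofReal.comp (continuous_Phi hr).measurable

/-- Cauchy–Schwarz for averages. -/
lemma cv_sq_le {r : ℝ} (hr : 0 < r) {u : V → ℝ≥0∞} (hu : Measurable u) (x : V) :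
    cv r u x ^ 2 ≤ cPhi V * cv r (fun y => u y ^ 2) x := by
  set a : V → ℝ≥0∞ := fun y => ENNReal.ofReal (Phi r (x - y)) with ha
  have hm : Measurable a := (measurable_Phi hr).comp (measurable_const.sub measurable_id)
  have h := ENNReal.lintegral_mul_le_Lp_mul_Lq volume (p := 2) (q := 2)
    (by constructor <;> norm_num) (f := fun y => a y ^ (1 / 2 : ℝ))
    (g := fun y => a y ^ (1 / 2 : ℝ) * u y) (hm.pow_const _).aemeasurable
    ((hm.pow_const _).mul hu).aemeasurable
  have hs : ∀ c : ℝ≥0∞, c ^ (1 / 2 : ℝ) * c ^ (1 / 2 : ℝ) = c := fun c => by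
    rw [← ENNReal.rpow_add_of_nonneg _ _ (by norm_num) (by norm_num)]; norm_num
  have e1 : ∫⁻ y, ((fun y => a y ^ (1 / 2 : ℝ)) * fun y => a y ^ (1 / 2 : ℝ) * u y) y = cv r u x := by
    refine lintegral_congr fun y => ?_
    simp only [Pi.mul_apply]
    rw [← mul_assoc, hs]
  have e2 : ∫⁻ y, (a y ^ (1 / 2 : ℝ)) ^ (2 : ℝ) ≤ cPhi V := by
    refine le_trans (le_of_eq ?_) (lintegral_Phi_le (V := V) hr)
    rw [← lintegral_sub_left_eq_self _ x]
    refine lintegral_congr fun y => ?_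
    rw [ENNReal.rpow_two, sq, hs]
    simp only [ha, sub_sub_cancel]
  have e3 : ∫⁻ y, (a y ^ (1 / 2 : ℝ) * u y) ^ (2 : ℝ) = cv r (fun y => u y ^ 2) x := by
    refine lintegral_congr fun y => ?_
    rw [ENNReal.rpow_two, mul_pow, sq (a y ^ (1 / 2 : ℝ)), hs]
  rw [e1, e3] at h
  have hp : ∀ c : ℝ≥0∞, (c ^ (1 / 2 : ℝ)) ^ 2 = c := fun c => by rw [sq, hs]
  calc cv r u x ^ 2 ≤ _ := pow_le_pow_left' h 2
    _ ≤ (cPhi V ^ (1 / 2 : ℝ) * cv r (fun y => u y ^ 2) x ^ (1 / 2 : ℝ)) ^ 2 := by gcongr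
    _ = _ := by rw [mul_pow, hp, hp]

lemma measurable_cv {r : ℝ} (hr : 0 < r) {u : V → ℝ≥0∞} (hu : Measurable u) :
    Measurable (cv r u) := by
  have : Measurable (Function.uncurry fun (x y : V) => ENNReal.ofReal (Phi r (x - y)) * u y) :=
    ((measurable_Phi hr).comp (measurable_fst.sub measurable_snd)).mul (hu.comp measurable_snd)
  exact this.lintegral_prod_right'

lemma lintegral_cv_le {r : ℝ} (hr : 0 < r) {u : V → ℝ≥0∞} (hu : Measurable u) :
    ∫⁻ x, cv r u x ≤ cPhi V * ∫⁻ y, u y := by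
  unfold cv
  rw [lintegral_lintegral_swap (((measurable_Phi hr).comp (measurable_fst.sub measurable_snd)).mul
    (hu.comp measurable_snd)).aemeasurable, ← lintegral_const_mul _ hu]
  refine lintegral_mono fun y => ?_
  rw [lintegral_mul_const _ (show Measurable fun x => ENNReal.ofReal (Phi r (x - y)) from
    (measurable_Phi hr).comp (measurable_id.sub_const y))]
  gcongr
  rw [lintegral_sub_right_eq_self (fun x => ENNReal.ofReal (Phi r x)) y]
  exact lintegral_Phi_le hr

lemma dil_Phi (k : ℤ) (x : V) : dil k (fun x : V => (Phi 1 x : ℂ)) x = (Phi ((2 : ℝ) ^ k) x : ℂ) := by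
  simp only [dil, Phi]
  rw [← Complex.ofReal_mul, norm_smul, Real.norm_of_nonneg (by positivity)]
  congr 1
  rw [one_pow, one_mul, mul_one_div]

lemma enorm_conv_Phi_le {r : ℝ} (hr : 0 < r) (u : V → ℂ) (x : V) :
    ‖∫ y, (Phi r (x - y) : ℂ) * u y‖ₑ ≤ cv r (fun y => ‖u y‖ₑ) x := by
  refine (enorm_integral_le_lintegral_enorm _).trans_eq (lintegral_congr fun y => ?_)
  rw [enorm_mul, ← ofReal_norm, Complex.norm_real, Real.norm_of_nonneg (Phi_nonneg hr _)]

/-- The diagonal operators `(u_k) ↦ (Φ_k * u_k)` are Calderón–Zygmund operators, uniformly in the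
finite set of scales. -/
lemma cz_Phi : ∃ A, 0 ≤ A ∧ ∀ S : Finset ℤ,
    CZ A (fun x : V => ∑ k ∈ S, (Phi ((2 : ℝ) ^ k) x : ℂ) • dgE S k) := by
  obtain ⟨A₁, hA₁, hg⟩ := good_Phi (V := V)
  have hcs := cSum_nonneg
  have hr : ∀ k : ℤ, (0 : ℝ) < 2 ^ k := fun k => by positivity
  have hc : ∀ k : ℤ, Continuous fun x : V => (Phi ((2 : ℝ) ^ k) x : ℂ) := fun k =>
    Complex.continuous_ofReal.comp (continuous_Phi (hr k))
  have hi : ∀ k : ℤ, Integrable fun x : V => (Phi ((2 : ℝ) ^ k) x : ℂ) := fun k =>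
    (integrable_Phi (hr k)).ofReal
  refine ⟨cSum * A₁ + (cPhi V).toReal, by positivity, fun S => ⟨?_, ?_, fun x y hxy => ?_,
    fun f hf hfi => ?_⟩⟩
  · exact continuous_finsetSum _ fun k _ => (hc k).smul continuous_const
  · exact integrable_finsetSum _ fun k _ => (hi k).smul_const _
  · have := hor_family hA₁ hg S (norm_dgE S) hxy
    simp only [dil_Phi] at this
    refine this.trans ?_
    gcongr
    exact le_add_of_nonneg_right ENNReal.toReal_nonneg
  · obtain ⟨M, hM⟩ := hf.2
    set u : ℤ → V → ℂ := fun k x => inner ℂ (eb S k) (f x) with hu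
    have hbu : ∀ k, BM (u k) := fun k => by
      refine ⟨(innerSL ℂ (eb S k)).continuous.comp_stronglyMeasurable hf.1, M, fun x => ?_⟩
      exact (norm_inner_le_norm _ _).trans ((mul_le_of_le_one_left (norm_nonneg _)
        (norm_eb_le S k)).trans (hM x))
    have hfu : f = vec S u := by
      funext x; ext i
      simp only [vec, hu]
      rw [inner_eb S i.2]
    rw [hfu]
    simp only [op_dgE hc hi S hbu, enorm_vec, sqf_sq]
    have hme : ∀ k, Measurable fun x => ‖u k x‖ₑ := fun k => (hbu k).1.enorm
    have hbound : ∀ k, ∫⁻ x, ‖∫ y, (Phi ((2 : ℝ) ^ k) (x - y) : ℂ) * u k y‖ₑ ^ 2 ≤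
        cPhi V ^ 2 * ∫⁻ x, ‖u k x‖ₑ ^ 2 := fun k => by
      calc _ ≤ ∫⁻ x, cPhi V * cv ((2 : ℝ) ^ k) (fun y => ‖u k y‖ₑ ^ 2) x :=
            lintegral_mono fun x => (pow_le_pow_left' (enorm_conv_Phi_le (hr k) _ x) 2).trans
              (cv_sq_le (hr k) (hme k) x)
        _ = cPhi V * ∫⁻ x, cv ((2 : ℝ) ^ k) (fun y => ‖u k y‖ₑ ^ 2) x :=
            lintegral_const_mul _ (measurable_cv (hr k) ((hme k).pow_const 2))
        _ ≤ cPhi V * (cPhi V * ∫⁻ x, ‖u k x‖ₑ ^ 2) := by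
            gcongr; exact lintegral_cv_le (hr k) ((hme k).pow_const 2)
        _ = _ := by rw [sq, mul_assoc]
    have hsm : ∀ k, StronglyMeasurable fun x => ∫ y, (Phi ((2 : ℝ) ^ k) (x - y) : ℂ) * u k y :=
      fun k => by
        have : StronglyMeasurable (Function.uncurry fun x y : V =>
            (Phi ((2 : ℝ) ^ k) (x - y) : ℂ) * u k y) :=
          ((hc k).comp (continuous_fst.sub continuous_snd)).stronglyMeasurable.mul
            ((hbu k).1.comp_measurable measurable_snd)
        exact this.integral_prod_right'
    rw [lintegral_finsetSum _ fun k _ => (hsm k).enorm.pow_const 2,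
      lintegral_finsetSum _ fun k _ => (hme k).pow_const 2, Finset.mul_sum]
    refine Finset.sum_le_sum fun k _ => (hbound k).trans ?_
    gcongr
    rw [ENNReal.le_ofReal_iff_toReal_le cPhi_ne_top (by positivity)]
    exact le_add_of_nonneg_left (by positivity)

/-- Averages of truncations converge by monotone convergence. -/
lemma tendsto_cv_min {r : ℝ} (hr : 0 < r) {u : V → ℝ≥0∞} (hu : Measurable u) (x : V) :
    Tendsto (fun N : ℕ => cv r (fun y => min (u y) N) x) atTop (𝓝 (cv r u x)) := by
  have hm : Measurable fun y => ENNReal.ofReal (Phi r (x - y)) :=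
    (measurable_Phi hr).comp (measurable_const.sub measurable_id)
  refine lintegral_tendsto_of_tendsto_of_monotone
    (fun N => (hm.mul (hu.min measurable_const)).aemeasurable)
    (ae_of_all _ fun y N M hNM => ?_) (ae_of_all _ fun y => ?_)
  · dsimp only; gcongr
  · refine ENNReal.Tendsto.const_mul ?_ (Or.inr ENNReal.ofReal_ne_top)
    have := (tendsto_const_nhds (x := u y)).min ENNReal.tendsto_nat_nhds_top
    rwa [min_top_right] at this

/-- A Fefferman–Stein type inequality for the averages `Φ_k * u_k`. -/
theorem phi_square {p q : ℝ} (hp : 1 < p) (hq : 1 ≤ q) (V : Type) [NormedAddCommGroup V]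
    [InnerProductSpace ℝ V] [FiniteDimensional ℝ V] [MeasurableSpace V] [BorelSpace V]
    [Nontrivial V] :
    ∃ C : ℝ≥0∞, C ≠ ∞ ∧ ∀ u : ℤ → V → ℝ≥0∞, (∀ k, Measurable (u k)) →
      lor volume p q (fun x => sq2 fun k => cv ((2 : ℝ) ^ k) (u k) x) ≤
        C * lor volume p q (fun x => sq2 fun k => u k x) := by
  obtain ⟨A, hA, hcz⟩ := cz_Phi (V := V)
  obtain ⟨C, hC, h⟩ := cz_lor hp hq hA V
  have hr : ∀ k : ℤ, (0 : ℝ) < 2 ^ k := fun k => by positivity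
  have hc : ∀ k : ℤ, Continuous fun x : V => (Phi ((2 : ℝ) ^ k) x : ℂ) := fun k =>
    Complex.continuous_ofReal.comp (continuous_Phi (hr k))
  have hi : ∀ k : ℤ, Integrable fun x : V => (Phi ((2 : ℝ) ^ k) x : ℂ) := fun k =>
    (integrable_Phi (hr k)).ofReal
  refine ⟨C, hC, fun u hu => lor_fatou (by linarith)
    (u := fun N x => sqf (rg N) fun k => cv ((2 : ℝ) ^ k) (fun y => min (u k y) N) x)
    (fun x => ?_) fun N => ?_⟩
  · refine (tendsto_sqf (F := fun N k => cv ((2 : ℝ) ^ k) (fun y => min (u k y) N) x)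
      (fun k N M hNM => ?_) fun k => tendsto_cv_min (hr k) (hu k) x).liminf_eq.ge
    refine lintegral_mono fun y => ?_
    dsimp only; gcongr
  · set w : ℤ → V → ℝ := fun k x => (min (u k x) N).toReal with hw
    have hft : ∀ k x, min (u k x) (N : ℝ≥0∞) ≠ ∞ := fun k x =>
      ((min_le_right _ _).trans_lt (ENNReal.natCast_lt_top N)).ne
    have hw0 : ∀ k x, 0 ≤ w k x := fun k x => ENNReal.toReal_nonneg
    have hwe : ∀ k x, ‖(w k x : ℂ)‖ₑ = min (u k x) N := fun k x => by
      rw [← ofReal_norm, Complex.norm_real, Real.norm_of_nonneg (hw0 k x),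
        ENNReal.ofReal_toReal (hft k x)]
    have hbw : ∀ k, BM fun x => (w k x : ℂ) := fun k => by
      refine ⟨(Complex.measurable_ofReal.comp
        ((hu k).min measurable_const).ennreal_toReal).stronglyMeasurable, N, fun x => ?_⟩
      rw [Complex.norm_real, Real.norm_of_nonneg (hw0 k x)]
      have := ENNReal.toReal_mono (ENNReal.natCast_ne_top N) (min_le_right (u k x) N)
      simpa using this
    have hop := h (hcz (rg N)) (BM_vec (rg N) hbw)
    simp only [op_dgE hc hi _ hbw, enorm_vec] at hop
    have e : ∀ k x, ‖∫ y, (Phi ((2 : ℝ) ^ k) (x - y) : ℂ) * (w k y : ℂ)‖ₑ =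
        cv ((2 : ℝ) ^ k) (fun y => min (u k y) N) x := fun k x => by
      have h1 : ∀ y, (Phi ((2 : ℝ) ^ k) (x - y) : ℂ) * (w k y : ℂ) =
        ((Phi ((2 : ℝ) ^ k) (x - y) * w k y : ℝ) : ℂ) := fun y => by push_cast; rfl
      have h2 : ∀ y, 0 ≤ Phi ((2 : ℝ) ^ k) (x - y) * w k y := fun y =>
        mul_nonneg (Phi_nonneg (hr k) _) (hw0 k y)
      have h3 : Integrable fun y => Phi ((2 : ℝ) ^ k) (x - y) * w k y := by
        have := (int_conv (hc k) (hi k) (hbw k) x).re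
        refine this.congr (ae_of_all _ fun y => ?_)
        simp only [h1]; simp
      simp only [h1]
      rw [integral_complex_ofReal, ← ofReal_norm, Complex.norm_real, Real.norm_eq_abs, abs_of_nonneg (integral_nonneg h2),
        ofReal_integral_eq_lintegral_ofReal h3 (ae_of_all _ h2)]
      refine lintegral_congr fun y => ?_
      rw [ENNReal.ofReal_mul (Phi_nonneg (hr k) _), ENNReal.ofReal_toReal (hft k y)]
    simp only [e, hwe] at hop
    refine hop.trans ?_
    gcongr
    exact lor_mono (by linarith) fun x => (sqf_mono fun k => min_le_left _ _).trans
      (sqf_le_sq2 _ _)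

end
end LCR

namespace LCR
set_option linter.unusedSectionVars false
open Filter Topology Module Metric
open scoped SchwartzMap

/-! ### Oscillation of frequency-localised pieces -/

section
variable {V : Type} [NormedAddCommGroup V] [InnerProductSpace ℝ V] [FiniteDimensional ℝ V]
  [MeasurableSpace V] [BorelSpace V]

lemma Phi_scale {r : ℝ} (hr : 0 < r) (x : V) : Phi r x = r ^ finrank ℝ V * Phi 1 (r • x) := by
  simp only [Phi, norm_smul, Real.norm_of_nonneg hr.le, one_pow, one_mul, mul_one_div]

lemma norm_dil (k : ℤ) (κ : V → ℂ) (x : V) :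
    ‖dil k κ x‖ = ((2 : ℝ) ^ k) ^ finrank ℝ V * ‖κ ((2 : ℝ) ^ k • x)‖ := by
  rw [dil, norm_mul, Complex.norm_real, Real.norm_of_nonneg (by positivity)]

/-- A translation by `y` of the dilated kernel at scale `2^k` gains the factor `min 1 (2^k
|y|)`. -/
lemma diff_kernel (κ : 𝓢(V, ℂ)) : ∃ A, 0 ≤ A ∧ ∀ (k : ℤ) (x y : V),
    ‖dil k (κ : V → ℂ) (x - y) - dil k (κ : V → ℂ) x‖ ≤
      A * min 1 ((2 : ℝ) ^ k * ‖y‖) * (Phi ((2 : ℝ) ^ k) (x - y) + Phi ((2 : ℝ) ^ k) x) := by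
  obtain ⟨A₁, hA₁, hg⟩ := good_schwartz κ
  obtain ⟨A₂, hA₂, hd, -⟩ := schwartz_decay κ (finrank ℝ V + 2)
  have hunit : ∀ x y : V, ‖κ (x - y) - κ x‖ ≤
      (A₁ + 2 * A₂) * min 1 ‖y‖ * (Phi 1 (x - y) + Phi 1 x) := fun x y => by
    have hP : ∀ z : V, Phi 1 z = 1 / (1 + ‖z‖) ^ (finrank ℝ V + 2) := fun z => by simp [Phi]
    have hp0 : ∀ z : V, 0 ≤ Phi 1 z := Phi_nonneg one_pos
    have hκ : ∀ z : V, ‖κ z‖ ≤ A₂ * Phi 1 z := fun z => by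
      rw [hP, mul_one_div, le_div_iff₀ (by positivity)]; exact hd z
    have h1 : ‖κ (x - y) - κ x‖ ≤ A₂ * (Phi 1 (x - y) + Phi 1 x) := by
      rw [mul_add]; exact (norm_sub_le _ _).trans (add_le_add (hκ _) (hκ _))
    have hS : 0 ≤ Phi 1 (x - y) + Phi 1 x := add_nonneg (hp0 _) (hp0 _)
    have hy := norm_nonneg y
    rcases le_total 1 ‖y‖ with hy1 | hy1
    · rw [min_eq_left hy1, mul_one]
      refine h1.trans ?_
      gcongr; linarith
    · rw [min_eq_right hy1]
      rcases le_or_gt (2 * ‖y‖) (1 + ‖x‖) with hxy | hxy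
      · have h2 : ‖κ (x - y) - κ x‖ ≤ A₁ * ‖y‖ * Phi 1 x := by
          rw [hP, mul_one_div, le_div_iff₀ (by positivity)]; exact hg x y hxy
        refine h2.trans ?_
        gcongr
        · exact hp0 x
        · linarith
        · exact le_add_of_nonneg_left (hp0 _)
      · refine h1.trans ?_
        gcongr
        have : 1 ≤ 2 * ‖y‖ := by linarith [norm_nonneg x]
        nlinarith
  refine ⟨A₁ + 2 * A₂, by positivity, fun k x y => ?_⟩
  have hk : (0 : ℝ) < 2 ^ k := by positivity
  have h := hunit ((2 : ℝ) ^ k • x) ((2 : ℝ) ^ k • y)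
  rw [← smul_sub, norm_smul, Real.norm_of_nonneg hk.le] at h
  rw [dil, dil, ← mul_sub, norm_mul, Complex.norm_real, Real.norm_of_nonneg (by positivity),
    Phi_scale hk, Phi_scale hk x, ← mul_add, mul_left_comm]
  gcongr

lemma decay_kernel (κ : 𝓢(V, ℂ)) : ∃ A, 0 ≤ A ∧ ∀ (k : ℤ) (y : V),
    ‖dil k (κ : V → ℂ) y‖ * (1 + (2 : ℝ) ^ k * ‖y‖) ≤ A * Phi ((2 : ℝ) ^ k) y := by
  obtain ⟨A₂, hA₂, hd, -⟩ := schwartz_decay κ (finrank ℝ V + 3)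
  refine ⟨A₂, hA₂, fun k y => ?_⟩
  have hk : (0 : ℝ) < 2 ^ k := by positivity
  have h := hd ((2 : ℝ) ^ k • y)
  rw [norm_smul, Real.norm_of_nonneg hk.le] at h
  rw [norm_dil, Phi, mul_div_assoc', le_div_iff₀ (by positivity)]
  calc _ = ((2 : ℝ) ^ k) ^ finrank ℝ V * (‖κ ((2 : ℝ) ^ k • y)‖ *
        (1 + (2 : ℝ) ^ k * ‖y‖) ^ (finrank ℝ V + 3)) := by ring
    _ ≤ ((2 : ℝ) ^ k) ^ finrank ℝ V * A₂ := by gcongr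
    _ = _ := by ring

/-- Oscillation of a function reproduced by a Schwartz kernel at scale `2^{-k}`. -/
lemma osc_le (κ : 𝓢(V, ℂ)) : ∃ A, 0 ≤ A ∧ ∀ (k : ℤ) (w : V → ℂ), BM w →
    (∀ x, lp k κ w x = w x) → ∀ x z, ‖w z - w x‖ₑ ≤
      ENNReal.ofReal A * ENNReal.ofReal (min 1 ((2 : ℝ) ^ k * ‖x - z‖)) *
        (cv ((2 : ℝ) ^ k) (fun y => ‖w y‖ₑ) z + cv ((2 : ℝ) ^ k) (fun y => ‖w y‖ₑ) x) := by
  obtain ⟨A, hA, h⟩ := diff_kernel κ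
  refine ⟨A, hA, fun k w hw hrep x z => ?_⟩
  have hk : (0 : ℝ) < 2 ^ k := by positivity
  have hm : ∀ x, Measurable fun y => ENNReal.ofReal (Phi ((2 : ℝ) ^ k) (x - y)) * ‖w y‖ₑ := fun x =>
    ((measurable_Phi hk).comp (measurable_const.sub measurable_id)).mul hw.1.enorm
  have hi := fun x => int_conv (continuous_dilS k κ) (integrable_dilS k κ) hw x
  have e : w z - w x = ∫ y, (dil k κ (z - y) - dil k κ (x - y)) * w y := by
    rw [← hrep z, ← hrep x, lp, lp, ← integral_sub (hi z) (hi x)]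
    simp only [sub_mul]
  rw [e]
  refine (enorm_integral_le_lintegral_enorm _).trans ?_
  unfold cv
  rw [← lintegral_add_left (hm z), ← lintegral_const_mul _ (show Measurable fun y =>
    ENNReal.ofReal (Phi ((2 : ℝ) ^ k) (z - y)) * ‖w y‖ₑ +
      ENNReal.ofReal (Phi ((2 : ℝ) ^ k) (x - y)) * ‖w y‖ₑ from (hm z).add (hm x))]
  refine lintegral_mono fun y => ?_
  have h1 := h k (x - y) (x - z)
  rw [show x - y - (x - z) = z - y by abel] at h1
  dsimp only
  rw [enorm_mul, ← add_mul, ← mul_assoc]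
  gcongr
  rw [← ofReal_norm, ← ENNReal.ofReal_mul hA, ← ENNReal.ofReal_add (Phi_nonneg hk _)
    (Phi_nonneg hk _), ← ENNReal.ofReal_mul (by positivity)]
  exact ENNReal.ofReal_le_ofReal h1

/-- The coefficients `2^{ms} min(1, 2^{-m})`. -/
noncomputable def cf (s : ℝ) (m : ℤ) : ℝ := (2 : ℝ) ^ ((m : ℝ) * s) * min 1 ((2 : ℝ) ^ (-m))

lemma cf_nonneg (s : ℝ) (m : ℤ) : 0 ≤ cf s m := by unfold cf; positivity

/-- Summability of the coefficients over scales; this is where `0 < s < 1` is used. -/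
lemma tsum_cf {s : ℝ} (hs : 0 < s) (hs1 : s < 1) : ∑' m, ENNReal.ofReal (cf s m) ≠ ∞ := by
  set r : ℝ := max ((2 : ℝ) ^ (-s)) ((2 : ℝ) ^ (-(1 - s))) with hr
  have hr0 : 0 ≤ r := (by positivity : (0 : ℝ) ≤ (2 : ℝ) ^ (-s)).trans (le_max_left _ _)
  have hr1 : r < 1 := max_lt (Real.rpow_lt_one_of_one_lt_of_neg one_lt_two (by linarith))
    (Real.rpow_lt_one_of_one_lt_of_neg one_lt_two (by linarith))
  have hb : ∀ m, cf s m ≤ r ^ m.natAbs := fun m => by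
    unfold cf
    obtain ⟨j, rfl | rfl⟩ := m.eq_nat_or_neg
    · have : (2 : ℝ) ^ (-(j : ℤ)) = (2 : ℝ) ^ (-(j : ℝ)) := by
        rw [← Real.rpow_intCast]; push_cast; rfl
      calc _ ≤ (2 : ℝ) ^ (((j : ℤ) : ℝ) * s) * (2 : ℝ) ^ (-(j : ℤ)) := by
            gcongr; exact min_le_right _ _
        _ = ((2 : ℝ) ^ (-(1 - s))) ^ j := by
            rw [this, ← Real.rpow_add two_pos, ← Real.rpow_natCast, ← Real.rpow_mul two_pos.le]
            congr 1; push_cast; ring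
        _ ≤ r ^ j := by gcongr; exact le_max_right _ _
        _ = _ := by simp
    · calc _ ≤ (2 : ℝ) ^ (((-(j : ℤ) : ℤ) : ℝ) * s) * 1 := by
            gcongr; exact min_le_left _ _
        _ = ((2 : ℝ) ^ (-s)) ^ j := by
            rw [mul_one, ← Real.rpow_natCast, ← Real.rpow_mul two_pos.le]
            congr 1; push_cast; ring
        _ ≤ r ^ j := by gcongr; exact le_max_left _ _
        _ = _ := by simp
  have hs' : Summable (cf s) :=
    Summable.of_nonneg_of_le (cf_nonneg s) hb (summable_natAbs hr0 hr1)
  exact hs'.tsum_ofReal_ne_top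

lemma min_scale (j k : ℤ) (t : ℝ) (ht : 0 ≤ t) :
    min 1 ((2 : ℝ) ^ j * t) ≤ min 1 ((2 : ℝ) ^ (-(k - j))) * (1 + (2 : ℝ) ^ k * t) := by
  have hk : (0 : ℝ) < 2 ^ k := by positivity
  have hkt : 0 ≤ (2 : ℝ) ^ k * t := by positivity
  have e : (2 : ℝ) ^ (-(k - j)) * 2 ^ k = 2 ^ j := by
    rw [← zpow_add₀ two_ne_zero]; congr 1; ring
  have hp : (0 : ℝ) < 2 ^ (-(k - j)) := by positivity
  rw [min_mul_of_nonneg _ _ (by linarith)]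
  refine min_le_min (by linarith) ?_
  rw [mul_add, mul_one, ← mul_assoc, e]
  linarith

/-- The pointwise bound for Littlewood–Paley pieces of a function with controlled differences. -/
lemma piece_le (ψ : 𝓢(V, ℂ)) (h0 : 𝓕 (ψ : V → ℂ) 0 = 0) {s : ℝ} : ∃ A, 0 ≤ A ∧
    ∀ (g : V → ℂ) (h H : V → ℝ≥0∞) (G : ℤ → V → ℝ≥0∞), BM g → Measurable h → (∀ x, h x ≤ H x) →
      Measurable H → (∀ x, maxf h x ≤ H x) → (∀ j, Measurable (G j)) →
      (∀ x z, ‖g z - g x‖ₑ ≤ (h z + h x) *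
        ∑' j : ℤ, ENNReal.ofReal ((2 : ℝ) ^ (-(j : ℝ) * s) * min 1 ((2 : ℝ) ^ j * ‖x - z‖)) *
          (G j z + G j x)) → ∀ (k : ℤ) (x : V),
      ENNReal.ofReal ((2 : ℝ) ^ ((k : ℝ) * s)) * ‖lp k ψ g x‖ₑ ≤ ENNReal.ofReal A *
        (cv ((2 : ℝ) ^ k) (fun z => H z * ∑' j, ENNReal.ofReal (cf s (k - j)) * G j z) x +
          H x * cv ((2 : ℝ) ^ k) (fun z => ∑' j, ENNReal.ofReal (cf s (k - j)) * G j z) x +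
          2 * cPhi V * (H x * ∑' j, ENNReal.ofReal (cf s (k - j)) * G j x)) := by
  obtain ⟨A, hA, hdec⟩ := decay_kernel ψ
  refine ⟨A, hA, fun g h H G hg hh hhH hH hMH hG hdiff k x => ?_⟩
  have hk : (0 : ℝ) < 2 ^ k := by positivity
  set U : V → ℝ≥0∞ := fun z => ∑' j, ENNReal.ofReal (cf s (k - j)) * G j z with hU
  have hUm : Measurable U := Measurable.ennreal_tsum fun j => (hG j).const_mul _
  set P : V → ℝ≥0∞ := fun z => ENNReal.ofReal (Phi ((2 : ℝ) ^ k) (x - z)) with hP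
  have hPm : Measurable P := (measurable_Phi hk).comp (measurable_const.sub measurable_id)
  have hPi : ∫⁻ z, P z ≤ cPhi V := by
    simp only [hP]
    rw [lintegral_sub_left_eq_self (fun z => ENNReal.ofReal (Phi ((2 : ℝ) ^ k) z)) x]
    exact lintegral_Phi_le hk
  -- the mean-zero property of `ψ` turns the convolution into an average of differences
  have e : lp k ψ g x = ∫ z, dil k ψ (x - z) * (g z - g x) := by
    have hz : ∫ z, dil k (ψ : V → ℂ) (x - z) = 0 := by
      rw [integral_sub_left_eq_self (fun z => dil k (ψ : V → ℂ) z) volume x]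
      have := fourier_dil k (ψ : V → ℂ) 0
      rw [smul_zero, h0, Real.fourier_eq'] at this
      simpa using this
    simp only [mul_sub]
    rw [integral_sub (int_conv (continuous_dilS k ψ) (integrable_dilS k ψ) hg x)
      (((integrable_dilS k ψ).comp_sub_left x).mul_const _), integral_mul_const, hz, zero_mul,
      sub_zero, lp]
  have hpt : ∀ z, ENNReal.ofReal ((2 : ℝ) ^ ((k : ℝ) * s)) * ‖dil k ψ (x - z) * (g z - g x)‖ₑ ≤
      ENNReal.ofReal A * (P z * ((h z + h x) * (U z + U x))) := fun z => by
    set t := ‖x - z‖ with ht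
    have ht0 : 0 ≤ t := norm_nonneg _
    have hterm : ∀ j : ℤ, ENNReal.ofReal ((2 : ℝ) ^ ((k : ℝ) * s)) *
        ENNReal.ofReal ((2 : ℝ) ^ (-(j : ℝ) * s) * min 1 ((2 : ℝ) ^ j * t)) ≤
        ENNReal.ofReal (1 + (2 : ℝ) ^ k * t) * ENNReal.ofReal (cf s (k - j)) := fun j => by
      rw [← ENNReal.ofReal_mul (by positivity), ← ENNReal.ofReal_mul (by positivity)]
      apply ENNReal.ofReal_le_ofReal
      rw [← mul_assoc, ← Real.rpow_add two_pos, cf]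
      have : (k : ℝ) * s + -(j : ℝ) * s = ((k - j : ℤ) : ℝ) * s := by push_cast; ring
      rw [this, mul_left_comm]
      gcongr
      rw [mul_comm (1 + _)]
      exact min_scale j k t ht0
    have hsum : ENNReal.ofReal ((2 : ℝ) ^ ((k : ℝ) * s)) * ∑' j : ℤ,
        ENNReal.ofReal ((2 : ℝ) ^ (-(j : ℝ) * s) * min 1 ((2 : ℝ) ^ j * t)) * (G j z + G j x) ≤
        ENNReal.ofReal (1 + (2 : ℝ) ^ k * t) * (U z + U x) := by
      rw [hU, ← ENNReal.tsum_add, ← ENNReal.tsum_mul_left, ← ENNReal.tsum_mul_left]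
      refine ENNReal.tsum_le_tsum fun j => ?_
      rw [← mul_assoc, ← mul_add, ← mul_assoc]
      gcongr ?_ * _
      exact hterm j
    have hd : ‖dil k (ψ : V → ℂ) (x - z)‖ₑ * ENNReal.ofReal (1 + (2 : ℝ) ^ k * t) ≤
        ENNReal.ofReal A * P z := by
      rw [← ofReal_norm, ← ENNReal.ofReal_mul (norm_nonneg _), ← ENNReal.ofReal_mul hA]
      exact ENNReal.ofReal_le_ofReal (hdec k (x - z))
    rw [enorm_mul]
    calc _ ≤ ENNReal.ofReal ((2 : ℝ) ^ ((k : ℝ) * s)) * (‖dil k (ψ : V → ℂ) (x - z)‖ₑ *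
          ((h z + h x) * ∑' j : ℤ, ENNReal.ofReal ((2 : ℝ) ^ (-(j : ℝ) * s) *
            min 1 ((2 : ℝ) ^ j * t)) * (G j z + G j x))) := by gcongr; exact hdiff x z
      _ = (‖dil k (ψ : V → ℂ) (x - z)‖ₑ * (h z + h x)) * (ENNReal.ofReal ((2 : ℝ) ^ ((k : ℝ) * s)) *
          ∑' j : ℤ, ENNReal.ofReal ((2 : ℝ) ^ (-(j : ℝ) * s) *
            min 1 ((2 : ℝ) ^ j * t)) * (G j z + G j x)) := by ring
      _ ≤ (‖dil k (ψ : V → ℂ) (x - z)‖ₑ * (h z + h x)) *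
          (ENNReal.ofReal (1 + (2 : ℝ) ^ k * t) * (U z + U x)) := by gcongr
      _ = (‖dil k (ψ : V → ℂ) (x - z)‖ₑ * ENNReal.ofReal (1 + (2 : ℝ) ^ k * t)) *
          ((h z + h x) * (U z + U x)) := by ring
      _ ≤ (ENNReal.ofReal A * P z) * ((h z + h x) * (U z + U x)) := by gcongr
      _ = _ := by ring
  rw [e]
  calc _ ≤ ENNReal.ofReal ((2 : ℝ) ^ ((k : ℝ) * s)) *
        ∫⁻ z, ‖dil k ψ (x - z) * (g z - g x)‖ₑ := by
        gcongr; exact enorm_integral_le_lintegral_enorm _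
    _ = ∫⁻ z, ENNReal.ofReal ((2 : ℝ) ^ ((k : ℝ) * s)) * ‖dil k ψ (x - z) * (g z - g x)‖ₑ :=
        (lintegral_const_mul' _ _ ENNReal.ofReal_ne_top).symm
    _ ≤ ∫⁻ z, ENNReal.ofReal A * (P z * ((h z + h x) * (U z + U x))) := lintegral_mono hpt
    _ = ENNReal.ofReal A * ∫⁻ z, (P z * (h z * U z) + h x * (P z * U z)) +
        (U x * (P z * h z) + (h x * U x) * P z) := by
        rw [lintegral_const_mul' _ _ ENNReal.ofReal_ne_top]
        congr 1
        exact lintegral_congr fun z => by ring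
    _ = ENNReal.ofReal A * ((cv ((2 : ℝ) ^ k) (fun z => h z * U z) x + h x * cv ((2 : ℝ) ^ k) U x) +
        (U x * cv ((2 : ℝ) ^ k) h x + (h x * U x) * ∫⁻ z, P z)) := by
        congr 1
        have m0 : Measurable fun z => P z * U z := hPm.mul hUm
        have m0' : Measurable fun z => P z * h z := hPm.mul hh
        have m1 : Measurable fun z => P z * (h z * U z) := hPm.mul (hh.mul hUm)
        have m2 : Measurable fun z => h x * (P z * U z) := m0.const_mul _
        have m3 : Measurable fun z => U x * (P z * h z) := m0'.const_mul _
        have m12 : Measurable fun z => P z * (h z * U z) + h x * (P z * U z) := m1.add m2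
        rw [lintegral_add_left m12, lintegral_add_left m1, lintegral_add_left m3,
          lintegral_const_mul _ m0, lintegral_const_mul _ m0',
          lintegral_const_mul _ hPm]
        rfl
    _ ≤ ENNReal.ofReal A * ((cv ((2 : ℝ) ^ k) (fun z => H z * U z) x +
        H x * cv ((2 : ℝ) ^ k) U x) + (U x * (cPhi V * H x) + (H x * U x) * cPhi V)) := by
        gcongr
        · refine lintegral_mono fun z => ?_
          dsimp only; gcongr; exact hhH z
        · exact hhH x
        · refine (cv_le_maxf hk hh x).trans ?_
          gcongr; exact hMH x
        · exact hhH x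
    _ = _ := by rw [hU]; ring

end
end LCR

namespace LCR
set_option linter.unusedSectionVars false
open Filter Topology Module Metric
open scoped SchwartzMap

/-! ### Reproducing formulas for the fractional Laplacian -/

section
variable {V : Type} [NormedAddCommGroup V] [InnerProductSpace ℝ V] [FiniteDimensional ℝ V]
  [MeasurableSpace V] [BorelSpace V]

lemma contDiffAt_rpow (s : ℝ) (ξ : V) (hξ : ξ ≠ 0) :
    ContDiffAt ℝ ((⊤ : ℕ∞) : WithTop ℕ∞) (fun ξ : V => ((‖ξ‖ ^ s : ℝ) : ℂ)) ξ :=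
  Complex.ofRealCLM.contDiff.contDiffAt.comp ξ
    ((contDiffAt_norm ℝ hξ).rpow_const_of_ne (norm_ne_zero_iff.2 hξ))

lemma exists_symbol_th {a : V → ℂ}
    (ha : ∀ ξ, ξ ≠ 0 → ContDiffAt ℝ ((⊤ : ℕ∞) : WithTop ℕ∞) a ξ) :
    ∃ κ : 𝓢(V, ℂ), (∀ ξ, 𝓕 (κ : V → ℂ) ξ = a ξ * th ξ) ∧ ∃ C, ∀ ξ, ‖𝓕 (κ : V → ℂ) ξ‖ ≤ C * ‖ξ‖ :=
  exists_symbol ha contDiff_th compact_th (r := 1 / 2) (by norm_num) fun _ h => th_small h.le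

lemma exists_symbol_th' {a : V → ℂ}
    (ha : ∀ ξ, ξ ≠ 0 → ContDiffAt ℝ ((⊤ : ℕ∞) : WithTop ℕ∞) a ξ) :
    ∃ κ : 𝓢(V, ℂ), (∀ ξ, 𝓕 (κ : V → ℂ) ξ = a ξ * th' ξ) ∧
      ∃ C, ∀ ξ, ‖𝓕 (κ : V → ℂ) ξ‖ ≤ C * ‖ξ‖ :=
  exists_symbol ha contDiff_th' compact_th' (r := 1 / 4) (by norm_num) fun _ h => th'_small h

lemma fourierInv_sum {S : Finset ℤ} {v : ℤ → V → ℂ} (hv : ∀ k, Integrable (v k)) (x : V) :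
    ∑ k ∈ S, 𝓕⁻ (v k) x = 𝓕⁻ (fun ξ => ∑ k ∈ S, v k ξ) x := by
  simp only [Real.fourierInv_eq, Finset.smul_sum]
  rw [integral_finsetSum]
  intro k _
  have := (Real.fourierIntegral_convergent_iff (f := v k) (-x)).2 (hv k)
  simpa [real_inner_comm] using this

lemma fourierInv_const_mul (c : ℂ) (v : V → ℂ) (x : V) :
    𝓕⁻ (fun ξ => c * v ξ) x = c * 𝓕⁻ v x := by
  simp only [Real.fourierInv_eq]
  rw [← integral_const_mul]
  refine integral_congr_ae (ae_of_all _ fun ξ => ?_)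
  simp only [Circle.smul_def, smul_eq_mul]; ring

lemma norm_scale (k : ℤ) (s : ℝ) (ξ : V) :
    ‖((2 : ℝ) ^ k)⁻¹ • ξ‖ ^ s = (2 : ℝ) ^ (-(k : ℝ) * s) * ‖ξ‖ ^ s := by
  rw [norm_smul, Real.norm_of_nonneg (by positivity), Real.mul_rpow (by positivity) (norm_nonneg _),
    ← Real.rpow_intCast, ← Real.rpow_neg two_pos.le, ← Real.rpow_mul two_pos.le]

lemma integrable_th_mul (k : ℤ) {v : V → ℂ} (hv : Integrable v) :
    Integrable fun ξ => th (((2 : ℝ) ^ k)⁻¹ • ξ) * v ξ := by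
  have hth : Continuous (th : V → ℂ) := contDiff_th.continuous
  exact hv.bdd_mul (c := 1) (hth.comp (continuous_const_smul _)).aestronglyMeasurable
    (ae_of_all _ fun ξ => norm_th_le _)

/-- The fractional Laplacian `(-Δ)^{s/2}`: `fracLap` over a general Euclidean space. -/
noncomputable def flap (s : ℝ) (f : V → ℂ) : V → ℂ :=
  𝓕⁻ (fun ξ => ((‖ξ‖ ^ s : ℝ) : ℂ) * 𝓕 f ξ)

section
variable {s : ℝ} {v : V → ℂ}

lemma th_zero : (th (0 : V) : ℂ) = 0 := th_small (by rw [norm_zero]; norm_num)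

/-- Applying the kernel with symbol `|ξ|^{-s}` times the cutoff to the fractional Laplacian of
`f` gives the scaled pieces of `f`. -/
lemma lp_neg_pow {κ : 𝓢(V, ℂ)} (hκ : ∀ ξ, 𝓕 (κ : V → ℂ) ξ = ((‖ξ‖ ^ (-s) : ℝ) : ℂ) * th ξ)
    (hvs : Integrable fun ξ => ((‖ξ‖ ^ s : ℝ) : ℂ) * v ξ) (j : ℤ) (x : V) :
    lp j κ (𝓕⁻ fun ξ => ((‖ξ‖ ^ s : ℝ) : ℂ) * v ξ) x =
      𝓕⁻ (fun ξ => (((2 : ℝ) ^ ((j : ℝ) * s) : ℝ) : ℂ) * (th (((2 : ℝ) ^ j)⁻¹ • ξ) * v ξ)) x := by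
  rw [lp_fourierInv j κ hvs]
  refine congrFun (congrArg (fun f : V → ℂ => 𝓕⁻ f) (funext fun ξ => ?_)) x
  rw [hκ]
  by_cases hξ : ξ = 0
  · simp [hξ, th_zero]
  · have hp : 0 < ‖ξ‖ := norm_pos_iff.2 hξ
    rw [norm_scale]
    have : (2 : ℝ) ^ (-(j : ℝ) * -s) * ‖ξ‖ ^ (-s) * ‖ξ‖ ^ s = (2 : ℝ) ^ ((j : ℝ) * s) := by
      rw [mul_assoc, ← Real.rpow_add hp, neg_add_cancel, Real.rpow_zero, mul_one, neg_mul_neg]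
    rw [← this]; push_cast; ring

/-- `f` is recovered from the Littlewood–Paley pieces of its fractional Laplacian. -/
lemma tendsto_recon [Nontrivial V] {κ : 𝓢(V, ℂ)}
    (hκ : ∀ ξ, 𝓕 (κ : V → ℂ) ξ = ((‖ξ‖ ^ (-s) : ℝ) : ℂ) * th ξ) (hv : Integrable v)
    (hvs : Integrable fun ξ => ((‖ξ‖ ^ s : ℝ) : ℂ) * v ξ) (x : V) :
    Tendsto (fun N => ∑ j ∈ rg N, (((2 : ℝ) ^ (-(j : ℝ) * s) : ℝ) : ℂ) *
      lp j κ (𝓕⁻ fun ξ => ((‖ξ‖ ^ s : ℝ) : ℂ) * v ξ) x) atTop (𝓝 (𝓕⁻ v x)) := by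
  refine (tendsto_lp hv x).congr fun N => ?_
  have : ∀ j : ℤ, (((2 : ℝ) ^ (-(j : ℝ) * s) : ℝ) : ℂ) *
      lp j κ (𝓕⁻ fun ξ => ((‖ξ‖ ^ s : ℝ) : ℂ) * v ξ) x =
      𝓕⁻ (fun ξ => th (((2 : ℝ) ^ j)⁻¹ • ξ) * v ξ) x := fun j => by
    rw [lp_neg_pow hκ hvs, fourierInv_const_mul, ← mul_assoc, ← Complex.ofReal_mul,
      ← Real.rpow_add two_pos]
    simp
  simp only [this]
  rw [fourierInv_sum fun k => integrable_th_mul k hv]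
  simp only [Finset.sum_mul]

/-- The Littlewood–Paley pieces are reproduced by the wider cutoff. -/
lemma lp_repro {κ κt : 𝓢(V, ℂ)} (hκ : ∀ ξ, 𝓕 (κ : V → ℂ) ξ = ((‖ξ‖ ^ (-s) : ℝ) : ℂ) * th ξ)
    (hκt : ∀ ξ, 𝓕 (κt : V → ℂ) ξ = 1 * th' ξ) (hv : Integrable v)
    (hvs : Integrable fun ξ => ((‖ξ‖ ^ s : ℝ) : ℂ) * v ξ) (j : ℤ) (x : V) :
    lp j κt (lp j κ (𝓕⁻ fun ξ => ((‖ξ‖ ^ s : ℝ) : ℂ) * v ξ)) x =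
      lp j κ (𝓕⁻ fun ξ => ((‖ξ‖ ^ s : ℝ) : ℂ) * v ξ) x := by
  rw [funext (lp_neg_pow hκ hvs j), lp_fourierInv j κt ((integrable_th_mul j hv).const_mul _)]
  refine congrFun (congrArg (fun f : V → ℂ => 𝓕⁻ f) (funext fun ξ => ?_)) x
  rw [hκt, one_mul, mul_left_comm, ← mul_assoc (th' _), th'_mul_th]

lemma scaled_piece {ψ : 𝓢(V, ℂ)} (hψ : ∀ ξ, 𝓕 (ψ : V → ℂ) ξ = 1 * th ξ) (hv : Integrable v)
    (k : ℤ) (x : V) : (((2 : ℝ) ^ ((k : ℝ) * s) : ℝ) : ℂ) * lp k ψ (𝓕⁻ v) x =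
      𝓕⁻ (fun ξ => (((2 : ℝ) ^ ((k : ℝ) * s) : ℝ) : ℂ) * (th (((2 : ℝ) ^ k)⁻¹ • ξ) * v ξ)) x := by
  rw [lp_fourierInv k ψ hv, fourierInv_const_mul]
  simp only [hψ, one_mul]

lemma BM_scaled_piece {ψ : 𝓢(V, ℂ)} (hψ : ∀ ξ, 𝓕 (ψ : V → ℂ) ξ = 1 * th ξ) (hv : Integrable v)
    (k : ℤ) : BM fun x => (((2 : ℝ) ^ ((k : ℝ) * s) : ℝ) : ℂ) * lp k ψ (𝓕⁻ v) x := by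
  rw [funext (scaled_piece hψ hv k)]
  exact BM_fourierInv ((integrable_th_mul k hv).const_mul _)

/-- The fractional Laplacian is synthesised from scaled Littlewood–Paley pieces. -/
lemma tendsto_synth [Nontrivial V] {ψ κ : 𝓢(V, ℂ)} (hψ : ∀ ξ, 𝓕 (ψ : V → ℂ) ξ = 1 * th ξ)
    (hκ : ∀ ξ, 𝓕 (κ : V → ℂ) ξ = ((‖ξ‖ ^ s : ℝ) : ℂ) * th' ξ) (hv : Integrable v)
    (hvs : Integrable fun ξ => ((‖ξ‖ ^ s : ℝ) : ℂ) * v ξ) (x : V) :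
    Tendsto (fun N => ∑ k ∈ rg N,
      lp k κ (fun x => (((2 : ℝ) ^ ((k : ℝ) * s) : ℝ) : ℂ) * lp k ψ (𝓕⁻ v) x) x) atTop
      (𝓝 (𝓕⁻ (fun ξ => ((‖ξ‖ ^ s : ℝ) : ℂ) * v ξ) x)) := by
  refine (tendsto_lp hvs x).congr fun N => ?_
  have : ∀ k : ℤ, lp k κ (fun x => (((2 : ℝ) ^ ((k : ℝ) * s) : ℝ) : ℂ) * lp k ψ (𝓕⁻ v) x) x =
      𝓕⁻ (fun ξ => th (((2 : ℝ) ^ k)⁻¹ • ξ) * (((‖ξ‖ ^ s : ℝ) : ℂ) * v ξ)) x := fun k => by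
    rw [funext (scaled_piece hψ hv k), lp_fourierInv k κ ((integrable_th_mul k hv).const_mul _)]
    refine congrFun (congrArg (fun f : V → ℂ => 𝓕⁻ f) (funext fun ξ => ?_)) x
    rw [hκ, norm_scale]
    have h3 := th'_mul_th (((2 : ℝ) ^ k)⁻¹ • ξ)
    have h1 : (2 : ℝ) ^ (-(k : ℝ) * s) * (2 : ℝ) ^ ((k : ℝ) * s) = 1 := by
      rw [← Real.rpow_add two_pos]; simp
    have h2 : (((2 : ℝ) ^ (-(k : ℝ) * s) : ℝ) : ℂ) * (((2 : ℝ) ^ ((k : ℝ) * s) : ℝ) : ℂ) = 1 := by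
      rw [← Complex.ofReal_mul, h1, Complex.ofReal_one]
    rw [Complex.ofReal_mul]
    linear_combination (((‖ξ‖ ^ s : ℝ) : ℂ) * th' (((2 : ℝ) ^ k)⁻¹ • ξ) *
      (th (((2 : ℝ) ^ k)⁻¹ • ξ)) * v ξ) * h2 + (((‖ξ‖ ^ s : ℝ) : ℂ) * v ξ) * h3
  simp only [this]
  rw [fourierInv_sum fun k => integrable_th_mul k hvs]
  simp only [Finset.sum_mul]

end

lemma rpow_le_one_add {s : ℝ} (hs : 0 ≤ s) (hs1 : s ≤ 1) (t : ℝ) (ht : 0 ≤ t) : t ^ s ≤ 1 + t := by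
  rcases le_total t 1 with h | h
  · exact (Real.rpow_le_one ht h hs).trans (by linarith)
  · calc t ^ s ≤ t ^ (1 : ℝ) := Real.rpow_le_rpow_of_exponent_le h hs1
      _ ≤ 1 + t := by rw [Real.rpow_one]; linarith

lemma measurable_rpow_norm (s : ℝ) : Measurable fun ξ : V => ((‖ξ‖ ^ s : ℝ) : ℂ) :=
  Complex.measurable_ofReal.comp (measurable_norm.pow_const s)

lemma integrable_schwartz_flap {s : ℝ} (hs : 0 ≤ s) (hs1 : s ≤ 1) (f : 𝓢(V, ℂ)) :
    Integrable fun ξ => ((‖ξ‖ ^ s : ℝ) : ℂ) * 𝓕 (f : V → ℂ) ξ := by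
  have h0 := (𝓕 f).integrable_pow_mul volume 0
  have h1 := (𝓕 f).integrable_pow_mul volume 1
  refine (h0.add h1).mono' ((measurable_rpow_norm s).aestronglyMeasurable.mul
    (𝓕 f).continuous.aestronglyMeasurable) (ae_of_all _ fun ξ => ?_)
  rw [norm_mul, Complex.norm_real, Real.norm_of_nonneg (by positivity)]
  simp only [Pi.add_apply, pow_zero, pow_one, ← add_mul]
  gcongr ?_ * ?_
  · exact rpow_le_one_add hs hs1 _ (norm_nonneg _)
  · rfl

lemma fourierInv_schwartz (f : 𝓢(V, ℂ)) : 𝓕⁻ (𝓕 (f : V → ℂ)) = f :=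
  f.continuous.fourierInv_fourier_eq f.integrable (𝓕 f).integrable

/-- Integrability of `|ξ|^s` times the Fourier transform gives integrability at high
frequencies; at low frequencies the Fourier transform is bounded. -/
lemma integrable_of_flap {s : ℝ} (hs : 0 ≤ s) {g : V → ℂ} (hg : Integrable g)
    (h : Integrable fun ξ => ((‖ξ‖ ^ s : ℝ) : ℂ) * 𝓕 g ξ) : Integrable (𝓕 g) := by
  have hc : Continuous (𝓕 g) := VectorFourier.fourierIntegral_continuous Real.continuous_fourierChar
      (by exact continuous_inner) hg
  have h1 : Integrable ((closedBall (0 : V) 1).indicator fun ξ => ‖𝓕 g ξ‖) :=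
    (hc.norm.continuousOn.integrableOn_compact (isCompact_closedBall _ _)).integrable_indicator
      measurableSet_closedBall
  refine (h1.add h.norm).mono' hc.aestronglyMeasurable (ae_of_all _ fun ξ => ?_)
  simp only [Pi.add_apply, norm_mul, Complex.norm_real]
  by_cases hξ : ξ ∈ closedBall (0 : V) 1
  · rw [Set.indicator_of_mem hξ]
    exact le_add_of_nonneg_right (by positivity)
  · rw [Set.indicator_of_notMem hξ, zero_add, Real.norm_of_nonneg (by positivity)]
    rw [mem_closedBall_zero_iff, not_le] at hξ
    exact le_mul_of_one_le_left (norm_nonneg _) (Real.one_le_rpow hξ.le hs)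

/-- The inverse Fourier integral of a nonintegrable function takes the junk value `0`. -/
lemma flap_eq_zero {s : ℝ} {g : V → ℂ} (h : ¬ Integrable fun ξ => ((‖ξ‖ ^ s : ℝ) : ℂ) * 𝓕 g ξ)
    (x : V) : flap s g x = 0 := by
  rw [flap, Real.fourierInv_eq]
  refine integral_undef fun hi => h ?_
  have := (Real.fourierIntegral_convergent_iff (μ := volume)
    (f := fun ξ : V => ((‖ξ‖ ^ s : ℝ) : ℂ) * 𝓕 g ξ) (-x)).1
  refine this ?_
  simpa [real_inner_comm] using hi

end
end LCR

namespace LCR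
set_option linter.unusedSectionVars false
open Filter Topology Module Metric
open scoped SchwartzMap

/-! ### The chain rule for `0 < s < 1` -/

section
variable {V : Type} [NormedAddCommGroup V] [InnerProductSpace ℝ V] [FiniteDimensional ℝ V]
  [MeasurableSpace V] [BorelSpace V]

/-- Differences of `f` are controlled by averages of the Littlewood–Paley pieces of its
fractional Laplacian. -/
lemma diff_le [Nontrivial V] {κ κt : 𝓢(V, ℂ)} {s : ℝ}
    (hκ : ∀ ξ, 𝓕 (κ : V → ℂ) ξ = ((‖ξ‖ ^ (-s) : ℝ) : ℂ) * th ξ)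
    (hκt : ∀ ξ, 𝓕 (κt : V → ℂ) ξ = 1 * th' ξ) : ∃ A, 0 ≤ A ∧ ∀ v : V → ℂ, Integrable v →
      (Integrable fun ξ => ((‖ξ‖ ^ s : ℝ) : ℂ) * v ξ) → ∀ x z, ‖𝓕⁻ v z - 𝓕⁻ v x‖ₑ ≤
      ENNReal.ofReal A * ∑' j : ℤ,
        ENNReal.ofReal ((2 : ℝ) ^ (-(j : ℝ) * s) * min 1 ((2 : ℝ) ^ j * ‖x - z‖)) *
        (cv ((2 : ℝ) ^ j) (fun y => ‖lp j κ (𝓕⁻ fun ξ => ((‖ξ‖ ^ s : ℝ) : ℂ) * v ξ) y‖ₑ) z +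
          cv ((2 : ℝ) ^ j) (fun y => ‖lp j κ (𝓕⁻ fun ξ => ((‖ξ‖ ^ s : ℝ) : ℂ) * v ξ) y‖ₑ) x) := by
  obtain ⟨A, hA, hosc⟩ := osc_le κt
  refine ⟨A, hA, fun v hv hvs x z => ?_⟩
  have hlim := ((tendsto_recon hκ hv hvs z).sub (tendsto_recon hκ hv hvs x)).enorm
  refine le_of_tendsto hlim (Eventually.of_forall fun N => ?_)
  set D := 𝓕⁻ fun ξ => ((‖ξ‖ ^ s : ℝ) : ℂ) * v ξ with hD
  have hBM : ∀ j : ℤ, BM (lp j κ D) := fun j => by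
    rw [hD, funext (lp_neg_pow hκ hvs j)]
    exact BM_fourierInv ((integrable_th_mul j hv).const_mul _)
  rw [← Finset.sum_sub_distrib, ← ENNReal.tsum_mul_left]
  refine (enorm_sum_le _ _).trans (le_trans ?_ (ENNReal.sum_le_tsum (rg N)))
  refine Finset.sum_le_sum fun j _ => ?_
  have h2 : (0 : ℝ) ≤ (2 : ℝ) ^ (-(j : ℝ) * s) := by positivity
  rw [← mul_sub, enorm_mul, ENNReal.ofReal_mul h2]
  have e : ‖(((2 : ℝ) ^ (-(j : ℝ) * s) : ℝ) : ℂ)‖ₑ = ENNReal.ofReal ((2 : ℝ) ^ (-(j : ℝ) * s)) := by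
    rw [← ofReal_norm, Complex.norm_real, Real.norm_of_nonneg h2]
  rw [e]
  calc _ ≤ ENNReal.ofReal ((2 : ℝ) ^ (-(j : ℝ) * s)) * _ :=
        mul_le_mul_right (hosc j _ (hBM j) (lp_repro hκ hκt hv hvs j) x z) _
    _ = _ := by ring

lemma lor_add3_le {α : Type*} [MeasurableSpace α] {μ : Measure α} {p q : ℝ} (hq : 1 ≤ q)
    (f g k : α → ℝ≥0∞) : lor μ p q (fun x => f x + g x + k x) ≤
      ENNReal.ofReal ((1 / 2) ^ (-(1 / p))) *
      (ENNReal.ofReal ((1 / 2) ^ (-(1 / p))) * (lor μ p q f + lor μ p q g) + lor μ p q k) :=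
  (lor_add_le hq (fun x => f x + g x) k).trans
    (mul_le_mul_right (add_le_add_left (lor_add_le hq f g) _) _)

/-- The chain rule for `0 < s < 1`, with `g = F ∘ f` entering only through a difference bound. -/
theorem chain_mid [Nontrivial V] {s p p₁ p₂ q q₁ q₂ : ℝ} (hs : 0 < s) (hs1 : s < 1)
    (hp : 1 < p) (hp1 : 1 < p₁) (hp2 : 1 < p₂)
    (hq : 1 ≤ q) (hq1 : 1 ≤ q₁) (hq2 : 1 ≤ q₂)
    (hpe : 1 / p = 1 / p₁ + 1 / p₂) (hqe : 1 / q = 1 / q₁ + 1 / q₂) :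
    ∃ C : ℝ≥0∞, C ≠ ∞ ∧ ∀ (h : V → ℝ≥0∞) (u v : V → ℂ), Continuous h → Integrable u →
      Integrable v → (Integrable fun ξ => ((‖ξ‖ ^ s : ℝ) : ℂ) * u ξ) →
      (Integrable fun ξ => ((‖ξ‖ ^ s : ℝ) : ℂ) * v ξ) →
      (∀ x z, ‖𝓕⁻ u z - 𝓕⁻ u x‖ₑ ≤ (h z + h x) * ‖𝓕⁻ v z - 𝓕⁻ v x‖ₑ) →
      lor volume p q (fun x => ‖𝓕⁻ (fun ξ => ((‖ξ‖ ^ s : ℝ) : ℂ) * u ξ) x‖ₑ) ≤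
        C * (lor volume p₁ q₁ h *
          lor volume p₂ q₂ (fun x => ‖𝓕⁻ (fun ξ => ((‖ξ‖ ^ s : ℝ) : ℂ) * v ξ) x‖ₑ)) := by
  obtain ⟨κm, hκm, hκm0⟩ := exists_symbol_th (contDiffAt_rpow (V := V) (-s))
  obtain ⟨κt, hκt, -⟩ := exists_symbol_th' (V := V) (a := fun _ => 1) fun _ _ => contDiffAt_const
  obtain ⟨ψ, hψ, -⟩ := exists_symbol_th (V := V) (a := fun _ => 1) fun _ _ => contDiffAt_const
  obtain ⟨κs, hκs, hκs0⟩ := exists_symbol_th' (contDiffAt_rpow (V := V) s)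
  obtain ⟨A₁, hA₁, hdiff⟩ := diff_le hκm hκt
  obtain ⟨A₂, hA₂, hpiece⟩ := piece_le ψ (by rw [hψ, th_zero, mul_zero]) (s := s)
  obtain ⟨Cs, hCs, hsyn⟩ := lp_synth hp hq κs hκs0
  obtain ⟨Cp, hCp, hphi⟩ := phi_square hp hq V
  obtain ⟨Cp2, hCp2, hphi2⟩ := phi_square hp2 hq2 V
  obtain ⟨Cq, hCq, hsq⟩ := lp_square hp2 hq2 κm hκm0
  obtain ⟨K, hK, hmax⟩ := maxf_lor hp1 hq1 V
  have hT := tsum_cf hs hs1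
  set T := ∑' m, ENNReal.ofReal (cf s m)
  set c := ENNReal.ofReal ((1 / 2) ^ (-(1 / p))) with hc
  have hq0 : 0 < q := by linarith
  have hq10 : 0 < q₁ := by linarith
  have hq20 : 0 < q₂ := by linarith
  refine ⟨Cs * (ENNReal.ofReal A₂ * (c * (c * (Cp * c + c * Cp2) + 2 * cPhi V * c))) *
    (K * ENNReal.ofReal A₁) * (T * Cp2 * Cq), ?_, ?_⟩
  · have := cPhi_ne_top (V := V)
    finiteness
  intro h u v hh hu hv hus hvs hgf
  set D := 𝓕⁻ fun ξ => ((‖ξ‖ ^ s : ℝ) : ℂ) * v ξ with hD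
  set g := 𝓕⁻ u with hg
  have hBM : ∀ j : ℤ, BM (lp j κm D) := fun j => by
    rw [hD, funext (lp_neg_pow hκm hvs j)]
    exact BM_fourierInv ((integrable_th_mul j hv).const_mul _)
  set G : ℤ → V → ℝ≥0∞ := fun j => cv ((2 : ℝ) ^ j) (fun y => ‖lp j κm D y‖ₑ) with hG
  have hGm : ∀ j, Measurable (G j) := fun j => measurable_cv (by positivity) (hBM j).1.enorm
  set h' : V → ℝ≥0∞ := fun x => ENNReal.ofReal A₁ * h x with hh'
  have hh'c : Continuous h' := (ENNReal.continuous_const_mul ENNReal.ofReal_ne_top).comp hh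
  set H := maxf h' with hH
  have hHm : Measurable H := measurable_maxf _
  set U : ℤ → V → ℝ≥0∞ := fun k z => ∑' j, ENNReal.ofReal (cf s (k - j)) * G j z with hU
  have hUm : ∀ k, Measurable (U k) := fun k =>
    Measurable.ennreal_tsum fun j => (hGm j).const_mul _
  have hpc := hpiece g h' H G (BM_fourierInv hu) hh'c.measurable (le_maxf_of_continuous hh'c) hHm
    (fun _ => le_rfl) hGm fun x z => by
      refine (hgf x z).trans ?_
      calc _ ≤ (h z + h x) * _ := mul_le_mul_right (hdiff v hv hvs x z) _
        _ = _ := by rw [hh']; dsimp only; ring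
  -- Young's inequality over the scales, then the two square function bounds
  have hUD : lor volume p₂ q₂ (fun x => sq2 fun k => U k x) ≤
      T * Cp2 * Cq * lor volume p₂ q₂ fun x => ‖D x‖ₑ := by
    calc _ ≤ lor volume p₂ q₂ (fun x => T * sq2 fun k => G k x) :=
          lor_mono hq20 fun x => sq2_conv_le _ _
      _ ≤ T * lor volume p₂ q₂ (fun x => sq2 fun k => G k x) := lor_const_mul_le hq20 _ _ hT
      _ ≤ T * (Cp2 * lor volume p₂ q₂ (fun x => sq2 fun k => ‖lp k κm D x‖ₑ)) :=
          mul_le_mul_right (hphi2 (fun j y => ‖lp j κm D y‖ₑ) fun k => (hBM k).1.enorm) _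
      _ ≤ T * (Cp2 * (Cq * lor volume p₂ q₂ fun x => ‖D x‖ₑ)) := by
          gcongr; exact hsq D (BM_fourierInv hvs)
      _ = _ := by ring
  have hHh : lor volume p₁ q₁ H ≤ K * ENNReal.ofReal A₁ * lor volume p₁ q₁ h := by
    rw [mul_assoc]
    exact (hmax h' hh'c.measurable).trans
      (mul_le_mul_right (lor_const_mul_le hq10 _ _ ENNReal.ofReal_ne_top) _)
  have hHold : ∀ W : V → ℝ≥0∞, lor volume p q (fun x => H x * W x) ≤
      c * (lor volume p₁ q₁ H * lor volume p₂ q₂ W) := fun W =>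
    lor_mul_le hq0 hq10 hq20 hpe hqe H W
  set Y := lor volume p₂ q₂ (fun x => sq2 fun k => U k x)
  set X := lor volume p₁ q₁ H
  have b1 : lor volume p q (fun x => sq2 fun k => cv ((2 : ℝ) ^ k) (fun z => H z * U k z) x) ≤
      Cp * c * (X * Y) := by
    refine (hphi (fun k z => H z * U k z) fun k => hHm.mul (hUm k)).trans ?_
    rw [mul_assoc]
    refine mul_le_mul_right (le_trans (le_of_eq ?_) (hHold _)) _
    simp only [sq2_const_mul]
  have b2 : lor volume p q (fun x => H x * sq2 fun k => cv ((2 : ℝ) ^ k) (U k) x) ≤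
      c * Cp2 * (X * Y) := by
    refine (hHold _).trans ?_
    calc _ ≤ c * (X * (Cp2 * Y)) := by gcongr; exact hphi2 U hUm
      _ = _ := by ring
  have b3 : lor volume p q (fun x => 2 * cPhi V * (H x * sq2 fun k => U k x)) ≤
      2 * cPhi V * c * (X * Y) := by
    refine (lor_const_mul_le hq0 _ _ ?_).trans ?_
    · have := cPhi_ne_top (V := V)
      finiteness
    · rw [mul_assoc _ c]
      exact mul_le_mul_right (hHold _) _
  have hsum : lor volume p q (fun x => sq2 fun k =>
      ‖(((2 : ℝ) ^ ((k : ℝ) * s) : ℝ) : ℂ) * lp k ψ g x‖ₑ) ≤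
      ENNReal.ofReal A₂ * (c * (c * (Cp * c + c * Cp2) + 2 * cPhi V * c)) * (X * Y) := by
    calc _ ≤ lor volume p q (fun x => ENNReal.ofReal A₂ *
          ((sq2 fun k => cv ((2 : ℝ) ^ k) (fun z => H z * U k z) x) +
          (H x * sq2 fun k => cv ((2 : ℝ) ^ k) (U k) x) +
          2 * cPhi V * (H x * sq2 fun k => U k x))) := by
          refine lor_mono hq0 fun x => ?_
          refine (sq2_mono fun k => ?_).trans (b := sq2 fun k => ENNReal.ofReal A₂ *
            (cv ((2 : ℝ) ^ k) (fun z => H z * U k z) x + H x * cv ((2 : ℝ) ^ k) (U k) x +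
              2 * cPhi V * (H x * U k x))) ?_
          · rw [enorm_mul, ← ofReal_norm, Complex.norm_real, Real.norm_of_nonneg (by positivity)]
            exact hpc k x
          · rw [sq2_const_mul]
            refine mul_le_mul_right ?_ _
            refine (sq2_add_le _ _).trans (add_le_add ((sq2_add_le _ _).trans_eq ?_) ?_)
            · rw [sq2_const_mul]
            · rw [sq2_const_mul, sq2_const_mul]
      _ ≤ ENNReal.ofReal A₂ * (c * (c * (Cp * c * (X * Y) + c * Cp2 * (X * Y)) +
          2 * cPhi V * c * (X * Y))) := by
          refine (lor_const_mul_le hq0 _ _ ENNReal.ofReal_ne_top).trans (mul_le_mul_right ?_ _)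
          refine (lor_add3_le hq _ _ _).trans ?_
          gcongr
      _ = _ := by ring
  -- synthesis of the pieces, passing to the limit by Fatou
  calc _ ≤ Cs * lor volume p q (fun x => sq2 fun k =>
      ‖(((2 : ℝ) ^ ((k : ℝ) * s) : ℝ) : ℂ) * lp k ψ g x‖ₑ) := by
        refine lor_fatou hq0 (fun x => ?_) fun N =>
          hsyn (rg N) (fun k x => (((2 : ℝ) ^ ((k : ℝ) * s) : ℝ) : ℂ) * lp k ψ g x)
            (BM_scaled_piece hψ hu)
        exact ((tendsto_synth hψ hκs hu hus x).enorm.liminf_eq).ge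
    _ ≤ Cs * (ENNReal.ofReal A₂ * (c * (c * (Cp * c + c * Cp2) + 2 * cPhi V * c)) *
        ((K * ENNReal.ofReal A₁ * lor volume p₁ q₁ h) *
          (T * Cp2 * Cq * lor volume p₂ q₂ fun x => ‖D x‖ₑ))) := by
        gcongr
        exact hsum.trans (by gcongr)
    _ = _ := by ring

end
end LCR

namespace LCR
set_option linter.unusedSectionVars false
open Filter Topology Module Metric
open scoped SchwartzMap

/-! ### The endpoint cases `s = 1` and `s = 0` -/

section
variable {V : Type} [NormedAddCommGroup V] [InnerProductSpace ℝ V] [FiniteDimensional ℝ V]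
  [MeasurableSpace V] [BorelSpace V]

/-- The directional derivative of `𝓕⁻ v` along `e`, up to the factor `2πi`. -/
noncomputable def dv (e : V) (v : V → ℂ) : V → ℂ := 𝓕⁻ fun ξ => ((inner ℝ ξ e : ℝ) : ℂ) * v ξ

lemma contDiffAt_riesz (e ξ : V) (hξ : ξ ≠ 0) :
    ContDiffAt ℝ ((⊤ : ℕ∞) : WithTop ℕ∞) (fun ξ : V => ((inner ℝ ξ e * ‖ξ‖⁻¹ : ℝ) : ℂ)) ξ :=
  Complex.ofRealCLM.contDiff.contDiffAt.comp ξ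
    ((contDiffAt_id.inner ℝ contDiffAt_const).mul
      ((contDiffAt_norm ℝ hξ).inv (norm_ne_zero_iff.2 hξ)))

lemma integrable_inner_mul {v : V → ℂ} (e : V) (hv : AEStronglyMeasurable v)
    (hv1 : Integrable fun ξ => ((‖ξ‖ ^ (1 : ℝ) : ℝ) : ℂ) * v ξ) :
    Integrable fun ξ => ((inner ℝ ξ e : ℝ) : ℂ) * v ξ := by
  refine (hv1.norm.const_mul ‖e‖).mono' ?_ (ae_of_all _ fun ξ => ?_)
  · exact (by fun_prop : Continuous fun ξ : V => ((inner ℝ ξ e : ℝ) : ℂ)).aestronglyMeasurable.mul hv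
  · rw [norm_mul, norm_mul, Complex.norm_real, Complex.norm_real, Real.rpow_one, norm_norm,
      ← mul_assoc, mul_comm ‖e‖]
    exact mul_le_mul_of_nonneg_right (norm_inner_le_norm _ _) (norm_nonneg _)

/-- The symbol of the Riesz transform is homogeneous of degree `0`. -/
lemma riesz_scale (k : ℤ) (e ξ : V) :
    inner ℝ (((2 : ℝ) ^ k)⁻¹ • ξ) e * ‖((2 : ℝ) ^ k)⁻¹ • ξ‖⁻¹ = inner ℝ ξ e * ‖ξ‖⁻¹ := by
  have hk : (0 : ℝ) < 2 ^ k := by positivity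
  rw [inner_smul_left, norm_smul, Real.norm_of_nonneg (by positivity)]
  simp only [conj_trivial]
  field_simp

section
variable {ρ : 𝓢(V, ℂ)} {e : V} {v : V → ℂ}

/-- The frequency piece of the Riesz transform of `(-Δ)^{1/2} f` is the frequency piece of the
derivative of `f` along `e`. -/
lemma lp_riesz_grad (hρ : ∀ ξ, 𝓕 (ρ : V → ℂ) ξ = ((inner ℝ ξ e * ‖ξ‖⁻¹ : ℝ) : ℂ) * th ξ)
    (hv1 : Integrable fun ξ => ((‖ξ‖ ^ (1 : ℝ) : ℝ) : ℂ) * v ξ) (k : ℤ) (x : V) :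
    lp k ρ (𝓕⁻ fun ξ => ((‖ξ‖ ^ (1 : ℝ) : ℝ) : ℂ) * v ξ) x =
      𝓕⁻ (fun ξ => th (((2 : ℝ) ^ k)⁻¹ • ξ) * (((inner ℝ ξ e : ℝ) : ℂ) * v ξ)) x := by
  rw [lp_fourierInv k ρ hv1]
  refine congrFun (congrArg (fun f : V → ℂ => 𝓕⁻ f) (funext fun ξ => ?_)) x
  rw [hρ, riesz_scale]
  by_cases hξ : ξ = 0
  · simp [hξ]
  · have : ((inner ℝ ξ e * ‖ξ‖⁻¹ : ℝ) : ℂ) * ((‖ξ‖ ^ (1 : ℝ) : ℝ) : ℂ) = ((inner ℝ ξ e : ℝ) : ℂ) := by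
      rw [← Complex.ofReal_mul, Real.rpow_one, mul_assoc, inv_mul_cancel₀ (norm_ne_zero_iff.2 hξ),
        mul_one]
    linear_combination (th (((2 : ℝ) ^ k)⁻¹ • ξ) * v ξ) * this

/-- The frequency piece of the Riesz transform applied to the derivative along `e` itself;
summing these symbols over an orthonormal basis recovers `|ξ|`. -/
lemma lp_riesz_dv (hρ : ∀ ξ, 𝓕 (ρ : V → ℂ) ξ = ((inner ℝ ξ e * ‖ξ‖⁻¹ : ℝ) : ℂ) * th ξ)
    (hv : AEStronglyMeasurable v)
    (hv1 : Integrable fun ξ => ((‖ξ‖ ^ (1 : ℝ) : ℝ) : ℂ) * v ξ) (k : ℤ) (x : V) :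
    lp k ρ (dv e v) x =
      𝓕⁻ (fun ξ => ((inner ℝ ξ e * ‖ξ‖⁻¹ * inner ℝ ξ e : ℝ) : ℂ) *
        (th (((2 : ℝ) ^ k)⁻¹ • ξ) * v ξ)) x := by
  rw [dv, lp_fourierInv k ρ (integrable_inner_mul e hv hv1)]
  refine congrFun (congrArg (fun f : V → ℂ => 𝓕⁻ f) (funext fun ξ => ?_)) x
  rw [hρ, riesz_scale]
  push_cast; ring

/-- Riesz transforms map `(-Δ)^{1/2} f` to derivatives of `f`. -/
lemma dv_le {p q : ℝ} (hp : 1 < p) (hq : 1 ≤ q) [Nontrivial V] (e : V) :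
    ∃ C : ℝ≥0∞, C ≠ ∞ ∧ ∀ v : V → ℂ, Integrable v →
      (Integrable fun ξ => ((‖ξ‖ ^ (1 : ℝ) : ℝ) : ℂ) * v ξ) →
      lor volume p q (fun x => ‖dv e v x‖ₑ) ≤
        C * lor volume p q (fun x => ‖𝓕⁻ (fun ξ => ((‖ξ‖ ^ (1 : ℝ) : ℝ) : ℂ) * v ξ) x‖ₑ) := by
  obtain ⟨ρ, hρ, hρ0⟩ := exists_symbol_th (contDiffAt_riesz e)
  obtain ⟨C, hC, h⟩ := lp_scalar hp hq ρ hρ0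
  refine ⟨C, hC, fun v hv hv1 => ?_⟩
  have hi := integrable_inner_mul e hv.aestronglyMeasurable hv1
  refine lor_fatou (by linarith) (fun x => ?_) fun N => h (rg N) _ (BM_fourierInv hv1)
  refine (((tendsto_lp hi x).congr fun N => ?_).enorm.liminf_eq).ge
  simp only [lp_riesz_grad hρ hv1]
  rw [fourierInv_sum fun k => integrable_th_mul k hi]
  simp only [Finset.sum_mul]

lemma lor_sum_le {α ι : Type*} [MeasurableSpace α] {μ : Measure α} {p q : ℝ} (hq : 1 ≤ q)
    (S : Finset ι) : ∃ C : ℝ≥0∞, C ≠ ∞ ∧ ∀ (f : ι → α → ℝ≥0∞) (M : ℝ≥0∞),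
      (∀ l, lor μ p q (f l) ≤ M) → lor μ p q (fun x => ∑ l ∈ S, f l x) ≤ C * M := by
  classical
  induction S using Finset.induction_on with
  | empty =>
    refine ⟨0, ENNReal.zero_ne_top, fun f M h => ?_⟩
    simp only [Finset.sum_empty]
    have := lor_const_mul_le (μ := μ) (p := p) (by linarith : 0 < q) 0 (fun _ => 0)
      ENNReal.zero_ne_top
    simpa using this
  | insert a S ha ih =>
    obtain ⟨C, hC, h⟩ := ih
    refine ⟨ENNReal.ofReal ((1 / 2) ^ (-(1 / p))) * (1 + C), by finiteness, fun f M hM => ?_⟩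
    simp only [Finset.sum_insert ha]
    refine (lor_add_le hq (f a) _).trans ?_
    rw [mul_assoc, add_mul, one_mul]
    gcongr
    · exact hM a
    · exact h f M hM

/-- `(-Δ)^{1/2} g` is controlled by the gradient of `g`. -/
lemma flap_one_le {p q : ℝ} (hp : 1 < p) (hq : 1 ≤ q) [Nontrivial V] :
    ∃ C : ℝ≥0∞, C ≠ ∞ ∧ ∀ (v : V → ℂ) (M : ℝ≥0∞), Integrable v →
      (Integrable fun ξ => ((‖ξ‖ ^ (1 : ℝ) : ℝ) : ℂ) * v ξ) →
      (∀ l, lor volume p q (fun x => ‖dv (stdOrthonormalBasis ℝ V l) v x‖ₑ) ≤ M) →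
      lor volume p q (fun x => ‖𝓕⁻ (fun ξ => ((‖ξ‖ ^ (1 : ℝ) : ℝ) : ℂ) * v ξ) x‖ₑ) ≤ C * M := by
  set b := stdOrthonormalBasis ℝ V
  choose ρ hρ hρ0 using fun l => exists_symbol_th (contDiffAt_riesz (b l))
  choose B hB hb using fun l => lp_scalar hp hq (ρ l) (hρ0 l)
  obtain ⟨C, hC, hsum⟩ := lor_sum_le (α := V) (μ := volume) (p := p) hq
    (Finset.univ : Finset (Fin (finrank ℝ V)))
  refine ⟨C * ∑ l, B l, ENNReal.mul_ne_top hC (ENNReal.sum_ne_top.2 fun l _ => hB l),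
    fun v M hv hv1 hM => ?_⟩
  have hi := fun l => integrable_inner_mul (b l) hv.aestronglyMeasurable hv1
  refine lor_fatou (by linarith) (u := fun N x => ∑ l, ‖∑ k ∈ rg N, lp k (ρ l) (dv (b l) v) x‖ₑ)
    (fun x => ?_) fun N => ?_
  · have hlim := (tendsto_lp hv1 x).enorm.liminf_eq
    rw [← hlim]
    refine liminf_le_liminf (Eventually.of_forall fun N => ?_)
    refine le_trans (le_of_eq ?_) (enorm_sum_le _ _)
    congr 1
    simp only [lp_riesz_dv (hρ _) hv.aestronglyMeasurable hv1]
    have hinteg : ∀ (l) (k : ℤ), Integrable fun ξ =>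
        ((inner ℝ ξ (b l) * ‖ξ‖⁻¹ * inner ℝ ξ (b l) : ℝ) : ℂ) *
        (th (((2 : ℝ) ^ k)⁻¹ • ξ) * v ξ) := fun l k => by
      have hk := integrable_th_mul k (hi l)
      refine ((hk.bdd_mul (c := 1)
        (f := fun ξ => ((inner ℝ ξ (b l) * ‖ξ‖⁻¹ : ℝ) : ℂ)) ?_ (ae_of_all _ fun ξ => ?_))).congr
        (ae_of_all _ fun ξ => ?_)
      · have : Measurable fun ξ : V => ((inner ℝ ξ (b l) * ‖ξ‖⁻¹ : ℝ) : ℂ) := by fun_prop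
        exact this.aestronglyMeasurable
      · rw [Complex.norm_real, norm_mul, norm_inv, norm_norm]
        by_cases h0 : ξ = 0
        · simp [h0]
        · rw [← div_eq_mul_inv, div_le_one (norm_pos_iff.2 h0)]
          simpa using norm_inner_le_norm (𝕜 := ℝ) ξ (b l)
      · dsimp only; push_cast; ring
    have e1 : ∀ l, ∑ k ∈ rg N, 𝓕⁻ (fun ξ =>
        ((inner ℝ ξ (b l) * ‖ξ‖⁻¹ * inner ℝ ξ (b l) : ℝ) : ℂ) *
        (th (((2 : ℝ) ^ k)⁻¹ • ξ) * v ξ)) x = 𝓕⁻ (fun ξ => ∑ k ∈ rg N,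
        ((inner ℝ ξ (b l) * ‖ξ‖⁻¹ * inner ℝ ξ (b l) : ℝ) : ℂ) *
        (th (((2 : ℝ) ^ k)⁻¹ • ξ) * v ξ)) x := fun l => fourierInv_sum (hinteg l) x
    rw [Finset.sum_comm]
    have e2 : ∀ k : ℤ, ∑ l, 𝓕⁻ (fun ξ =>
        ((inner ℝ ξ (b l) * ‖ξ‖⁻¹ * inner ℝ ξ (b l) : ℝ) : ℂ) *
        (th (((2 : ℝ) ^ k)⁻¹ • ξ) * v ξ)) x =
        𝓕⁻ (fun ξ => th (((2 : ℝ) ^ k)⁻¹ • ξ) * (((‖ξ‖ ^ (1 : ℝ) : ℝ) : ℂ) * v ξ)) x := fun k => by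
      simp only [Real.fourierInv_eq]
      rw [← integral_finsetSum]
      · refine integral_congr_ae (ae_of_all _ fun ξ => ?_)
        dsimp only
        rw [← Finset.smul_sum, ← Finset.sum_mul, ← Complex.ofReal_sum]
        have : ∑ l, inner ℝ ξ (b l) * ‖ξ‖⁻¹ * inner ℝ ξ (b l) = ‖ξ‖ ^ (1 : ℝ) := by
          have h1 := b.sum_inner_mul_inner ξ ξ
          rw [real_inner_self_eq_norm_sq] at h1
          have : ∀ l, inner ℝ ξ (b l) * ‖ξ‖⁻¹ * inner ℝ ξ (b l) =
              ‖ξ‖⁻¹ * (inner ℝ ξ (b l) * inner ℝ (b l) ξ) := fun l => by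
            rw [real_inner_comm ξ (b l)]; ring
          simp only [this]
          rw [← Finset.mul_sum, h1, Real.rpow_one]
          by_cases h0 : ξ = 0
          · simp [h0]
          · have := norm_ne_zero_iff.2 h0
            field_simp
        rw [this]
        congr 1; ring
      · intro l _
        have := (Real.fourierIntegral_convergent_iff (μ := volume) (-x)).2 (hinteg l k)
        simpa [real_inner_comm] using this
    simp only [e2]
    rw [fourierInv_sum fun k => integrable_th_mul k hv1]
    simp only [Finset.sum_mul]
  · rw [mul_assoc]
    refine hsum (fun l x => ‖∑ k ∈ rg N, lp k (ρ l) (dv (b l) v) x‖ₑ) _ fun l => ?_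
    refine (hb l (rg N) _ (BM_fourierInv (hi l))).trans ?_
    exact mul_le_mul' (Finset.single_le_sum (f := B) (fun _ _ => bot_le) (Finset.mem_univ l)) (hM l)

/-- The one-sided directional derivative of `𝓕⁻ v` along `e` is `2πi` times `dv e v`. -/
lemma hasLineDeriv_fourierInv (hv : Integrable v)
    (hv1 : Integrable fun ξ => ((‖ξ‖ ^ (1 : ℝ) : ℝ) : ℂ) * v ξ) (x e : V) :
    Tendsto (fun t : ℝ => t⁻¹ • (𝓕⁻ v (x + t • e) - 𝓕⁻ v x)) (𝓝[>] 0)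
      (𝓝 (2 * π * Complex.I * dv e v x)) := by
  have h1 : Integrable fun ξ => ‖ξ‖ * ‖v ξ‖ := by
    refine hv1.norm.congr (ae_of_all _ fun ξ => ?_)
    simp
  have h2 := (Real.hasFDerivAt_fourier hv h1 (-x)).hasLineDerivAt (-e)
  have h3 : 𝓕 (VectorFourier.fourierSMulRight (innerSL ℝ) v) (-x) (-e) =
      2 * π * Complex.I * dv e v x := by
    have hi : Integrable (VectorFourier.fourierSMulRight (innerSL ℝ) v) :=
      (h1.const_mul (2 * π * ‖(innerSL ℝ : V →L[ℝ] V →L[ℝ] ℝ)‖)).mono'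
        (hv.aestronglyMeasurable.fourierSMulRight) (ae_of_all _ fun ξ =>
          (VectorFourier.norm_fourierSMulRight_le _ _ _).trans_eq (by ring))
    rw [Real.fourier_continuousLinearMap_apply hi, dv, Real.fourierInv_eq_fourier_neg,
      Real.fourier_eq, Real.fourier_eq, ← integral_const_mul]
    refine integral_congr_ae (ae_of_all _ fun ξ => ?_)
    simp only [VectorFourier.fourierSMulRight_apply, innerSL_apply_apply, inner_neg_right,
      Circle.smul_def, smul_eq_mul, Complex.real_smul]
    have : (innerSL ℝ ξ) (-e) = -inner ℝ ξ e := by rw [innerSL_apply_apply, inner_neg_right]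
    rw [this]
    push_cast; ring
  rw [h3] at h2
  have h4 := h2.tendsto_slope_zero_right
  refine h4.congr fun t => ?_
  rw [Real.fourierInv_eq_fourier_neg, Real.fourierInv_eq_fourier_neg, neg_add, smul_neg]

/-- The chain rule for `s = 1`. -/
theorem chain_one [Nontrivial V] {p p₁ p₂ q q₁ q₂ : ℝ}
    (hp : 1 < p) (hp2 : 1 < p₂) (hq : 1 ≤ q) (hq1 : 1 ≤ q₁) (hq2 : 1 ≤ q₂)
    (hpe : 1 / p = 1 / p₁ + 1 / p₂) (hqe : 1 / q = 1 / q₁ + 1 / q₂) :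
    ∃ C : ℝ≥0∞, C ≠ ∞ ∧ ∀ (h : V → ℝ≥0∞) (u v : V → ℂ), Continuous h → (∀ x, h x ≠ ∞) →
      Integrable u → Integrable v → (Integrable fun ξ => ((‖ξ‖ ^ (1 : ℝ) : ℝ) : ℂ) * u ξ) →
      (Integrable fun ξ => ((‖ξ‖ ^ (1 : ℝ) : ℝ) : ℂ) * v ξ) →
      (∀ x z, ‖𝓕⁻ u z - 𝓕⁻ u x‖ₑ ≤ (h z + h x) * ‖𝓕⁻ v z - 𝓕⁻ v x‖ₑ) →
      lor volume p q (fun x => ‖𝓕⁻ (fun ξ => ((‖ξ‖ ^ (1 : ℝ) : ℝ) : ℂ) * u ξ) x‖ₑ) ≤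
        C * (lor volume p₁ q₁ h *
          lor volume p₂ q₂ (fun x => ‖𝓕⁻ (fun ξ => ((‖ξ‖ ^ (1 : ℝ) : ℝ) : ℂ) * v ξ) x‖ₑ)) := by
  obtain ⟨A, hA, ha⟩ := flap_one_le (V := V) hp hq
  choose B hB hb using fun l => dv_le hp2 hq2 (stdOrthonormalBasis ℝ V l)
  set c := ENNReal.ofReal ((1 / 2) ^ (-(1 / p))) with hc
  have hBs : ∑ l, B l ≠ ∞ := ENNReal.sum_ne_top.2 fun l _ => hB l
  refine ⟨A * (2 * c * ∑ l, B l), by finiteness, fun h u v hh hh' hu hv hu1 hv1 hgf => ?_⟩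
  rw [mul_assoc]
  refine ha u _ hu hu1 fun l => ?_
  set e := stdOrthonormalBasis ℝ V l
  -- the difference bound passes to the limit of the difference quotients along `e`
  have hpt : ∀ x, ‖dv e u x‖ₑ ≤ 2 * (h x * ‖dv e v x‖ₑ) := fun x => by
    have t1 := (hasLineDeriv_fourierInv hu hu1 x e).enorm
    have t2 := (hasLineDeriv_fourierInv hv hv1 x e).enorm
    have t3 : Tendsto (fun t : ℝ => h (x + t • e) + h x) (𝓝[>] 0) (𝓝 (h x + h x)) := by
      have : Continuous fun t : ℝ => h (x + t • e) + h x := by fun_prop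
      simpa using (this.tendsto 0).mono_left nhdsWithin_le_nhds
    have t4 := ENNReal.Tendsto.mul t3 (Or.inr enorm_ne_top) t2
      (Or.inr (ENNReal.add_ne_top.2 ⟨hh' x, hh' x⟩))
    have := le_of_tendsto_of_tendsto' t1 t4 fun t => by
      rw [enorm_smul, enorm_smul, mul_left_comm]
      exact mul_le_mul_right (hgf _ _) _
    have h0 : ‖(2 * π * Complex.I : ℂ)‖ₑ ≠ 0 := by simp [Real.pi_ne_zero]
    rw [enorm_mul _ (dv e u x), enorm_mul _ (dv e v x), mul_left_comm] at this
    have := (ENNReal.mul_le_mul_iff_right h0 enorm_ne_top).1 this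
    rwa [← two_mul, mul_assoc] at this
  calc _ ≤ 2 * lor volume p q (fun x => h x * ‖dv e v x‖ₑ) :=
        (lor_mono (by linarith) hpt).trans (lor_const_mul_le (by linarith) _ _ (by simp))
    _ ≤ 2 * (c * (lor volume p₁ q₁ h * lor volume p₂ q₂ fun x => ‖dv e v x‖ₑ)) :=
        mul_le_mul_right (lor_mul_le (by linarith) (by linarith) (by linarith) hpe hqe _ _) _
    _ ≤ 2 * (c * (lor volume p₁ q₁ h * ((∑ l, B l) * lor volume p₂ q₂
          (fun x => ‖𝓕⁻ (fun ξ => ((‖ξ‖ ^ (1 : ℝ) : ℝ) : ℂ) * v ξ) x‖ₑ)))) := by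
        gcongr
        exact (hb l v hv hv1).trans (mul_le_mul_left
          (Finset.single_le_sum (f := B) (fun _ _ => bot_le) (Finset.mem_univ l)) _)
    _ = _ := by ring

/-- The chain rule for `s = 0`: the difference bound passes to the limit at infinity, where `f` and
`g` vanish. -/
theorem chain_zero [Nontrivial V] {p p₁ p₂ q q₁ q₂ : ℝ}
    (hq : 1 ≤ q) (hq1 : 1 ≤ q₁) (hq2 : 1 ≤ q₂)
    (hpe : 1 / p = 1 / p₁ + 1 / p₂) (hqe : 1 / q = 1 / q₁ + 1 / q₂) :
    ∃ C : ℝ≥0∞, C ≠ ∞ ∧ ∀ (h : V → ℝ≥0∞) (g f : V → ℂ) (a : ℝ≥0∞), a ≠ ∞ → (∀ x, h x ≠ ∞) →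
      Tendsto h (cocompact V) (𝓝 a) → Tendsto g (cocompact V) (𝓝 0) →
      Tendsto f (cocompact V) (𝓝 0) →
      (∀ x z, ‖g z - g x‖ₑ ≤ (h z + h x) * ‖f z - f x‖ₑ) →
      lor volume p q (fun x => ‖g x‖ₑ) ≤
        C * (lor volume p₁ q₁ h * lor volume p₂ q₂ (fun x => ‖f x‖ₑ)) := by
  set c := ENNReal.ofReal ((1 / 2) ^ (-(1 / p))) with hc
  set c₁ := ENNReal.ofReal ((1 / 2) ^ (-(1 / p₁))) with hc₁
  have : NoncompactSpace V := NormedSpace.noncompactSpace ℝ V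
  refine ⟨c * (2 * c₁), by finiteness, fun h g f a ha hh' hh hg hf hgf => ?_⟩
  -- let `x → ∞` in the difference bound
  have hpt : ∀ z, ‖g z‖ₑ ≤ (h z + a) * ‖f z‖ₑ := fun z => by
    have t1 := (hg.const_sub (g z)).enorm
    have t2 := (hf.const_sub (f z)).enorm
    rw [sub_zero] at t1 t2
    have t4 := ENNReal.Tendsto.mul (hh.const_add (h z)) (Or.inr enorm_ne_top) t2
      (Or.inr (ENNReal.add_ne_top.2 ⟨hh' z, ha⟩))
    exact le_of_tendsto_of_tendsto' t1 t4 fun x => hgf x z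
  -- the limit `a` of `h` at infinity is at most `h*(t)`, since the space has infinite measure
  have hrea : ∀ t : ℝ, 0 < t → rea volume (fun _ : V => a) (ENNReal.ofReal t) ≤
      rea volume h (ENNReal.ofReal t) := fun t ht => by
    have h1 : rea volume (fun _ : V => a) (ENNReal.ofReal t) ≤ a := rea_le_iff.2 (by simp)
    refine h1.trans (le_of_not_gt fun hlt => ?_)
    have h2 := rea_le_iff.1 (le_refl (rea volume h (ENNReal.ofReal t)))
    have h3 : {x | rea volume h (ENNReal.ofReal t) < h x} ∈ cocompact V :=
      hh.eventually (lt_mem_nhds hlt)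
    obtain ⟨s, hs, hst⟩ := mem_cocompact.1 h3
    have h4 : volume (sᶜ) ≤ ENNReal.ofReal t := (measure_mono hst).trans h2
    have h5 : volume (Set.univ : Set V) < ∞ := by
      rw [← Set.union_compl_self s]
      exact (measure_union_le _ _).trans_lt
        (ENNReal.add_lt_top.2 ⟨hs.measure_lt_top, h4.trans_lt ENNReal.ofReal_lt_top⟩)
    exact h5.ne (measure_univ_of_isAddLeftInvariant _)
  have hlor : lor volume p₁ q₁ (fun x => h x + a) ≤ 2 * c₁ * lor volume p₁ q₁ h := by
    refine (lor_add_le hq1 h fun _ => a).trans ?_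
    calc _ ≤ c₁ * (lor volume p₁ q₁ h + lor volume p₁ q₁ h) := by
          gcongr
          exact lor_le_of_rea_le (by linarith) hrea
      _ = _ := by ring
  calc _ ≤ _ := lor_mono (by linarith) hpt
    _ ≤ c * (lor volume p₁ q₁ (fun x => h x + a) * lor volume p₂ q₂ fun x => ‖f x‖ₑ) :=
        lor_mul_le (by linarith) (by linarith) (by linarith) hpe hqe _ _
    _ ≤ c * (2 * c₁ * lor volume p₁ q₁ h * lor volume p₂ q₂ fun x => ‖f x‖ₑ) := by gcongr
    _ = _ := by ring

end
end
end LCR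

namespace LCR
set_option linter.unusedSectionVars false
open Filter Topology Module Metric
open scoped SchwartzMap

/-! ### The composition `F ∘ f` -/

section
variable {V : Type} [NormedAddCommGroup V] [InnerProductSpace ℝ V] [FiniteDimensional ℝ V]
  [MeasurableSpace V] [BorelSpace V]

/-- The chain rule for all `s ∈ [0,1]`, for functions `f = 𝓕⁻ v` and `g = 𝓕⁻ u` related by a
difference bound. -/
theorem chain_abs [Nontrivial V] {s p p₁ p₂ q q₁ q₂ : ℝ} (hs : 0 ≤ s) (hs1 : s ≤ 1)
    (hp : 1 < p) (hp1 : 1 < p₁) (hp2 : 1 < p₂)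
    (hq : 1 ≤ q) (hq1 : 1 ≤ q₁) (hq2 : 1 ≤ q₂)
    (hpe : 1 / p = 1 / p₁ + 1 / p₂) (hqe : 1 / q = 1 / q₁ + 1 / q₂) :
    ∃ C : ℝ≥0∞, C ≠ ∞ ∧ ∀ (h : V → ℝ≥0∞) (u v : V → ℂ) (a : ℝ≥0∞), Continuous h → (∀ x, h x ≠ ∞) →
      a ≠ ∞ → Tendsto h (cocompact V) (𝓝 a) → Tendsto (𝓕⁻ u) (cocompact V) (𝓝 0) →
      Tendsto (𝓕⁻ v) (cocompact V) (𝓝 0) → Integrable u →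
      Integrable v → (Integrable fun ξ => ((‖ξ‖ ^ s : ℝ) : ℂ) * u ξ) →
      (Integrable fun ξ => ((‖ξ‖ ^ s : ℝ) : ℂ) * v ξ) →
      (∀ x z, ‖𝓕⁻ u z - 𝓕⁻ u x‖ₑ ≤ (h z + h x) * ‖𝓕⁻ v z - 𝓕⁻ v x‖ₑ) →
      lor volume p q (fun x => ‖𝓕⁻ (fun ξ => ((‖ξ‖ ^ s : ℝ) : ℂ) * u ξ) x‖ₑ) ≤
        C * (lor volume p₁ q₁ h *
          lor volume p₂ q₂ (fun x => ‖𝓕⁻ (fun ξ => ((‖ξ‖ ^ s : ℝ) : ℂ) * v ξ) x‖ₑ)) := by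
  rcases hs.eq_or_lt with rfl | hs0
  · obtain ⟨C, hC, hc⟩ := chain_zero (V := V) hq hq1 hq2 hpe hqe
    refine ⟨C, hC, fun h u v a _ hh ha hha hu0 hv0 _ _ _ _ hgf => ?_⟩
    simpa using hc h _ _ a ha hh hha hu0 hv0 hgf
  rcases hs1.eq_or_lt with rfl | hs1
  · obtain ⟨C, hC, hc⟩ := chain_one (V := V) hp hp2 hq hq1 hq2 hpe hqe
    exact ⟨C, hC, fun h u v _ hhc hh _ _ _ _ hu hv hus hvs hgf => hc h u v hhc hh hu hv hus hvs hgf⟩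
  · obtain ⟨C, hC, hc⟩ := chain_mid (V := V) hs0 hs1 hp hp1 hp2 hq hq1 hq2 hpe hqe
    exact ⟨C, hC, fun h u v _ hhc _ _ _ _ _ hu hv hus hvs hgf => hc h u v hhc hu hv hus hvs hgf⟩

/-- The mean value inequality on the segment from `b` to `a`, where the derivative is bounded by
hypothesis. -/
lemma F_diff {F : ℂ → ℂ} (hF : ContDiff ℝ 1 F) {C₀ : ℝ}
    (hF' : ∀ θ ∈ Set.Icc (0:ℝ) 1, ∀ z w : ℂ,
      ‖fderiv ℝ F (θ • z + (1 - θ) • w)‖ ≤ C₀ * (‖fderiv ℝ F z‖ + ‖fderiv ℝ F w‖)) (a b : ℂ) :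
    ‖F a - F b‖ ≤ C₀ * (‖fderiv ℝ F a‖ + ‖fderiv ℝ F b‖) * ‖a - b‖ := by
  refine (convex_segment (𝕜 := ℝ) a b).norm_image_sub_le_of_norm_fderiv_le
    (fun x _ => (hF.differentiable one_ne_zero) x) (fun x hx => ?_)
    (right_mem_segment ℝ a b) (left_mem_segment ℝ a b)
  obtain ⟨θ, η, h0, h1, h2, rfl⟩ := hx
  obtain rfl : η = 1 - θ := by linarith
  exact hF' θ ⟨h0, by linarith⟩ a b

/-- The chain rule for `F ∘ f` with the Lorentz quasinorms of extended nonnegative functions. -/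
theorem chain [Nontrivial V] {s p p₁ p₂ q q₁ q₂ : ℝ} (hs : 0 ≤ s) (hs1 : s ≤ 1)
    {F : ℂ → ℂ} (hF : ContDiff ℝ 1 F) (hF0 : F 0 = 0) {C₀ : ℝ}
    (hF' : ∀ θ ∈ Set.Icc (0:ℝ) 1, ∀ z w : ℂ,
      ‖fderiv ℝ F (θ • z + (1 - θ) • w)‖ ≤ C₀ * (‖fderiv ℝ F z‖ + ‖fderiv ℝ F w‖))
    (hp : 1 < p) (hp1 : 1 < p₁) (hp2 : 1 < p₂)
    (hq : 1 ≤ q) (hq1 : 1 ≤ q₁) (hq2 : 1 ≤ q₂)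
    (hpe : 1 / p = 1 / p₁ + 1 / p₂) (hqe : 1 / q = 1 / q₁ + 1 / q₂) :
    ∃ C : ℝ≥0∞, C ≠ ∞ ∧ ∀ f : 𝓢(V, ℂ),
      lor volume p q (fun x => ‖flap s (fun x => F (f x)) x‖ₑ) ≤
        C * (lor volume p₁ q₁ (fun x => ‖fderiv ℝ F (f x)‖ₑ) *
          lor volume p₂ q₂ (fun x => ‖flap s f x‖ₑ)) := by
  obtain ⟨C, hC, hc⟩ := chain_abs (V := V) hs hs1 hp hp1 hp2 hq hq1 hq2 hpe hqe
  refine ⟨C * ENNReal.ofReal C₀, by finiteness, fun f => ?_⟩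
  have hF'c : Continuous (fderiv ℝ F) := hF.continuous_fderiv one_ne_zero
  have hf0 : Tendsto f (cocompact V) (𝓝 0) := f.toZeroAtInfty.zero_at_infty'
  set g : V → ℂ := fun x => F (f x) with hg
  have hgc : Continuous g := hF.continuous.comp f.continuous
  have hg0 : Tendsto g (cocompact V) (𝓝 0) := by
    have := (hF.continuous.tendsto 0).comp hf0
    rwa [hF0] at this
  have hgi : Integrable g := by
    obtain ⟨M, hM⟩ : ∃ M, ∀ x, ‖f x‖ ≤ M := ⟨_, fun x => f.toBoundedContinuousFunction.norm_coe_le_norm x⟩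
    obtain ⟨B, hB⟩ := (isCompact_closedBall (0 : ℂ) M).exists_bound_of_continuousOn
      hF'c.continuousOn
    refine (f.integrable.norm.const_mul (|C₀| * (B + ‖fderiv ℝ F 0‖))).mono'
      hgc.aestronglyMeasurable (ae_of_all _ fun x => ?_)
    have := F_diff hF hF' (f x) 0
    rw [hF0, sub_zero, sub_zero] at this
    refine this.trans (mul_le_mul_of_nonneg_right ?_ (norm_nonneg _))
    exact mul_le_mul (le_abs_self _) (add_le_add_left (hB _ (by simpa using hM x)) _)
      (by positivity) (abs_nonneg _)
  -- without integrability the left-hand side is the quasinorm of the junk value `0`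
  by_cases hinteg : Integrable fun ξ => ((‖ξ‖ ^ s : ℝ) : ℂ) * 𝓕 g ξ
  swap
  · simp only [flap_eq_zero hinteg, enorm_zero]
    have := lor_const_mul_le (μ := (volume : Measure V)) (p := p) (by linarith : 0 < q) 0
      (fun _ => 0) ENNReal.zero_ne_top
    exact le_trans (by simpa using this) bot_le
  have hgu := integrable_of_flap hs hgi hinteg
  have eg : 𝓕⁻ (𝓕 g) = g := hgc.fourierInv_fourier_eq hgi hgu
  have ef := fourierInv_schwartz f
  set h : V → ℝ≥0∞ := fun x => ENNReal.ofReal C₀ * ‖fderiv ℝ F (f x)‖ₑ with hh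
  have hphi : Continuous fun z : ℂ => ENNReal.ofReal C₀ * ‖fderiv ℝ F z‖ₑ :=
    (ENNReal.continuous_const_mul ENNReal.ofReal_ne_top).comp hF'c.enorm
  have key := hc h (𝓕 g) (𝓕 (f : V → ℂ)) _ (hphi.comp f.continuous) (fun x => by finiteness)
    (by finiteness) ((hphi.tendsto 0).comp hf0) (by rwa [eg]) (by rwa [ef]) hgu (𝓕 f).integrable
    hinteg (integrable_schwartz_flap hs hs1 f) fun x z => by
      rw [eg, ef]
      have := ENNReal.ofReal_le_ofReal (F_diff hF hF' (f z) (f x))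
      rw [ofReal_norm, ENNReal.ofReal_mul' (norm_nonneg _), ofReal_norm,
        ENNReal.ofReal_mul' (by positivity), ENNReal.ofReal_add (norm_nonneg _) (norm_nonneg _),
        ofReal_norm, ofReal_norm, mul_add] at this
      exact this
  refine key.trans ?_
  calc _ ≤ C * (ENNReal.ofReal C₀ * lor volume p₁ q₁ (fun x => ‖fderiv ℝ F (f x)‖ₑ) *
        lor volume p₂ q₂ (fun x => ‖flap s f x‖ₑ)) := by
        gcongr
        · exact lor_const_mul_le (by linarith) _ _ ENNReal.ofReal_ne_top
        · exact le_rfl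
    _ = _ := by ring

end

/-! ### Comparison with the real-valued rearrangement -/

section
variable {n : ℕ} {f : EuclideanSpace ℝ (Fin n) → ℂ} {t : ℝ}

lemma set_lt_enorm {l : ℝ} (hl : 0 ≤ l) :
    {x | ENNReal.ofReal l < ‖f x‖ₑ} = {x | l < ‖f x‖} := by
  ext x
  simp only [Set.mem_ofPred_eq]
  rw [← ofReal_norm, ENNReal.ofReal_lt_ofReal_iff_of_nonneg hl]

/-- The real infimum never exceeds the extended one; when the latter is infinite there is
nothing to prove. -/
lemma rearr_le_rea : ENNReal.ofReal (rearr f t) ≤ rea volume (fun x => ‖f x‖ₑ) (ENNReal.ofReal t) := by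
  by_cases htop : rea volume (fun x => ‖f x‖ₑ) (ENNReal.ofReal t) = ∞
  · rw [htop]; exact le_top
  refine ENNReal.ofReal_le_of_le_toReal (le_of_forall_gt_imp_ge_of_dense fun l hl => ?_)
  have hl0 : 0 < l := ENNReal.toReal_nonneg.trans_lt hl
  refine csInf_le ⟨0, fun _ h => h.1.le⟩ ⟨hl0, ?_⟩
  rw [distFn, ← set_lt_enorm hl0.le]
  exact rea_le_iff.1 (ENNReal.le_ofReal_iff_toReal_le htop hl0.le |>.2 hl.le)

/-- Boundedness makes the set in the definition of `rearr` nonempty, so its infimum is genuine.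
-/
lemma rea_le_rearr {M : ℝ} (hM : ∀ x, ‖f x‖ ≤ M) :
    rea volume (fun x => ‖f x‖ₑ) (ENNReal.ofReal t) ≤ ENNReal.ofReal (rearr f t) := by
  have hle : ∀ l ∈ {l : ℝ | 0 < l ∧ distFn f l ≤ ENNReal.ofReal t},
      rea volume (fun x => ‖f x‖ₑ) (ENNReal.ofReal t) ≤ ENNReal.ofReal l := fun l hl =>
    rea_le_iff.2 (by rw [set_lt_enorm hl.1.le]; exact hl.2)
  have hne : {l : ℝ | 0 < l ∧ distFn f l ≤ ENNReal.ofReal t}.Nonempty := by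
    refine ⟨|M| + 1, by positivity, ?_⟩
    have : {x | |M| + 1 < ‖f x‖} = ∅ := by
      ext x
      simp only [Set.mem_ofPred_eq, Set.mem_empty_iff_false, iff_false, not_lt]
      linarith [hM x, le_abs_self M]
    rw [distFn, this, measure_empty]
    exact bot_le
  obtain ⟨l₀, h₀⟩ := hne
  have htop := ne_top_of_le_ne_top ENNReal.ofReal_ne_top (hle l₀ h₀)
  rw [rearr, ENNReal.le_ofReal_iff_toReal_le htop (Real.sInf_nonneg fun _ h => h.1.le)]
  exact le_csInf ⟨l₀, h₀⟩ fun l hl => (ENNReal.le_ofReal_iff_toReal_le htop hl.1.le).1 (hle l hl)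

lemma lorentz_eq {p q : ℝ} (hq : 0 < q) :
    lorentz p (ENNReal.ofReal q) f = (∫⁻ t in Set.Ioi (0 : ℝ),
      (ENNReal.ofReal (t ^ (1 / p - 1 / q)) * ENNReal.ofReal (rearr f t)) ^ q) ^ (1 / q) := by
  rw [lorentz, if_neg ENNReal.ofReal_ne_top, ENNReal.toReal_ofReal hq.le]
  congr 1
  refine setLIntegral_congr_fun measurableSet_Ioi fun t ht => ?_
  have ht : 0 < t := ht
  have h1 : ENNReal.ofReal (t ^ (-(1 / q))) ^ q = (ENNReal.ofReal t)⁻¹ := by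
    rw [ENNReal.ofReal_rpow_of_nonneg (by positivity) hq.le, ← Real.rpow_mul ht.le,
      ← ENNReal.ofReal_inv_of_pos ht, neg_mul, one_div_mul_cancel hq.ne', Real.rpow_neg_one]
  rw [ENNReal.ofReal_mul (by positivity), sub_eq_add_neg, Real.rpow_add ht,
    ENNReal.ofReal_mul (by positivity), ENNReal.mul_rpow_of_nonneg _ _ hq.le,
    ENNReal.mul_rpow_of_nonneg _ _ hq.le, ENNReal.mul_rpow_of_nonneg _ _ hq.le, h1, div_eq_mul_inv]
  ring

lemma lorentz_le_lor {p q : ℝ} (hq : 0 < q) :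
    lorentz p (ENNReal.ofReal q) f ≤ lor volume p q (fun x => ‖f x‖ₑ) := by
  rw [lorentz_eq hq, lor]
  gcongr
  exact rearr_le_rea

/-- For bounded `f` the infimum defining `rearr` runs over a nonempty set, so no junk value
intervenes. -/
lemma lor_le_lorentz {p q : ℝ} (hq : 0 < q) {M : ℝ} (hM : ∀ x, ‖f x‖ ≤ M) :
    lor volume p q (fun x => ‖f x‖ₑ) ≤ lorentz p (ENNReal.ofReal q) f := by
  rw [lorentz_eq hq, lor]
  gcongr
  exact rea_le_rearr hM

end
end LCR

/-- Fractional chain rule in Lorentz spaces. -/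
theorem lorentz_chain_rule (n : ℕ) (hn : 1 ≤ n) (s : ℝ) (hs : 0 ≤ s) (hs1 : s ≤ 1)
    (F : ℂ → ℂ) (hF : ContDiff ℝ 1 F) (hF0 : F 0 = 0) (C₀ : ℝ)
    (hF' : ∀ θ ∈ Set.Icc (0:ℝ) 1, ∀ z w : ℂ,
      ‖fderiv ℝ F (θ • z + (1 - θ) • w)‖ ≤ C₀ * (‖fderiv ℝ F z‖ + ‖fderiv ℝ F w‖))
    (p p₁ p₂ q q₁ q₂ : ℝ)
    (hp : 1 < p) (hp1 : 1 < p₁) (hp2 : 1 < p₂)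
    (hq : 1 ≤ q) (hq1 : 1 ≤ q₁) (hq2 : 1 ≤ q₂)
    (hpe : 1 / p = 1 / p₁ + 1 / p₂) (hqe : 1 / q = 1 / q₁ + 1 / q₂) :
    ∃ C > 0, ∀ f : SchwartzMap (EuclideanSpace ℝ (Fin n)) ℂ,
      lorentz p (ENNReal.ofReal q) (fracLap s (fun x => F (f x))) ≤
        ENNReal.ofReal C *
          (lorentz p₁ (ENNReal.ofReal q₁) (fun x => (‖fderiv ℝ F (f x)‖ : ℂ)) *
            lorentz p₂ (ENNReal.ofReal q₂) (fracLap s ⇑f)) := by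
  have : Nontrivial (EuclideanSpace ℝ (Fin n)) :=
    Module.nontrivial_of_finrank_pos (R := ℝ) (by rw [finrank_euclideanSpace_fin]; exact hn)
  obtain ⟨C, hC, hc⟩ := LCR.chain (V := EuclideanSpace ℝ (Fin n)) hs hs1 hF hF0 hF' hp hp1 hp2
    hq hq1 hq2 hpe hqe
  refine ⟨C.toReal + 1, by positivity, fun f => ?_⟩
  have hCle : C ≤ ENNReal.ofReal (C.toReal + 1) :=
    (ENNReal.le_ofReal_iff_toReal_le hC (by positivity)).2 (by linarith)
  obtain ⟨M, hM⟩ : ∃ M, ∀ x, ‖f x‖ ≤ M :=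
    ⟨_, fun x => f.toBoundedContinuousFunction.norm_coe_le_norm x⟩
  obtain ⟨B, hB⟩ := (isCompact_closedBall (0 : ℂ) M).exists_bound_of_continuousOn
    (hF.continuous_fderiv one_ne_zero).continuousOn
  refine (LCR.lorentz_le_lor (by linarith)).trans ((hc f).trans ?_)
  refine mul_le_mul' hCle (mul_le_mul' ?_ ?_)
  · refine le_trans (le_of_eq ?_) (LCR.lor_le_lorentz (by linarith) (M := B) fun x => ?_)
    · congr 1
      funext x
      rw [← ofReal_norm, ← ofReal_norm, Complex.norm_real, norm_norm]
    · rw [Complex.norm_real, norm_norm]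
      exact hB _ (by simpa using hM x)
  · exact LCR.lor_le_lorentz (by linarith) (M := _) fun x => LCR.fourierInv_bound x
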